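/- Assume the strong Hardy–Littlewood conjecture (Conjecture B2): for n = k+1, k+2, π_n(x, {0}∪D_{n-1}) = S({0}∪D_{n-1}) x/(log x)^n (1 + E_n) uniformly for D_{n-1} ⊂ [2, (log x)^{k+1}] with S ≠ 0, where E_{k+1} = o(1/(log log x)²) and E_{k+2} = o(1). Then for all sufficiently large x, the greatest common divisor of the elements of every k-tuple jumping champion for x is squarefree. -/

import Mathlib

open Finset

/-- Number of residue classes mod `p` occupied by the elements of `D`. -/
def nu (D : Finset ℕ) (p : ℕ) : ℕ := (D.image (· % p)).card

/-- The Hardy–Littlewood singular series of a finite set `D`. -/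
noncomputable def singSeries (D : Finset ℕ) : ℝ :=
  ∏' p : Nat.Primes, ((1 - 1 / ((p : ℕ) : ℝ)) ^ D.card)⁻¹ * (1 - (nu D (p : ℕ) : ℝ) / ((p : ℕ) : ℝ))

/-- `primePi x D` counts positive integers `m ≤ x` with `m + d` prime for all `d ∈ D`. -/
noncomputable def primePi (x : ℝ) (D : Finset ℕ) : ℕ :=
  {m : ℕ | 0 < m ∧ (m : ℝ) ≤ x ∧ ∀ d ∈ D, Nat.Prime (m + d)}.ncard

/-- `Ncham x D` counts `n` such that `p_{n+k} ≤ x` and the gaps `p_{n+i} - p_n` for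
`i = 1, …, k` are exactly the elements of `D` (with `k = D.card`). -/
noncomputable def Ncham (x : ℝ) (D : Finset ℕ) : ℕ :=
  {n : ℕ | ((Nat.nth Nat.Prime (n + D.card) : ℝ) ≤ x) ∧
    (Finset.range D.card).image
      (fun i => Nat.nth Nat.Prime (n + i + 1) - Nat.nth Nat.Prime n) = D}.ncard

/-- `D` is a `k`-tuple jumping champion for `x`. -/
def IsChampion (k : ℕ) (x : ℝ) (D : Finset ℕ) : Prop :=
  D.card = k ∧ (∀ d ∈ D, 0 < d) ∧
    ∀ D' : Finset ℕ, D'.card = k → (∀ d ∈ D', 0 < d) → Ncham x D' ≤ Ncham x D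

/-- Number of prime factors counted with multiplicity. -/
def bigOmega (n : ℕ) : ℕ := n.primeFactorsList.length

/-- The `n`-th primorial `2·3·5⋯p_n`. -/
noncomputable def primorial' (n : ℕ) : ℕ := ∏ i ∈ Finset.range n, Nat.nth Nat.Prime i

/-- The largest primorial not exceeding `y` (equal to `1` if `y < 1`). -/
noncomputable def largestPrimorial (y : ℝ) : ℕ :=
  primorial' (sSup {n : ℕ | (primorial' n : ℝ) ≤ y})


/-- local factor of the singular series -/
noncomputable def fac (E : Finset ℕ) (q : ℕ) : ℝ :=
  ((1 - 1 / (q : ℝ)) ^ E.card)⁻¹ * (1 - (nu E q : ℝ) / (q : ℝ))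

/-- primes below `z` -/
def PR (z : ℕ) : Finset ℕ := (Finset.range z).filter Nat.Prime

/-- partial product -/
noncomputable def pp (E : Finset ℕ) (z : ℕ) : ℝ := ∏ q ∈ PR z, fac E q

lemma mem_PR {z q : ℕ} : q ∈ PR z ↔ q < z ∧ q.Prime := by simp [PR]

lemma PR_mono {a b : ℕ} (h : a ≤ b) : PR a ⊆ PR b := by
  intro q hq; rw [mem_PR] at *; exact ⟨by omega, hq.2⟩

lemma nu_le_card (E : Finset ℕ) (q : ℕ) : nu E q ≤ E.card := card_image_le

lemma nu_le (E : Finset ℕ) {q : ℕ} (hq : 0 < q) : nu E q ≤ q := by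
  unfold nu
  calc _ ≤ (range q).card := card_le_card (by
        intro a ha; rw [mem_image] at ha; obtain ⟨b, _, rfl⟩ := ha
        exact mem_range.2 (Nat.mod_lt _ hq))
    _ = q := card_range q

lemma nu_pos {E : Finset ℕ} (h : E.Nonempty) (q : ℕ) : 1 ≤ nu E q :=
  Finset.card_pos.2 (h.image _)

lemma nu_insert_of_mem {E : Finset ℕ} {j q : ℕ} (h : j % q ∈ E.image (· % q)) :
    nu (insert j E) q = nu E q := by
  unfold nu; rw [image_insert, insert_eq_of_mem h]

lemma nu_insert_of_not_mem {E : Finset ℕ} {j q : ℕ} (h : j % q ∉ E.image (· % q)) :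
    nu (insert j E) q = nu E q + 1 := by
  unfold nu; rw [image_insert, card_insert_of_notMem h]

lemma one_sub_inv_pos {q : ℕ} (hq : 2 ≤ q) : (0 : ℝ) < 1 - 1 / (q : ℝ) := by
  have : (2 : ℝ) ≤ q := by exact_mod_cast hq
  rw [sub_pos, div_lt_one (by linarith)]; linarith

lemma fac_nonneg (E : Finset ℕ) {q : ℕ} (hq : 2 ≤ q) : 0 ≤ fac E q := by
  unfold fac
  have h1 := one_sub_inv_pos hq
  have h2 : (nu E q : ℝ) / q ≤ 1 := by
    rw [div_le_one (by positivity)]; exact_mod_cast nu_le E (by omega)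
  have : 0 ≤ 1 - (nu E q : ℝ) / q := by linarith
  positivity

lemma bern_aux {q : ℕ} (hq : 2 ≤ q) (n : ℕ) :
    (1 - 1 / (q : ℝ)) ^ n * (1 + n / q) ≤ 1 := by
  have h1 := one_sub_inv_pos hq
  have h3 : 1 + (n : ℝ) * (1 / q) ≤ (1 + 1 / (q : ℝ)) ^ n :=
    one_add_mul_le_pow (by have : (0:ℝ) ≤ 1 / q := by positivity
                           linarith) n
  have h4 : (1 + (n : ℝ) / q) ≤ (1 + 1 / (q : ℝ)) ^ n := by
    have : (n : ℝ) / q = n * (1 / q) := by ring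
    rw [this]; exact h3
  calc (1 - 1 / (q : ℝ)) ^ n * (1 + n / q) ≤ (1 - 1 / (q : ℝ)) ^ n * (1 + 1 / (q : ℝ)) ^ n := by gcongr
    _ = (1 - (1 / (q : ℝ)) ^ 2) ^ n := by rw [← mul_pow]; ring_nf
    _ ≤ 1 := by
      apply pow_le_one₀
      · have : (1 / (q : ℝ)) < 1 := by linarith
        have h0 : (0:ℝ) ≤ 1 / q := by positivity
        nlinarith
      · have h0 : (0:ℝ) ≤ (1 / (q:ℝ)) ^ 2 := by positivity
        linarith

lemma fac_ge (E : Finset ℕ) {q : ℕ} (hq : 2 ≤ q) (h : E.card ≤ q) :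
    1 - (E.card : ℝ) ^ 2 / q ^ 2 ≤ fac E q := by
  have h1 := one_sub_inv_pos hq
  have hq0 : (0 : ℝ) < q := by positivity
  set n := E.card with hn
  have h2 : (1 + (n : ℝ) / q) ≤ ((1 - 1 / (q : ℝ)) ^ n)⁻¹ := by
    rw [le_inv_comm₀ (by positivity) (by positivity), ← one_div, le_div_iff₀ (by positivity)]
    exact bern_aux hq n
  have h3 : (n : ℝ) / q ≤ 1 := by
    rw [div_le_one hq0]; exact_mod_cast h
  have h4 : (nu E q : ℝ) / q ≤ n / q := by
    gcongr; exact_mod_cast nu_le_card E q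
  calc 1 - (n : ℝ) ^ 2 / q ^ 2 = (1 + (n : ℝ) / q) * (1 - n / q) := by field_simp; ring
    _ ≤ (1 + (n : ℝ) / q) * (1 - nu E q / q) := by gcongr
    _ ≤ fac E q := by
      unfold fac
      apply mul_le_mul_of_nonneg_right h2; linarith

lemma fac_le_one {E : Finset ℕ} {q : ℕ} (hq : 2 ≤ q) (h : nu E q = E.card) :
    fac E q ≤ 1 := by
  have h1 := one_sub_inv_pos hq
  unfold fac
  rw [h, inv_mul_le_iff₀ (by positivity), mul_one]
  have h3 : 1 + (E.card : ℝ) * (-(1 / q)) ≤ (1 + -(1 / (q : ℝ))) ^ E.card :=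
    one_add_mul_le_pow (by linarith) _
  calc 1 - (E.card : ℝ) / q = 1 + (E.card : ℝ) * (-(1 / q)) := by ring
    _ ≤ _ := h3
    _ = _ := by rw [sub_eq_add_neg]

lemma nu_eq_card_of_large {E : Finset ℕ} {q : ℕ} (h : ∀ e ∈ E, e < q) : nu E q = E.card := by
  unfold nu
  apply card_image_of_injOn
  intro a ha b hb hab
  simpa [Nat.mod_eq_of_lt (h a ha), Nat.mod_eq_of_lt (h b hb)] using hab

lemma multipliable_fac (E : Finset ℕ) : Multipliable (fun p : Nat.Primes => fac E p) := by
  have hs : Summable (fun p : Nat.Primes => (E.card : ℝ) ^ 2 / ((p : ℕ) : ℝ) ^ 2) := by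
    have : Summable (fun n : ℕ => (E.card : ℝ) ^ 2 / (n : ℝ) ^ 2) := by
      have := (Real.summable_one_div_nat_pow.2 (one_lt_two)).mul_left ((E.card : ℝ) ^ 2)
      simpa [div_eq_mul_inv] using this
    exact this.comp_injective Nat.Primes.coe_nat_injective
  have h1 : Summable (fun p : Nat.Primes => fac E p - 1) := by
    apply Summable.of_norm_bounded_eventually hs
    have hfin : {p : Nat.Primes | (p : ℕ) ≤ E.card + E.sup id}.Finite := by
      have : Set.Finite {n : ℕ | n ≤ E.card + E.sup id} := Set.finite_le_nat _
      exact this.preimage (Nat.Primes.coe_nat_injective.injOn)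
    refine hfin.subset ?_
    intro p hp
    by_contra hcon
    apply hp
    simp only [Set.mem_ofPred_eq, not_le] at hcon
    have hq : 2 ≤ (p : ℕ) := p.2.two_le
    have hl : ∀ e ∈ E, e < (p : ℕ) := by
      intro e he
      have : e ≤ E.sup id := Finset.le_sup (f := id) he
      omega
    have a := fac_le_one hq (nu_eq_card_of_large hl)
    have b := fac_ge E hq (by omega)
    change ‖fac E p - 1‖ ≤ (E.card : ℝ) ^ 2 / ((p : ℕ) : ℝ) ^ 2
    rw [Real.norm_eq_abs, abs_le]
    constructor
    · linarith
    · have : (0:ℝ) ≤ (E.card : ℝ) ^ 2 / ((p : ℕ) : ℝ) ^ 2 := by positivity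
      linarith
  have := Real.multipliable_one_add_of_summable h1
  simpa using this

lemma tendsto_pp (E : Finset ℕ) :
    Filter.Tendsto (fun z => pp E z) Filter.atTop (nhds (singSeries E)) := by
  have h := (multipliable_fac E).hasProd
  have e : (∏' p : Nat.Primes, fac E p) = singSeries E := rfl
  rw [e] at h
  have h2 : HasProd (Set.mulIndicator {p : ℕ | p.Prime} (fac E)) (singSeries E) := by
    rw [← hasProd_subtype_iff_mulIndicator]; exact h
  have h3 := h2.tendsto_prod_nat
  refine h3.congr ?_
  intro z
  unfold pp PR
  rw [Finset.prod_filter]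
  apply Finset.prod_congr rfl
  intro q _
  simp [Set.mulIndicator_apply]

lemma pp_nonneg (E : Finset ℕ) (z : ℕ) : 0 ≤ pp E z :=
  Finset.prod_nonneg fun _ hq => fac_nonneg E (mem_PR.1 hq).2.two_le

lemma singSeries_nonneg (E : Finset ℕ) : 0 ≤ singSeries E :=
  ge_of_tendsto' (tendsto_pp E) (pp_nonneg E)

/-- termwise comparison -/
lemma singSeries_le_of_pp (E E' : Finset ℕ) (B : ℝ) (Z : ℕ)
    (h : ∀ z, Z ≤ z → pp E z ≤ B * pp E' z) : singSeries E ≤ B * singSeries E' := by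
  refine le_of_tendsto_of_tendsto (tendsto_pp E) ((tendsto_pp E').const_mul B) ?_
  filter_upwards [Filter.eventually_ge_atTop Z] with z hz using h z hz

lemma prod_one_sub_ge {ι : Type*} (s : Finset ι) (a : ι → ℝ) (h0 : ∀ i ∈ s, 0 ≤ a i)
    (h1 : ∀ i ∈ s, a i ≤ 1) : 1 - ∑ i ∈ s, a i ≤ ∏ i ∈ s, (1 - a i) := by
  classical
  induction s using Finset.induction_on with
  | empty => simp
  | insert i s hi ih =>
    rw [sum_insert hi, prod_insert hi]
    have ih' := ih (fun j hj => h0 j (mem_insert_of_mem hj)) (fun j hj => h1 j (mem_insert_of_mem hj))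
    have a0 := h0 i (mem_insert_self _ _)
    have a1 := h1 i (mem_insert_self _ _)
    have hs : 0 ≤ ∑ i ∈ s, a i := Finset.sum_nonneg fun j hj => h0 j (mem_insert_of_mem hj)
    nlinarith [mul_le_mul_of_nonneg_left ih' (sub_nonneg.2 a1)]

lemma sum_inv_sq_le (K z : ℕ) (hK : 2 ≤ K) :
    ∑ q ∈ PR z \ PR K, 1 / (q : ℝ) ^ 2 ≤ 2 / (K : ℝ) := by
  have h1 : ∑ q ∈ PR z \ PR K, 1 / (q : ℝ) ^ 2 ≤ ∑ q ∈ Finset.Ico K (K + z), 1 / (q : ℝ) ^ 2 := by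
    apply Finset.sum_le_sum_of_subset_of_nonneg
    · intro q hq
      simp only [mem_sdiff, mem_PR, mem_Ico] at *
      constructor
      · by_contra h; exact hq.2 ⟨by omega, hq.1.2⟩
      · omega
    · intros; positivity
  refine h1.trans ?_
  have key : ∀ n : ℕ, ∑ q ∈ Finset.Ico K (K + n), 1 / (q : ℝ) ^ 2 ≤ 1 / ((K : ℝ) - 1) - 1 / ((K : ℝ) + n - 1) := by
    intro n
    have hK' : (2 : ℝ) ≤ K := by exact_mod_cast hK
    induction n with
    | zero => simp
    | succ n ih =>
      rw [← add_assoc, Finset.sum_Ico_succ_top (by omega)]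
      have hn : (0 : ℝ) ≤ n := by positivity
      have : 1 / (((K + n : ℕ) : ℝ)) ^ 2 ≤ 1 / ((K : ℝ) + n - 1) - 1 / ((K : ℝ) + (n + 1 : ℕ) - 1) := by
        push_cast
        have e : 1 / ((K : ℝ) + n - 1) - 1 / ((K : ℝ) + (n + 1) - 1) = 1 / (((K : ℝ) + n - 1) * (K + n)) := by
          have : (K : ℝ) + n - 1 ≠ 0 := by linarith
          have : (K : ℝ) + n ≠ 0 := by linarith
          have : (K : ℝ) + (n + 1) - 1 ≠ 0 := by linarith
          field_simp
          ring
        rw [e]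
        apply one_div_le_one_div_of_le
        · apply mul_pos <;> linarith
        · nlinarith
      linarith
  have hK' : (2 : ℝ) ≤ K := by exact_mod_cast hK
  have h2 : (0 : ℝ) ≤ 1 / ((K : ℝ) + z - 1) := by
    apply div_nonneg zero_le_one
    have : (0 : ℝ) ≤ z := by positivity
    linarith
  have h3 : 1 / ((K : ℝ) - 1) ≤ 2 / K := by
    rw [div_le_div_iff₀ (by linarith) (by linarith)]; linarith
  linarith [key z]

/-- tail products are at least 1/2 -/
lemma tail_ge_gen (c : ℝ) (hc : 0 ≤ c) (K z : ℕ) (hK : 2 ≤ K) (hcK : 4 * c ≤ K) (f : ℕ → ℝ)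
    (hf : ∀ q ∈ PR z \ PR K, 1 - c / (q : ℝ) ^ 2 ≤ f q) :
    1 / 2 ≤ ∏ q ∈ PR z \ PR K, f q := by
  have hK' : (2 : ℝ) ≤ K := by exact_mod_cast hK
  have hb : ∀ q ∈ PR z \ PR K, c / (q : ℝ) ^ 2 ≤ 1 := by
    intro q hq
    have : K ≤ q := by
      simp only [mem_sdiff, mem_PR] at hq
      by_contra h; exact hq.2 ⟨by omega, hq.1.2⟩
    have : (K : ℝ) ≤ q := by exact_mod_cast this
    have hq0 : (0:ℝ) < q := by linarith
    rw [div_le_one (by positivity)]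
    nlinarith
  calc (1 / 2 : ℝ) ≤ 1 - ∑ q ∈ PR z \ PR K, c / (q : ℝ) ^ 2 := by
        have h := sum_inv_sq_le K z hK
        have e : ∑ q ∈ PR z \ PR K, c / (q : ℝ) ^ 2 = c * ∑ q ∈ PR z \ PR K, 1 / (q : ℝ) ^ 2 := by
          rw [Finset.mul_sum]; congr 1; ext q; ring
        rw [e]
        have h2 : c * ∑ q ∈ PR z \ PR K, 1 / (q : ℝ) ^ 2 ≤ c * (2 / K) := by gcongr
        have h3 : c * (2 / K) ≤ 1 / 2 := by
          rw [mul_div_assoc', div_le_div_iff₀ (by linarith) (by norm_num)]; linarith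
        linarith
    _ ≤ ∏ q ∈ PR z \ PR K, (1 - c / (q : ℝ) ^ 2) :=
        prod_one_sub_ge _ _ (fun q _ => by positivity) hb
    _ ≤ _ := Finset.prod_le_prod (fun q hq => by linarith [hb q hq]) hf

lemma pp_split (E : Finset ℕ) {K z : ℕ} (h : K ≤ z) :
    pp E z = pp E K * ∏ q ∈ PR z \ PR K, fac E q := by
  unfold pp; rw [mul_comm, Finset.prod_sdiff (PR_mono h)]

lemma pp_tail (E : Finset ℕ) {K z : ℕ} (hK : 2 ≤ K) (hc : 4 * E.card ^ 2 ≤ K) :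
    1 / 2 ≤ ∏ q ∈ PR z \ PR K, fac E q := by
  apply tail_ge_gen ((E.card : ℝ) ^ 2) (by positivity) K z hK (by exact_mod_cast hc)
  intro q hq
  simp only [mem_sdiff, mem_PR] at hq
  have : K ≤ q := by by_contra h; exact hq.2 ⟨by omega, hq.1.2⟩
  exact fac_ge E hq.1.2.two_le (by nlinarith)

lemma pp_le_two_singSeries (E : Finset ℕ) {K : ℕ} (hK : 2 ≤ K) (hc : 4 * E.card ^ 2 ≤ K) :
    pp E K ≤ 2 * singSeries E := by
  have : pp E K / 2 ≤ singSeries E := by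
    refine ge_of_tendsto (tendsto_pp E) ?_
    filter_upwards [Filter.eventually_ge_atTop K] with z hz
    rw [pp_split E hz]
    have := pp_tail E (z := z) hK hc
    nlinarith [pp_nonneg E K]
  linarith

lemma one_le_inv_pow {q : ℕ} (hq : 2 ≤ q) (n : ℕ) : 1 ≤ ((1 - 1 / (q : ℝ)) ^ n)⁻¹ := by
  have h1 := one_sub_inv_pos hq
  rw [one_le_inv₀ (by positivity)]
  apply pow_le_one₀ h1.le
  have : (0:ℝ) ≤ 1 / q := by positivity
  linarith

lemma fac_ge_inv {E : Finset ℕ} {q : ℕ} (hq : 2 ≤ q) (h : nu E q < q) : 1 / (q : ℝ) ≤ fac E q := by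
  have hq0 : (0 : ℝ) < q := by positivity
  have h2 : 1 / (q : ℝ) ≤ 1 - nu E q / q := by
    rw [le_sub_iff_add_le, ← add_div, div_le_one hq0]
    have : nu E q + 1 ≤ q := h
    have : ((nu E q : ℝ) + 1) ≤ q := by exact_mod_cast this
    linarith
  unfold fac
  calc 1 / (q : ℝ) = 1 * (1 / q) := by ring
    _ ≤ _ := by
      apply mul_le_mul (one_le_inv_pow hq _) h2 (by positivity)
      linarith [one_le_inv_pow hq E.card]

lemma fac_eq_zero {E : Finset ℕ} {q : ℕ} (hq : 2 ≤ q) (h : nu E q = q) : fac E q = 0 := by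
  have hq0 : (q : ℝ) ≠ 0 := by positivity
  unfold fac; rw [h, div_self hq0]; simp

/-- admissible set -/
def Adm (E : Finset ℕ) : Prop := ∀ q : ℕ, q.Prime → nu E q < q

/-- lower bound constant -/
noncomputable def cS (n : ℕ) : ℝ := (1 / 2) * ∏ q ∈ PR (4 * n ^ 2 + 2), 1 / (q : ℝ)

lemma cS_pos (n : ℕ) : 0 < cS n := by
  unfold cS
  have : 0 < ∏ q ∈ PR (4 * n ^ 2 + 2), 1 / (q : ℝ) := by
    apply Finset.prod_pos
    intro q hq
    have := (mem_PR.1 hq).2.pos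
    positivity
  linarith

lemma singSeries_ge_of_adm {E : Finset ℕ} (h : Adm E) : cS E.card ≤ singSeries E := by
  have h1 := pp_le_two_singSeries E (K := 4 * E.card ^ 2 + 2) (by omega) (by omega)
  have h2 : ∏ q ∈ PR (4 * E.card ^ 2 + 2), 1 / (q : ℝ) ≤ pp E (4 * E.card ^ 2 + 2) := by
    apply Finset.prod_le_prod
    · intros; positivity
    · intro q hq
      have := (mem_PR.1 hq).2
      exact fac_ge_inv this.two_le (h q this)
  unfold cS; linarith

lemma singSeries_eq_zero_of_not_adm {E : Finset ℕ} (h : ¬ Adm E) : singSeries E = 0 := by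
  unfold Adm at h
  push Not at h
  obtain ⟨q, hq, h⟩ := h
  have h0 : nu E q = q := le_antisymm (nu_le E hq.pos) h
  have : Filter.Tendsto (fun z => pp E z) Filter.atTop (nhds 0) := by
    apply tendsto_const_nhds.congr'
    filter_upwards [Filter.eventually_gt_atTop q] with z hz
    symm
    exact Finset.prod_eq_zero (mem_PR.2 ⟨hz, hq⟩) (fac_eq_zero hq.two_le h0)
  exact tendsto_nhds_unique (tendsto_pp E) this

lemma adm_of_ne_zero {E : Finset ℕ} (h : singSeries E ≠ 0) : Adm E := by
  by_contra hc; exact h (singSeries_eq_zero_of_not_adm hc)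

lemma adm_iff {E : Finset ℕ} : singSeries E ≠ 0 ↔ Adm E :=
  ⟨adm_of_ne_zero, fun h => (lt_of_lt_of_le (cS_pos _) (singSeries_ge_of_adm h)).ne'⟩

lemma primePi_le_of_not_adm {E : Finset ℕ} (h : ¬ Adm E) (x : ℝ) : primePi x E ≤ E.card := by
  unfold Adm at h
  push Not at h
  obtain ⟨q, hq, h⟩ := h
  have h0 : nu E q = q := le_antisymm (nu_le E hq.pos) h
  have hqn : q ≤ E.card := h0 ▸ nu_le_card E q
  have himg : E.image (· % q) = range q := by
    apply Finset.eq_of_subset_of_card_le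
    · intro a ha; rw [mem_image] at ha; obtain ⟨b, _, rfl⟩ := ha
      exact mem_range.2 (Nat.mod_lt _ hq.pos)
    · rw [card_range]; exact h
  unfold primePi
  calc _ ≤ (Finset.Icc 1 q : Set ℕ).ncard := by
        apply Set.ncard_le_ncard _ (Finset.finite_toSet _)
        rintro m ⟨hm, -, hp⟩
        simp only [coe_Icc, Set.mem_Icc]
        refine ⟨hm, ?_⟩
        have : (q - m % q) % q ∈ E.image (· % q) := by
          rw [himg]; exact mem_range.2 (Nat.mod_lt _ hq.pos)
        rw [mem_image] at this
        obtain ⟨d, hd, hdq⟩ := this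
        have hdvd : q ∣ m + d := by
          have hml := Nat.mod_lt m hq.pos
          have : (m + d) % q = 0 := by
            rw [Nat.add_mod]
            rw [hdq, Nat.add_mod_mod]
            rw [show m % q + (q - m % q) = q by omega, Nat.mod_self]
          exact Nat.dvd_of_mod_eq_zero this
        have := (Nat.prime_dvd_prime_iff_eq hq (hp d hd)).1 hdvd
        omega
    _ = q := by rw [Set.ncard_coe_finset]; simp
    _ ≤ _ := hqn



lemma card_modEq_aux (N M r : ℕ) (hM : 0 < M) :
    |(((Finset.Icc 1 N).filter (fun m => m ≡ r [MOD M])).card : ℝ) - (N : ℝ) / M| ≤ 1 := by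
  have h := Nat.Ioc_filter_modEq_card (a := 0) (b := N) (r := M) hM r
  have e : (Finset.Icc 1 N) = Finset.Ioc 0 N := by ext; simp; omega
  rw [e]
  have h2 : (((Finset.Ioc 0 N).filter (fun m => m ≡ r [MOD M])).card : ℤ) =
     max (⌊((N : ℚ) - r) / M⌋ - ⌊(((0:ℕ) : ℚ) - r) / M⌋) 0 := h
  have hMq : (0 : ℚ) < M := by exact_mod_cast hM
  have h3 : ⌊(((0:ℕ) : ℚ) - r) / M⌋ ≤ ⌊((N : ℚ) - r) / M⌋ := by
    apply Int.floor_le_floor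
    gcongr
    omega
  rw [max_eq_left (by linarith)] at h2
  have f1 := Int.floor_le (((N : ℚ) - r) / M)
  have f2 := Int.lt_floor_add_one (((N : ℚ) - r) / M)
  have g1 := Int.floor_le ((((0:ℕ) : ℚ) - r) / M)
  have g2 := Int.lt_floor_add_one ((((0:ℕ) : ℚ) - r) / M)
  have key : |(((Finset.Ioc 0 N).filter (fun m => m ≡ r [MOD M])).card : ℚ) - (N : ℚ) / M| ≤ 1 := by
    have h4 : (((Finset.Ioc 0 N).filter (fun m => m ≡ r [MOD M])).card : ℚ) =
      (⌊((N : ℚ) - r) / M⌋ : ℚ) - (⌊(((0:ℕ) : ℚ) - r) / M⌋ : ℚ) := by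
      exact_mod_cast h2
    rw [h4]
    have e2 : (N : ℚ) / M = ((N : ℚ) - r) / M - (((0:ℕ) : ℚ) - r) / M := by
      push_cast; field_simp; ring
    rw [e2, abs_le]
    constructor <;> linarith
  have := (Rat.cast_le (K := ℝ)).2 key
  push_cast at this
  exact this

/-- CRT counting -/
lemma crt_count_aux (u : Finset ℕ) (A : ℕ → Finset ℕ) (hu : ∀ q ∈ u, q.Prime)
    (hA : ∀ q ∈ u, ∀ a ∈ A q, a < q) (N : ℕ) : ∀ (M r : ℕ), 0 < M → (∀ q ∈ u, q.Coprime M) →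
    |(((Finset.Icc 1 N).filter (fun m => m ≡ r [MOD M] ∧ ∀ q ∈ u, m % q ∈ A q)).card : ℝ)
      - (N : ℝ) / M * ∏ q ∈ u, ((A q).card : ℝ) / q| ≤ ∏ q ∈ u, ((A q).card : ℝ) := by
  induction u using Finset.induction_on with
  | empty => intro M r hM _; simpa using card_modEq_aux N M r hM
  | insert q u hq ih =>
    intro M r hM hco
    have ih' := ih (fun q' h => hu q' (mem_insert_of_mem h)) (fun q' h => hA q' (mem_insert_of_mem h))
    have hqp := hu q (mem_insert_self _ _)
    have hqM : q.Coprime M := hco q (mem_insert_self _ _)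
    rw [prod_insert hq, prod_insert hq]
    choose! R hR using fun c : ℕ => (⟨(Nat.chineseRemainder hqM c r : ℕ), (Nat.chineseRemainder hqM c r).2⟩ :
      ∃ t : ℕ, t ≡ c [MOD q] ∧ t ≡ r [MOD M])
    have hset : ((Finset.Icc 1 N).filter (fun m => m ≡ r [MOD M] ∧ ∀ q' ∈ insert q u, m % q' ∈ A q')).card
      = ∑ c ∈ A q, ((Finset.Icc 1 N).filter (fun m => m ≡ R c [MOD (q * M)] ∧ ∀ q' ∈ u, m % q' ∈ A q')).card := by
      rw [← Finset.card_biUnion]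
      · congr 1
        ext m
        simp only [mem_filter, mem_biUnion, mem_insert, forall_eq_or_imp]
        constructor
        · rintro ⟨hm, h1, h2, h3⟩
          refine ⟨m % q, h2, hm, ?_, h3⟩
          rw [← Nat.modEq_and_modEq_iff_modEq_mul hqM]
          exact ⟨(Nat.mod_modEq m q).symm.trans (hR (m % q)).1.symm, h1.trans (hR (m % q)).2.symm⟩
        · rintro ⟨c, hc, hm, h1, h3⟩
          rw [← Nat.modEq_and_modEq_iff_modEq_mul hqM] at h1
          refine ⟨hm, h1.2.trans (hR c).2, ?_, h3⟩
          have : m ≡ c [MOD q] := h1.1.trans (hR c).1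
          unfold Nat.ModEq at this
          rw [this, Nat.mod_eq_of_lt (hA q (mem_insert_self _ _) c hc)]
          exact hc
      · intro c hc c' hc' hne
        rw [Function.onFun, Finset.disjoint_left]
        intro m hm hm'
        simp only [mem_filter] at hm hm'
        apply hne
        have a1 := hm.2.1
        have a2 := hm'.2.1
        rw [← Nat.modEq_and_modEq_iff_modEq_mul hqM] at a1 a2
        have : c ≡ c' [MOD q] := ((hR c).1.symm.trans a1.1.symm).trans (a2.1.trans (hR c').1)
        unfold Nat.ModEq at this
        rwa [Nat.mod_eq_of_lt (hA q (mem_insert_self _ _) c hc),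
          Nat.mod_eq_of_lt (hA q (mem_insert_self _ _) c' hc')] at this
    rw [hset]
    push_cast
    have hq0 : (q : ℝ) ≠ 0 := by exact_mod_cast hqp.pos.ne'
    have hM0 : (M : ℝ) ≠ 0 := by exact_mod_cast hM.ne'
    have e : (N : ℝ) / M * (((A q).card : ℝ) / q * ∏ x ∈ u, ((A x).card : ℝ) / x)
       = ∑ c ∈ A q, (N : ℝ) / (q * M : ℕ) * ∏ x ∈ u, ((A x).card : ℝ) / x := by
      rw [sum_const, nsmul_eq_mul]; push_cast; field_simp
    rw [e, ← Finset.sum_sub_distrib]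
    refine (Finset.abs_sum_le_sum_abs _ _).trans ?_
    calc _ ≤ ∑ c ∈ A q, ∏ x ∈ u, ((A x).card : ℝ) := by
          apply Finset.sum_le_sum
          intro c _
          apply ih' (q * M) (R c) (Nat.mul_pos hqp.pos hM)
          intro q' hq'
          apply Nat.Coprime.mul_right
          · rw [Nat.coprime_primes (hu q' (mem_insert_of_mem hq')) hqp]
            rintro rfl; exact hq hq'
          · exact hco q' (mem_insert_of_mem hq')
      _ = _ := by rw [sum_const, nsmul_eq_mul]

lemma crt_count (u : Finset ℕ) (A : ℕ → Finset ℕ) (hu : ∀ q ∈ u, q.Prime)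
    (hA : ∀ q ∈ u, ∀ a ∈ A q, a < q) (N : ℕ) :
    |(((Finset.Icc 1 N).filter (fun m => ∀ q ∈ u, m % q ∈ A q)).card : ℝ)
      - (N : ℝ) * ∏ q ∈ u, ((A q).card : ℝ) / q| ≤ ∏ q ∈ u, ((A q).card : ℝ) := by
  have := crt_count_aux u A hu hA N 1 0 one_pos (by simp)
  simpa [Nat.modEq_one] using this

/-- truncated inclusion-exclusion -/
noncomputable def Bon (r : ℕ) (s : Finset ℕ) (a : ℕ → ℝ) : ℝ :=
  ∑ e ∈ s.powerset.filter (fun e => e.card ≤ r), ∏ q ∈ e, (-(a q))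

lemma Bon_zero (s : Finset ℕ) (a : ℕ → ℝ) : Bon 0 s a = 1 := by
  unfold Bon
  have : s.powerset.filter (fun e => e.card ≤ 0) = {∅} := by
    ext e; simp only [mem_filter, mem_powerset, mem_singleton, Nat.le_zero, Finset.card_eq_zero]
    constructor
    · exact fun h => h.2
    · rintro rfl; simp
  rw [this]; simp

lemma trunc_insert (r : ℕ) (s : Finset ℕ) (q : ℕ) (hq : q ∉ s) (b : ℕ → ℝ) :
    ∑ e ∈ (insert q s).powerset.filter (fun e => e.card ≤ r + 1), ∏ q ∈ e, b q =
    ∑ e ∈ s.powerset.filter (fun e => e.card ≤ r + 1), ∏ q ∈ e, b q +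
     b q * ∑ e ∈ s.powerset.filter (fun e => e.card ≤ r), ∏ q ∈ e, b q := by
  rw [Finset.sum_filter, Finset.sum_powerset_insert hq, Finset.sum_filter, Finset.sum_filter,
    Finset.mul_sum]
  congr 1
  apply Finset.sum_congr rfl
  intro e he
  have hqe : q ∉ e := fun h => hq (mem_powerset.1 he h)
  rw [card_insert_of_notMem hqe, prod_insert hqe]
  simp only [add_le_add_iff_right]
  split_ifs <;> simp

lemma Bon_insert (r : ℕ) (s : Finset ℕ) (q : ℕ) (hq : q ∉ s) (a : ℕ → ℝ) :
    Bon (r + 1) (insert q s) a = Bon (r + 1) s a - a q * Bon r s a := by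
  unfold Bon; rw [trunc_insert r s q hq (fun q => -(a q))]; ring

lemma Bon_bounds (s : Finset ℕ) (a : ℕ → ℝ) (h0 : ∀ q ∈ s, 0 ≤ a q) (h1 : ∀ q ∈ s, a q ≤ 1) :
    ∀ r, (Bon (2 * r + 1) s a ≤ ∏ q ∈ s, (1 - a q)) ∧ (∏ q ∈ s, (1 - a q) ≤ Bon (2 * r) s a) := by
  induction s using Finset.induction_on with
  | empty =>
    intro r
    have : ∀ r, Bon r ∅ a = 1 := by
      intro r; unfold Bon; simp [Finset.filter_singleton]
    simp [this]
  | insert q s hq ih =>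
    intro r
    have ih' := ih (fun j hj => h0 j (mem_insert_of_mem hj)) (fun j hj => h1 j (mem_insert_of_mem hj))
    have a0 := h0 q (mem_insert_self _ _)
    have a1 := h1 q (mem_insert_self _ _)
    rw [prod_insert hq]
    constructor
    · rw [Bon_insert _ _ _ hq]
      have := (ih' r).1
      have h2 := mul_le_mul_of_nonneg_left (ih' r).2 a0
      linarith
    · cases r with
      | zero =>
        rw [mul_zero, Bon_zero]
        have h := (ih' 0).2
        rw [mul_zero, Bon_zero] at h
        have hn : 0 ≤ ∏ q ∈ s, (1 - a q) :=
          Finset.prod_nonneg fun j hj => by linarith [h1 j (mem_insert_of_mem hj)]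
        nlinarith
      | succ r =>
        rw [show 2 * (r + 1) = (2 * r + 1) + 1 by ring, Bon_insert _ _ _ hq]
        have := (ih' (r + 1)).2
        rw [show 2 * (r + 1) = (2 * r + 1) + 1 by ring] at this
        have h2 := mul_le_mul_of_nonneg_left (ih' r).1 a0
        linarith

lemma trunc_le (s : Finset ℕ) (b : ℕ → ℝ) (hb : ∀ q ∈ s, 0 ≤ b q) : ∀ r : ℕ,
    ∑ e ∈ s.powerset.filter (fun e => e.card ≤ r), ∏ q ∈ e, b q ≤ (1 + ∑ q ∈ s, b q) ^ r := by
  induction s using Finset.induction_on with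
  | empty => intro r; simp [Finset.filter_singleton]
  | insert q s hq ih =>
    have ih' := ih (fun j hj => hb j (mem_insert_of_mem hj))
    have hbq := hb q (mem_insert_self _ _)
    have hs : 0 ≤ ∑ q ∈ s, b q := Finset.sum_nonneg fun j hj => hb j (mem_insert_of_mem hj)
    intro r
    cases r with
    | zero =>
      have : (insert q s).powerset.filter (fun e => e.card ≤ 0) = {∅} := by
        ext e; simp only [mem_filter, mem_powerset, mem_singleton, Nat.le_zero, Finset.card_eq_zero]
        constructor
        · exact fun h => h.2
        · rintro rfl; simp
      rw [this]; simp
    | succ r =>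
      rw [trunc_insert r s q hq, sum_insert hq]
      set T := 1 + ∑ q ∈ s, b q with hT
      have hT1 : 0 ≤ T := by linarith
      have h1 := ih' (r + 1)
      have h2 := mul_le_mul_of_nonneg_left (ih' r) hbq
      calc _ ≤ T ^ (r + 1) + b q * T ^ r := by linarith
        _ = (T + b q) * T ^ r := by ring
        _ ≤ (T + b q) * (T + b q) ^ r := by gcongr; linarith
        _ = _ := by rw [hT]; ring

lemma esymm_le (s : Finset ℕ) (a : ℕ → ℝ) (h0 : ∀ q ∈ s, 0 ≤ a q) : ∀ r : ℕ,
    ∑ e ∈ s.powersetCard r, ∏ q ∈ e, a q ≤ (∑ q ∈ s, a q) ^ r / (r.factorial : ℝ) := by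
  induction s using Finset.induction_on with
  | empty =>
    intro r
    cases r with
    | zero => simp
    | succ r =>
      rw [Finset.powersetCard_eq_empty.2 (by simp)]
      simp
  | insert q s hq ih =>
    have ih' := ih (fun j hj => h0 j (mem_insert_of_mem hj))
    have hbq := h0 q (mem_insert_self _ _)
    have hs : 0 ≤ ∑ q ∈ s, a q := Finset.sum_nonneg fun j hj => h0 j (mem_insert_of_mem hj)
    intro r
    cases r with
    | zero => simp
    | succ r =>
      have e1 : ∑ e ∈ (insert q s).powersetCard (r + 1), ∏ q ∈ e, a q =
          ∑ e ∈ s.powersetCard (r + 1), ∏ q ∈ e, a q + a q * ∑ e ∈ s.powersetCard r, ∏ q ∈ e, a q := by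
        rw [Finset.powersetCard_succ_insert hq, Finset.sum_union, Finset.sum_image, Finset.mul_sum]
        · congr 1
          apply Finset.sum_congr rfl
          intro e he
          have hqe : q ∉ e := fun h => hq ((mem_powersetCard.1 he).1 h)
          rw [prod_insert hqe]
        · intro e he e' he' hee
          have hqe : q ∉ e := fun h => hq ((mem_powersetCard.1 he).1 h)
          have hqe' : q ∉ e' := fun h => hq ((mem_powersetCard.1 he').1 h)
          rw [← Finset.erase_insert hqe, ← Finset.erase_insert hqe']
          rw [hee]
        · rw [Finset.disjoint_left]
          intro e he he'
          rw [mem_image] at he'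
          obtain ⟨e', _, rfl⟩ := he'
          exact hq ((mem_powersetCard.1 he).1 (mem_insert_self _ _))
      rw [e1, sum_insert hq]
      set T := ∑ q ∈ s, a q with hT
      have h1 := ih' (r + 1)
      have h2 := mul_le_mul_of_nonneg_left (ih' r) hbq
      have h3 : T ^ (r + 1) + (r + 1) * a q * T ^ r ≤ (a q + T) ^ (r + 1) := by
        have h := Commute.all (a q) T
        clear h1 h2 ih' e1
        induction r with
        | zero => simp; linarith
        | succ r ih2 =>
          have hp : 0 ≤ T ^ r := by positivity
          calc T ^ (r + 1 + 1) + ((r + 1 : ℕ) + 1) * a q * T ^ (r + 1)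
              ≤ (a q + T) * (T ^ (r + 1) + (r + 1) * a q * T ^ r) := by
                push_cast
                have : 0 ≤ a q * ((r + 1) * a q * T ^ r) := by positivity
                rw [← sub_nonneg]
                calc (0:ℝ) ≤ a q * ((r + 1) * a q * T ^ r) := this
                  _ = _ := by ring
            _ ≤ (a q + T) * (a q + T) ^ (r + 1) := by gcongr
            _ = _ := by ring
      calc _ ≤ T ^ (r + 1) / ((r + 1).factorial : ℝ) + a q * (T ^ r / (r.factorial : ℝ)) := by linarith
        _ = (T ^ (r + 1) + (r + 1) * a q * T ^ r) / ((r + 1).factorial : ℝ) := by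
            rw [Nat.factorial_succ]
            have : (r.factorial : ℝ) ≠ 0 := by positivity
            push_cast
            field_simp
        _ ≤ _ := by gcongr

lemma Bon_succ (r : ℕ) (s : Finset ℕ) (a : ℕ → ℝ) :
    Bon (r + 1) s a = Bon r s a + (-1) ^ (r + 1) * ∑ e ∈ s.powersetCard (r + 1), ∏ q ∈ e, a q := by
  unfold Bon
  have : s.powerset.filter (fun e => e.card ≤ r + 1) =
     s.powerset.filter (fun e => e.card ≤ r) ∪ s.powersetCard (r + 1) := by
    ext e; simp only [mem_filter, mem_powerset, mem_union, mem_powersetCard]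
    constructor
    · rintro ⟨h1, h2⟩
      by_cases h : e.card ≤ r
      · exact Or.inl ⟨h1, h⟩
      · exact Or.inr ⟨h1, by omega⟩
    · rintro (⟨h1, h2⟩ | ⟨h1, h2⟩)
      · exact ⟨h1, by omega⟩
      · exact ⟨h1, by omega⟩
  rw [this, Finset.sum_union, Finset.mul_sum]
  · congr 1
    apply Finset.sum_congr rfl
    intro e he
    rw [Finset.prod_neg, (mem_powersetCard.1 he).2]
  · rw [Finset.disjoint_left]
    intro e he he'
    simp only [mem_filter, mem_powersetCard] at he he'
    omega

/-- upper bound on even truncation -/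
lemma Bon_even_le (s : Finset ℕ) (a : ℕ → ℝ) (h0 : ∀ q ∈ s, 0 ≤ a q) (h1 : ∀ q ∈ s, a q ≤ 1) (r : ℕ) :
    Bon (2 * r) s a ≤ ∏ q ∈ s, (1 - a q) + (∑ q ∈ s, a q) ^ (2 * r + 1) / ((2 * r + 1).factorial : ℝ) := by
  have h := (Bon_bounds s a h0 h1 r).1
  rw [Bon_succ] at h
  have h2 := esymm_le s a h0 (2 * r + 1)
  have : (-1 : ℝ) ^ (2 * r + 1) = -1 := Odd.neg_one_pow ⟨r, rfl⟩
  rw [this] at h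
  linarith



/-- primes in a dyadic interval -/
def dyP (j : ℕ) : Finset ℕ := (Finset.Ioc (2 ^ j) (2 ^ (j + 1))).filter Nat.Prime

/-- primes between `2^(2^c)` and `2^(2^(c+1))` -/
def blk (c : ℕ) : Finset ℕ := (Finset.Ioc (2 ^ 2 ^ c) (2 ^ 2 ^ (c + 1))).filter Nat.Prime

lemma dyP_card (j : ℕ) : j * (dyP j).card ≤ 4 * 2 ^ j := by
  have h1 : (2 ^ j) ^ (dyP j).card ≤ ∏ q ∈ dyP j, q := by
    rw [← Finset.prod_const]
    apply Finset.prod_le_prod'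
    intro q hq
    simp only [dyP, mem_filter, mem_Ioc] at hq
    omega
  have h2 : ∏ q ∈ dyP j, q ≤ primorial (2 ^ (j + 1)) := by
    unfold primorial
    apply Finset.prod_le_prod_of_subset_of_one_le'
    · intro q hq
      simp only [dyP, mem_filter, mem_Ioc] at hq
      simp only [mem_filter, mem_range]
      exact ⟨by omega, hq.2⟩
    · intro q hq _
      exact (Nat.mem_primesLE.1 hq).2.one_le
  have h3 := h1.trans (h2.trans (primorial_le_four_pow _))
  rw [← pow_mul, show (4 : ℕ) = 2 ^ 2 by norm_num, ← pow_mul] at h3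
  have := (Nat.pow_le_pow_iff_right (by norm_num : 1 < 2)).1 h3
  rw [pow_succ] at this
  omega

lemma dyP_sum (j : ℕ) (hj : 1 ≤ j) : ∑ q ∈ dyP j, 1 / (q : ℝ) ≤ 4 / j := by
  have hj' : (0 : ℝ) < j := by exact_mod_cast hj
  calc ∑ q ∈ dyP j, 1 / (q : ℝ) ≤ ∑ q ∈ dyP j, 1 / (2 : ℝ) ^ j := by
        apply Finset.sum_le_sum
        intro q hq
        simp only [dyP, mem_filter, mem_Ioc] at hq
        apply one_div_le_one_div_of_le (by positivity)
        exact_mod_cast hq.1.1.le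
    _ = (dyP j).card / (2 : ℝ) ^ j := by rw [sum_const, nsmul_eq_mul]; ring
    _ ≤ 4 / j := by
        rw [div_le_div_iff₀ (by positivity) hj']
        have := dyP_card j
        have : (j : ℝ) * (dyP j).card ≤ 4 * 2 ^ j := by exact_mod_cast this
        linarith

lemma blk_sum (c : ℕ) : ∑ q ∈ blk c, 1 / (q : ℝ) ≤ 4 := by
  have hsub : blk c ⊆ (Finset.Ico (2 ^ c) (2 ^ (c + 1))).biUnion dyP := by
    intro q hq
    simp only [blk, mem_filter, mem_Ioc, mem_biUnion, mem_Ico, dyP] at *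
    have hq1 : 1 < q := hq.2.one_lt
    have hlog := Nat.pow_log_le_self 2 (show q - 1 ≠ 0 by omega)
    have hlog2 := Nat.lt_pow_succ_log_self (b := 2) (by norm_num) (q - 1)
    refine ⟨Nat.log 2 (q - 1), ⟨?_, ?_⟩, ⟨?_, ?_⟩, hq.2⟩
    · apply Nat.le_log_of_pow_le (by norm_num); omega
    · have : 2 ^ Nat.log 2 (q - 1) < 2 ^ 2 ^ (c + 1) := by omega
      exact (Nat.pow_lt_pow_iff_right (by norm_num)).1 this
    · omega
    · have := hlog2; simp only [Nat.succ_eq_add_one] at this; omega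
  calc ∑ q ∈ blk c, 1 / (q : ℝ) ≤ ∑ q ∈ (Finset.Ico (2 ^ c) (2 ^ (c + 1))).biUnion dyP, 1 / (q : ℝ) :=
        Finset.sum_le_sum_of_subset_of_nonneg hsub (fun _ _ _ => by positivity)
    _ ≤ ∑ j ∈ Finset.Ico (2 ^ c) (2 ^ (c + 1)), ∑ q ∈ dyP j, 1 / (q : ℝ) := by
        rw [Finset.sum_biUnion]
        intro j _ j' _ hne
        rw [Function.onFun, Finset.disjoint_left]
        intro q h1 h2
        simp only [dyP, mem_filter, mem_Ioc] at h1 h2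
        apply hne
        rcases lt_trichotomy j j' with h | h | h
        · have := Nat.pow_le_pow_right (show 0 < 2 by norm_num) (show j + 1 ≤ j' from h); omega
        · exact h
        · have := Nat.pow_le_pow_right (show 0 < 2 by norm_num) (show j' + 1 ≤ j from h); omega
    _ ≤ ∑ j ∈ Finset.Ico (2 ^ c) (2 ^ (c + 1)), 4 / (2 : ℝ) ^ c := by
        apply Finset.sum_le_sum
        intro j hj
        rw [mem_Ico] at hj
        have h1 : 1 ≤ j := le_trans (Nat.one_le_two_pow) hj.1
        refine (dyP_sum j h1).trans ?_
        have : ((2 : ℝ) ^ c) ≤ j := by exact_mod_cast hj.1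
        gcongr
    _ = 4 := by
        rw [sum_const, nsmul_eq_mul, Nat.card_Ico, pow_succ]
        have : 2 ^ c * 2 - 2 ^ c = 2 ^ c := by omega
        rw [this]; push_cast; field_simp

/-- forbidden residues -/
def badRes (E : Finset ℕ) (q : ℕ) : Finset ℕ := (range q).filter (fun r => ∃ d ∈ E, q ∣ r + d)

lemma badRes_card (E : Finset ℕ) {q : ℕ} (hq : 0 < q) : (badRes E q).card = nu E q := by
  unfold nu
  symm
  apply Finset.card_bij (fun c _ => (q - c) % q)
  · intro c hc
    rw [mem_image] at hc
    obtain ⟨d, hd, rfl⟩ := hc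
    have hl := Nat.mod_lt d hq
    simp only [badRes, mem_filter, mem_range]
    refine ⟨Nat.mod_lt _ hq, d, hd, ?_⟩
    apply Nat.dvd_of_mod_eq_zero
    rw [Nat.mod_add_mod, ← Nat.add_mod_mod, show q - d % q + d % q = q by omega, Nat.mod_self]
  · intro c hc c' hc' h
    rw [mem_image] at hc hc'
    obtain ⟨d, hd, rfl⟩ := hc
    obtain ⟨d', hd', rfl⟩ := hc'
    have hl := Nat.mod_lt d hq
    have hl' := Nat.mod_lt d' hq
    rcases Nat.eq_zero_or_pos (d % q) with h0 | h0 <;> rcases Nat.eq_zero_or_pos (d' % q) with h0' | h0'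
    · omega
    · rw [h0, Nat.sub_zero, Nat.mod_self, Nat.mod_eq_of_lt (by omega)] at h; omega
    · rw [h0', Nat.sub_zero, Nat.mod_self, Nat.mod_eq_of_lt (by omega)] at h; omega
    · have a1 : (q - d % q) % q = q - d % q := Nat.mod_eq_of_lt (by omega)
      have a2 : (q - d' % q) % q = q - d' % q := Nat.mod_eq_of_lt (by omega)
      have h' : q - d % q = q - d' % q := by rw [← a1, ← a2]; exact h
      omega
  · intro r hr
    simp only [badRes, mem_filter, mem_range] at hr
    obtain ⟨hr, d, hd, hdvd⟩ := hr
    refine ⟨d % q, mem_image_of_mem _ hd, ?_⟩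
    have hl := Nat.mod_lt d hq
    have h0 : (r + d % q) % q = 0 := by rw [Nat.add_mod_mod]; exact Nat.mod_eq_zero_of_dvd hdvd
    have h1 : r + d % q = 0 ∨ r + d % q = q := by
      obtain ⟨t, ht⟩ := Nat.dvd_of_mod_eq_zero h0
      have : t < 2 := by
        by_contra hc
        have : q * 2 ≤ q * t := Nat.mul_le_mul_left q (by omega)
        omega
      interval_cases t
      · left; simpa using ht
      · right; simpa using ht
    rcases h1 with h1 | h1
    · have a1 : r = 0 := by omega
      have a2 : d % q = 0 := by omega
      rw [a1, a2, Nat.sub_zero, Nat.mod_self]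
    · rw [show q - d % q = r by omega, Nat.mod_eq_of_lt hr]

lemma mem_badRes {E : Finset ℕ} {q : ℕ} (hq : 0 < q) (m : ℕ) :
    m % q ∈ badRes E q ↔ ∃ d ∈ E, q ∣ m + d := by
  simp only [badRes, mem_filter, mem_range, Nat.mod_lt _ hq, true_and]
  constructor
  · rintro ⟨d, hd, h⟩
    exact ⟨d, hd, by rw [Nat.dvd_iff_mod_eq_zero] at *; rwa [Nat.mod_add_mod] at h⟩
  · rintro ⟨d, hd, h⟩
    exact ⟨d, hd, by rw [Nat.dvd_iff_mod_eq_zero] at *; rwa [Nat.mod_add_mod]⟩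

/-- General multi-block sieve -/
lemma sieve_blocks (E : Finset ℕ) (t N : ℕ) (P : Fin t → Finset ℕ) (R : Fin t → ℕ)
    (hP : ∀ i, ∀ q ∈ P i, q.Prime)
    (hdis : ∀ i j, i ≠ j → Disjoint (P i) (P j)) :
    (((Finset.Icc 1 N).filter (fun m => ∀ i, ∀ q ∈ P i, ¬ (m % q ∈ badRes E q))).card : ℝ) ≤
      N * ∏ i, Bon (2 * R i) (P i) (fun q => (nu E q : ℝ) / q) +
      ∏ i, (1 + ∑ q ∈ P i, (nu E q : ℝ)) ^ (2 * R i) := by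
  classical
  set am : ℕ → ℕ → ℝ := fun m q => if m % q ∈ badRes E q then 1 else 0 with ham
  have am0 : ∀ m q, 0 ≤ am m q := by intro m q; simp only [ham]; split_ifs <;> norm_num
  have am1 : ∀ m q, am m q ≤ 1 := by intro m q; simp only [ham]; split_ifs <;> norm_num
  set F : Fin t → Finset (Finset ℕ) := fun i => (P i).powerset.filter (fun e => e.card ≤ 2 * R i) with hF
  have step1 : (((Finset.Icc 1 N).filter (fun m => ∀ i, ∀ q ∈ P i, ¬ (m % q ∈ badRes E q))).card : ℝ) ≤
      ∑ m ∈ Finset.Icc 1 N, ∏ i, Bon (2 * R i) (P i) (am m) := by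
    rw [Finset.card_filter]
    push_cast
    apply Finset.sum_le_sum
    intro m _
    have hb : ∏ i, ∏ q ∈ P i, (1 - am m q) ≤ ∏ i, Bon (2 * R i) (P i) (am m) := by
      apply Finset.prod_le_prod
      · intro i _
        exact Finset.prod_nonneg fun q _ => by linarith [am1 m q]
      · intro i _
        exact (Bon_bounds (P i) (am m) (fun q _ => am0 m q) (fun q _ => am1 m q) (R i)).2
    refine le_trans ?_ hb
    split_ifs with h
    · rw [Finset.prod_eq_one]
      intro i _
      apply Finset.prod_eq_one
      intro q hq
      simp [ham, h i q hq]
    · exact Finset.prod_nonneg fun i _ => Finset.prod_nonneg fun q _ => by linarith [am1 m q]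
  have hdisj : ∀ e ∈ Fintype.piFinset F, ((univ : Finset (Fin t)) : Set (Fin t)).PairwiseDisjoint e := by
    intro e he i _ j _ hij
    rw [Fintype.mem_piFinset] at he
    have h1 := mem_powerset.1 (mem_filter.1 (he i)).1
    have h2 := mem_powerset.1 (mem_filter.1 (he j)).1
    exact Finset.disjoint_of_subset_left h1 (Finset.disjoint_of_subset_right h2 (hdis i j hij))
  have expand : ∀ b : ℕ → ℝ, ∏ i, ∑ e ∈ F i, ∏ q ∈ e, b q =
      ∑ e ∈ Fintype.piFinset F, ∏ q ∈ univ.biUnion e, b q := by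
    intro b
    rw [Finset.prod_univ_sum]
    apply Finset.sum_congr rfl
    intro e he
    rw [Finset.prod_biUnion (hdisj e he)]
  have hprime : ∀ e ∈ Fintype.piFinset F, ∀ q ∈ univ.biUnion e, q.Prime := by
    intro e he q hq
    rw [mem_biUnion] at hq
    obtain ⟨i, _, hq⟩ := hq
    rw [Fintype.mem_piFinset] at he
    exact hP i q (mem_powerset.1 (mem_filter.1 (he i)).1 hq)
  have step2 : ∑ m ∈ Finset.Icc 1 N, ∏ i, Bon (2 * R i) (P i) (am m) ≤
     ∑ e ∈ Fintype.piFinset F, ((N : ℝ) * ∏ q ∈ univ.biUnion e, (-((nu E q : ℝ) / q)) +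
        ∏ q ∈ univ.biUnion e, (nu E q : ℝ)) := by
    have : ∀ m, ∏ i, Bon (2 * R i) (P i) (am m) = ∑ e ∈ Fintype.piFinset F, ∏ q ∈ univ.biUnion e, (-(am m q)) := by
      intro m; exact expand (fun q => -(am m q))
    simp_rw [this]
    rw [Finset.sum_comm]
    apply Finset.sum_le_sum
    intro e he
    set u := univ.biUnion e with hu
    have hc := crt_count u (badRes E) (hprime e he) (by
      intro q _ a ha; simp only [badRes, mem_filter, mem_range] at ha; exact ha.1) N
    have hsum : ∑ m ∈ Finset.Icc 1 N, ∏ q ∈ u, (-(am m q)) =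
       (-1) ^ u.card * (((Finset.Icc 1 N).filter (fun m => ∀ q ∈ u, m % q ∈ badRes E q)).card : ℝ) := by
      rw [Finset.card_filter]
      push_cast
      rw [Finset.mul_sum]
      apply Finset.sum_congr rfl
      intro m _
      rw [Finset.prod_neg, Finset.prod_boole]
    rw [hsum, Finset.prod_neg]
    have e1 : ∏ q ∈ u, ((badRes E q).card : ℝ) / q = ∏ q ∈ u, (nu E q : ℝ) / q :=
      Finset.prod_congr rfl fun q hq => by rw [badRes_card E (hprime e he q hq).pos]
    have e2 : ∏ q ∈ u, ((badRes E q).card : ℝ) = ∏ q ∈ u, (nu E q : ℝ) :=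
      Finset.prod_congr rfl fun q hq => by rw [badRes_card E (hprime e he q hq).pos]
    rw [e1, e2, abs_le] at hc
    rcases neg_one_pow_eq_or ℝ u.card with h | h <;> rw [h] <;> linarith [hc.1, hc.2]
  refine step1.trans (step2.trans ?_)
  rw [Finset.sum_add_distrib, ← Finset.mul_sum, ← expand, ← expand]
  apply add_le_add
  · exact le_rfl
  · apply Finset.prod_le_prod
    · intro i _
      exact Finset.sum_nonneg fun e _ => Finset.prod_nonneg fun q _ => by positivity
    · intro i _
      exact trunc_le (P i) _ (fun q _ => by positivity) (2 * R i)



lemma mertens_upper (z : ℕ) (hz : 2 ≤ z) :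
    ∏ q ∈ PR (z + 1), (1 - 1 / (q : ℝ)) ≤ 1 / Real.log z := by
  have hlog : 0 < Real.log z := Real.log_pos (by exact_mod_cast hz)
  let f : ℕ →* ℝ :=
    { toFun := fun n => (n : ℝ)⁻¹, map_one' := by simp,
      map_mul' := by intro a b; push_cast; rw [mul_inv] }
  have hf : ∀ {p : ℕ}, p.Prime → ‖f p‖ < 1 := by
    intro p hp
    change ‖(p : ℝ)⁻¹‖ < 1
    rw [norm_inv, Real.norm_natCast]
    exact inv_lt_one_of_one_lt₀ (by exact_mod_cast hp.one_lt)
  obtain ⟨hs, hh⟩ := EulerProduct.summable_and_hasSum_smoothNumbers_prod_primesBelow_geometric (f := f) hf (z + 1)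
  have h1 : Real.log z ≤ ∏ q ∈ PR (z + 1), (1 - 1 / (q : ℝ))⁻¹ := by
    have e : ∏ q ∈ PR (z + 1), (1 - 1 / (q : ℝ))⁻¹ = ∏ p ∈ (z + 1).primesBelow, (1 - f p)⁻¹ := by
      apply Finset.prod_congr
      · rfl
      · intro q _; simp [f]
    rw [e]
    have hsub : ∀ m ∈ Finset.Icc 1 z, m ∈ (z + 1).smoothNumbers := by
      intro m hm
      rw [mem_Icc] at hm
      exact Nat.mem_smoothNumbers_of_lt (by omega) (by omega)
    calc Real.log z ≤ Real.log (z + 1) := Real.log_le_log (by positivity) (by linarith)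
      _ ≤ (harmonic z : ℝ) := by exact_mod_cast log_add_one_le_harmonic z
      _ = ∑ m ∈ Finset.Icc 1 z, (m : ℝ)⁻¹ := by rw [harmonic_eq_sum_Icc]; push_cast; rfl
      _ = ∑ m ∈ (Finset.Icc 1 z).attach.map ⟨fun m => (⟨m.1, hsub m.1 m.2⟩ : (z + 1).smoothNumbers),
            fun a b h => Subtype.ext (congrArg (fun t : (z + 1).smoothNumbers => (t : ℕ)) h)⟩, f m := by
          rw [Finset.sum_map, ← Finset.sum_attach]; rfl
      _ ≤ _ := sum_le_hasSum _ (fun i _ => by change (0:ℝ) ≤ ((i : ℕ) : ℝ)⁻¹; positivity) hh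
  rw [Finset.prod_inv_distrib] at h1
  have hpos : 0 < ∏ q ∈ PR (z + 1), (1 - 1 / (q : ℝ)) :=
    Finset.prod_pos fun q hq => one_sub_inv_pos (mem_PR.1 hq).2.two_le
  rw [le_inv_comm₀ hlog hpos] at h1
  simpa using h1

lemma geo_sum (t : ℕ) : ∑ i ∈ range t, (i + 1) * 2 ^ (t - i) + 2 * t + 4 = 4 * 2 ^ t := by
  induction t with
  | zero => simp
  | succ t ih =>
    rw [Finset.sum_range_succ]
    have : ∑ i ∈ range t, (i + 1) * 2 ^ (t + 1 - i) = 2 * ∑ i ∈ range t, (i + 1) * 2 ^ (t - i) := by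
      rw [Finset.mul_sum]
      apply Finset.sum_congr rfl
      intro i hi
      rw [mem_range] at hi
      rw [show t + 1 - i = (t - i) + 1 by omega, pow_succ]; ring
    rw [this, show t + 1 - t = 1 by omega, pow_succ]
    omega

/-- union of blocks -/
def bigP (a t : ℕ) : Finset ℕ := (Finset.Ioc (2 ^ 2 ^ a) (2 ^ 2 ^ (a + t))).filter Nat.Prime

lemma sieve_main (E : Finset ℕ) (a t N : ℕ) (ha : 2 * E.card ≤ 2 ^ 2 ^ a) (hn : 1 ≤ E.card) :
    (((Finset.Icc 1 N).filter (fun m => ∀ q ∈ bigP a t, ¬ (m % q ∈ badRes E q))).card : ℝ) ≤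
      N * (Real.exp (Real.exp (12 * E.card)) * ∏ q ∈ bigP a t, (1 - (nu E q : ℝ) / q)) +
      ((2 : ℝ) ^ 2 ^ (a + t)) ^ 16 := by
  classical
  set n := E.card with hndef
  set P : Fin t → Finset ℕ := fun i => blk (a + (t - 1 - (i : ℕ))) with hP
  have hdis : ∀ i j, i ≠ j → Disjoint (P i) (P j) := by
    intro i j hij
    rw [Finset.disjoint_left]
    intro q h1 h2
    simp only [hP, blk, mem_filter, mem_Ioc] at h1 h2
    have hij' : (i : ℕ) ≠ j := fun h => hij (Fin.ext h)
    have hi := i.2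
    have hj := j.2
    rcases lt_or_gt_of_ne hij' with h | h
    · have := Nat.pow_le_pow_right (show 0 < 2 by norm_num)
        (Nat.pow_le_pow_right (show 0 < 2 by norm_num) (show a + (t - 1 - (j:ℕ)) + 1 ≤ a + (t - 1 - (i:ℕ)) by omega))
      omega
    · have := Nat.pow_le_pow_right (show 0 < 2 by norm_num)
        (Nat.pow_le_pow_right (show 0 < 2 by norm_num) (show a + (t - 1 - (i:ℕ)) + 1 ≤ a + (t - 1 - (j:ℕ)) by omega))
      omega
  have hun : (univ : Finset (Fin t)).biUnion P = bigP a t := by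
    ext q
    simp only [mem_biUnion, mem_univ, true_and, hP, blk, bigP, mem_filter, mem_Ioc]
    constructor
    · rintro ⟨i, ⟨h1, h2⟩, hq⟩
      have hi := i.2
      have e1 := Nat.pow_le_pow_right (show 0 < 2 by norm_num)
        (Nat.pow_le_pow_right (show 0 < 2 by norm_num) (show a ≤ a + (t - 1 - (i:ℕ)) by omega))
      have e2 := Nat.pow_le_pow_right (show 0 < 2 by norm_num)
        (Nat.pow_le_pow_right (show 0 < 2 by norm_num) (show a + (t - 1 - (i:ℕ)) + 1 ≤ a + t by omega))
      exact ⟨⟨by omega, by omega⟩, hq⟩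
    · rintro ⟨⟨h1, h2⟩, hq⟩
      have hex : ∃ c, q ≤ 2 ^ 2 ^ (a + c) := ⟨t, h2⟩
      have hs := Nat.find_spec hex
      have hmin := fun c => Nat.find_min hex (m := c)
      have hle : Nat.find hex ≤ t := Nat.find_min' hex h2
      set c := Nat.find hex
      have hc0 : c ≠ 0 := by
        intro h; rw [h] at hs; simp only [add_zero] at hs; omega
      have hm := hmin (c - 1) (by omega)
      refine ⟨⟨t - c, by omega⟩, ⟨?_, ?_⟩, hq⟩
      · simp only; rw [show t - 1 - (t - c) = c - 1 by omega]; omega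
      · simp only; rw [show a + (t - 1 - (t - c)) + 1 = a + c by omega]; exact hs
  have hPprime : ∀ i, ∀ q ∈ P i, q.Prime := by
    intro i q hq; simp only [hP, blk, mem_filter] at hq; exact hq.2
  have hPlarge : ∀ i, ∀ q ∈ P i, 2 * n ≤ q := by
    intro i q hq; simp only [hP, blk, mem_filter, mem_Ioc] at hq
    have e1 := Nat.pow_le_pow_right (show 0 < 2 by norm_num)
        (Nat.pow_le_pow_right (show 0 < 2 by norm_num) (show a ≤ a + (t - 1 - (i:ℕ)) by omega))
    omega
  have h := sieve_blocks E t N P (fun i => (i : ℕ) + 1) hPprime hdis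
  have hfil : ((Finset.Icc 1 N).filter (fun m => ∀ q ∈ bigP a t, ¬ (m % q ∈ badRes E q))) =
     ((Finset.Icc 1 N).filter (fun m => ∀ i, ∀ q ∈ P i, ¬ (m % q ∈ badRes E q))) := by
    apply Finset.filter_congr
    intro m _
    rw [← hun]
    simp only [mem_biUnion, mem_univ, true_and, forall_exists_index]
    exact ⟨fun h i q hq => h q i hq, fun h q i hq => h i q hq⟩
  rw [hfil]
  refine h.trans ?_
  have hnuq0 : ∀ i, ∀ q ∈ P i, 0 ≤ (nu E q : ℝ) / q := fun i q _ => by positivity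
  have hnuqn : ∀ i, ∀ q ∈ P i, (nu E q : ℝ) / q ≤ n * (1 / q) := by
    intro i q hq
    have : (nu E q : ℝ) ≤ n := by exact_mod_cast nu_le_card E q
    rw [mul_one_div]; gcongr
  have hnuq1 : ∀ i, ∀ q ∈ P i, (nu E q : ℝ) / q ≤ 1 / 2 := by
    intro i q hq
    have h1 : (nu E q : ℝ) ≤ n := by exact_mod_cast nu_le_card E q
    have h2 : (2 * n : ℝ) ≤ q := by exact_mod_cast hPlarge i q hq
    have h3 : (0 : ℝ) < q := by exact_mod_cast (hPprime i q hq).pos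
    rw [div_le_iff₀ h3]; linarith
  have hL : ∀ i, ∑ q ∈ P i, (nu E q : ℝ) / q ≤ 4 * n := by
    intro i
    calc _ ≤ ∑ q ∈ P i, (n : ℝ) * (1 / q) := Finset.sum_le_sum (hnuqn i)
      _ = n * ∑ q ∈ P i, (1 / (q : ℝ)) := by rw [Finset.mul_sum]
      _ ≤ n * 4 := by gcongr; exact blk_sum _
      _ = _ := by ring
  have hL0 : ∀ i, 0 ≤ ∑ q ∈ P i, (nu E q : ℝ) / q := fun i => Finset.sum_nonneg (hnuq0 i)
  have hV : ∀ i, Real.exp (-(8 * n)) ≤ ∏ q ∈ P i, (1 - (nu E q : ℝ) / q) := by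
    intro i
    calc Real.exp (-(8 * n)) ≤ Real.exp (∑ q ∈ P i, -(2 * ((nu E q : ℝ) / q))) := by
          apply Real.exp_le_exp.2
          rw [Finset.sum_neg_distrib, ← Finset.mul_sum]; linarith [hL i]
      _ = ∏ q ∈ P i, Real.exp (-(2 * ((nu E q : ℝ) / q))) := Real.exp_sum _ _
      _ ≤ _ := by
          apply Finset.prod_le_prod
          · intros; positivity
          · intro q hq
            set v := (nu E q : ℝ) / q
            have v0 : 0 ≤ v := hnuq0 i q hq
            have v1 : v ≤ 1 / 2 := hnuq1 i q hq
            rw [Real.exp_neg]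
            rw [inv_le_comm₀ (Real.exp_pos _) (by linarith)]
            have : 2 * v + 1 ≤ Real.exp (2 * v) := Real.add_one_le_exp _
            refine le_trans ?_ this
            rw [inv_le_iff_one_le_mul₀ (by linarith)]
            nlinarith
  have hBon : ∀ i : Fin t, Bon (2 * ((i : ℕ) + 1)) (P i) (fun q => (nu E q : ℝ) / q) ≤
      (∏ q ∈ P i, (1 - (nu E q : ℝ) / q)) *
        Real.exp (Real.exp (8 * n) * ((4 * n) ^ (2 * (i : ℕ) + 3) / ((2 * (i : ℕ) + 3).factorial : ℝ))) := by
    intro i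
    have h1 := Bon_even_le (P i) (fun q => (nu E q : ℝ) / q) (hnuq0 i)
      (fun q hq => by linarith [hnuq1 i q hq]) ((i : ℕ) + 1)
    set V := ∏ q ∈ P i, (1 - (nu E q : ℝ) / q)
    have hV0 : 0 < V := lt_of_lt_of_le (Real.exp_pos _) (hV i)
    set W := ((4 : ℝ) * n) ^ (2 * (i : ℕ) + 3) / ((2 * (i : ℕ) + 3).factorial : ℝ)
    have hW : (∑ q ∈ P i, (nu E q : ℝ) / q) ^ (2 * ((i : ℕ) + 1) + 1) / ((2 * ((i : ℕ) + 1) + 1).factorial : ℝ) ≤ W := by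
      rw [show 2 * ((i : ℕ) + 1) + 1 = 2 * (i : ℕ) + 3 by ring]
      have := hL i
      have := hL0 i
      simp only [W]
      gcongr
      
    have hW0 : 0 ≤ W := by positivity
    have h3 : 1 ≤ V * Real.exp (8 * n) := by
      calc (1 : ℝ) = Real.exp (-(8 * n)) * Real.exp (8 * n) := by rw [← Real.exp_add]; simp
        _ ≤ _ := by gcongr; exact hV i
    calc _ ≤ V + W := by linarith
      _ ≤ V + (V * Real.exp (8 * n)) * W := by nlinarith
      _ = V * (Real.exp (8 * n) * W + 1) := by ring
      _ ≤ _ := by gcongr; exact Real.add_one_le_exp _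
  apply add_le_add
  · gcongr
    calc ∏ i : Fin t, Bon (2 * ((i : ℕ) + 1)) (P i) (fun q => (nu E q : ℝ) / q)
        ≤ ∏ i : Fin t, ((∏ q ∈ P i, (1 - (nu E q : ℝ) / q)) *
        Real.exp (Real.exp (8 * n) * ((4 * n) ^ (2 * (i : ℕ) + 3) / ((2 * (i : ℕ) + 3).factorial : ℝ)))) := by
          apply Finset.prod_le_prod
          · intro i _
            refine le_trans ?_ (Bon_bounds (P i) (fun q => (nu E q : ℝ) / q) (hnuq0 i)
              (fun q hq => by linarith [hnuq1 i q hq]) ((i : ℕ) + 1)).2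
            exact (lt_of_lt_of_le (Real.exp_pos _) (hV i)).le
          · intro i _; exact hBon i
      _ = (∏ q ∈ bigP a t, (1 - (nu E q : ℝ) / q)) *
           Real.exp (Real.exp (8 * n) * ∑ i : Fin t, ((4 * n) ^ (2 * (i : ℕ) + 3) / ((2 * (i : ℕ) + 3).factorial : ℝ))) := by
          rw [Finset.prod_mul_distrib, ← hun, Finset.prod_biUnion (fun i _ j _ hij => hdis i j hij),
            Finset.mul_sum, Real.exp_sum]
      _ ≤ (∏ q ∈ bigP a t, (1 - (nu E q : ℝ) / q)) * Real.exp (Real.exp (12 * n)) := by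
          have hV0 : 0 ≤ ∏ q ∈ bigP a t, (1 - (nu E q : ℝ) / q) := by
            rw [← hun, Finset.prod_biUnion (fun i _ j _ hij => hdis i j hij)]
            exact Finset.prod_nonneg fun i _ => (lt_of_lt_of_le (Real.exp_pos _) (hV i)).le
          have hsum : ∑ i : Fin t, (((4 : ℝ) * n) ^ (2 * (i : ℕ) + 3) / ((2 * (i : ℕ) + 3).factorial : ℝ)) ≤ Real.exp (4 * n) := by
            calc _ = ∑ i ∈ range t, (((4 : ℝ) * n) ^ (2 * i + 3) / ((2 * i + 3).factorial : ℝ)) :=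
                  Fin.sum_univ_eq_sum_range (fun i => (((4 : ℝ) * n) ^ (2 * i + 3) / ((2 * i + 3).factorial : ℝ))) t
              _ = ∑ j ∈ (range t).image (fun i => 2 * i + 3), (((4 : ℝ) * n) ^ j / (j.factorial : ℝ)) := by
                  rw [Finset.sum_image]
                  intro i _ j _ h; simp only at h; omega
              _ ≤ ∑ j ∈ range (2 * t + 3), (((4 : ℝ) * n) ^ j / (j.factorial : ℝ)) := by
                  apply Finset.sum_le_sum_of_subset_of_nonneg
                  · intro j hj
                    simp only [mem_image, mem_range] at *
                    omega
                  · intros; positivity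
              _ ≤ _ := Real.sum_le_exp_of_nonneg (by positivity) _
          gcongr
          calc _ ≤ Real.exp (8 * n) * Real.exp (4 * n) := by gcongr
            _ = _ := by rw [← Real.exp_add]; ring_nf
      _ = _ := by ring
  · calc ∏ i : Fin t, (1 + ∑ q ∈ P i, (nu E q : ℝ)) ^ (2 * ((i : ℕ) + 1))
        ≤ ∏ i : Fin t, (2 : ℝ) ^ (4 * 2 ^ a * (((i : ℕ) + 1) * 2 ^ (t - (i : ℕ)))) := by
          apply Finset.prod_le_prod
          · intros; positivity
          · intro i _
            have hi := i.2
            set z : ℕ := 2 ^ 2 ^ (a + (t - (i : ℕ))) with hz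
            have hz1 : 2 ^ 2 ^ a ≤ z := Nat.pow_le_pow_right (by norm_num)
              (Nat.pow_le_pow_right (by norm_num) (by omega))
            have hcard : (P i).card ≤ z := by
              calc (P i).card ≤ (Finset.Ioc (2 ^ 2 ^ (a + (t - 1 - (i : ℕ)))) (2 ^ 2 ^ (a + (t - 1 - (i : ℕ)) + 1))).card :=
                    card_filter_le _ _
                _ ≤ 2 ^ 2 ^ (a + (t - 1 - (i : ℕ)) + 1) := by rw [Nat.card_Ioc]; exact Nat.sub_le _ _
                _ = z := by rw [hz, show a + (t - 1 - (i : ℕ)) + 1 = a + (t - (i : ℕ)) by omega]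
            have hs : 1 + ∑ q ∈ P i, (nu E q : ℝ) ≤ (z : ℝ) ^ 2 := by
              have : ∑ q ∈ P i, nu E q ≤ z * n := by
                calc _ ≤ ∑ q ∈ P i, n := Finset.sum_le_sum fun q _ => nu_le_card E q
                  _ = (P i).card * n := by rw [sum_const, smul_eq_mul]
                  _ ≤ _ := by gcongr
              have h2 : 1 + ∑ q ∈ P i, nu E q ≤ z ^ 2 := by nlinarith
              exact_mod_cast h2
            calc (1 + ∑ q ∈ P i, (nu E q : ℝ)) ^ (2 * ((i : ℕ) + 1)) ≤ ((z : ℝ) ^ 2) ^ (2 * ((i : ℕ) + 1)) := by gcongr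
              _ = _ := by
                rw [hz]; push_cast
                rw [← pow_mul, ← pow_mul, pow_add]
                congr 1; ring
      _ = (2 : ℝ) ^ (∑ i ∈ range t, 4 * 2 ^ a * ((i + 1) * 2 ^ (t - i))) := by
          rw [Fin.prod_univ_eq_prod_range (fun i => (2 : ℝ) ^ (4 * 2 ^ a * ((i + 1) * 2 ^ (t - i)))) t,
            Finset.prod_pow_eq_pow_sum]
      _ ≤ _ := by
          rw [← pow_mul]
          apply pow_le_pow_right₀ (by norm_num)
          rw [← Finset.mul_sum, pow_add]
          have := geo_sum t
          have h3 : ∑ i ∈ range t, (i + 1) * 2 ^ (t - i) ≤ 4 * 2 ^ t := by omega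
          calc _ ≤ 4 * 2 ^ a * (4 * 2 ^ t) := by gcongr
            _ = _ := by ring



lemma sieve_V (E : Finset ℕ) (a t : ℕ) (hE : Adm E) (ha : 4 * E.card ^ 2 ≤ 2 ^ 2 ^ a) :
    ∏ q ∈ bigP a t, (1 - (nu E q : ℝ) / q) ≤
      (∏ q ∈ PR (2 ^ 2 ^ a + 1), (q : ℝ)) * (2 * singSeries E) * (1 / Real.log ((2 : ℝ) ^ 2 ^ (a + t))) ^ E.card := by
  set w := 2 ^ 2 ^ a with hw
  set z := 2 ^ 2 ^ (a + t) with hz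
  have hwz : w ≤ z := Nat.pow_le_pow_right (by norm_num) (Nat.pow_le_pow_right (by norm_num) (by omega))
  have hz2 : 2 ≤ z := by
    calc 2 = 2 ^ 1 := by norm_num
      _ ≤ z := Nat.pow_le_pow_right (by norm_num) (Nat.one_le_two_pow)
  have hb : bigP a t = PR (z + 1) \ PR (w + 1) := by
    ext q; simp only [bigP, mem_filter, mem_Ioc, mem_sdiff, mem_PR]
    constructor
    · rintro ⟨⟨h1, h2⟩, h3⟩; exact ⟨⟨by omega, h3⟩, fun h => by omega⟩
    · rintro ⟨⟨h1, h3⟩, h4⟩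
      refine ⟨⟨?_, by omega⟩, h3⟩
      by_contra h
      exact h4 ⟨by omega, h3⟩
  have h1 := Finset.prod_sdiff (f := fun q : ℕ => (1 - (nu E q : ℝ) / q)) (PR_mono (show w + 1 ≤ z + 1 by omega))
  rw [← hb] at h1
  have h2 : ∏ q ∈ PR (z + 1), (1 - (nu E q : ℝ) / q) = pp E (z + 1) * (∏ q ∈ PR (z + 1), (1 - 1 / (q : ℝ))) ^ E.card := by
    unfold pp
    rw [← Finset.prod_pow, ← Finset.prod_mul_distrib]
    apply Finset.prod_congr rfl
    intro q hq
    have := one_sub_inv_pos (mem_PR.1 hq).2.two_le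
    unfold fac
    field_simp
  have h3 : ∏ q ∈ PR (w + 1), (1 / (q : ℝ)) ≤ ∏ q ∈ PR (w + 1), (1 - (nu E q : ℝ) / q) := by
    apply Finset.prod_le_prod
    · intros; positivity
    · intro q hq
      have hp := (mem_PR.1 hq).2
      have h := hE q hp
      have hq0 : (0 : ℝ) < q := by exact_mod_cast hp.pos
      rw [le_sub_iff_add_le, ← add_div, div_le_one hq0]
      have : nu E q + 1 ≤ q := h
      have : (nu E q : ℝ) + 1 ≤ q := by exact_mod_cast this
      linarith
  have hWpos : 0 < ∏ q ∈ PR (w + 1), (q : ℝ) := Finset.prod_pos fun q hq => by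
    exact_mod_cast (mem_PR.1 hq).2.pos
  have hVn : 0 ≤ ∏ q ∈ bigP a t, (1 - (nu E q : ℝ) / q) := by
    apply Finset.prod_nonneg
    intro q hq
    have hp : q.Prime := (mem_filter.1 hq).2
    have hq0 : (0 : ℝ) < q := by exact_mod_cast hp.pos
    rw [sub_nonneg, div_le_one hq0]
    exact_mod_cast nu_le E hp.pos
  have h4 := mertens_upper z hz2
  have h4' : 0 ≤ ∏ q ∈ PR (z + 1), (1 - 1 / (q : ℝ)) := Finset.prod_nonneg fun q hq =>
    (one_sub_inv_pos (mem_PR.1 hq).2.two_le).le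
  have h5 := pp_le_two_singSeries E (K := z + 1) (by omega) (by omega)
  have h6 : pp E (z + 1) * (∏ q ∈ PR (z + 1), (1 - 1 / (q : ℝ))) ^ E.card ≤
      (2 * singSeries E) * (1 / Real.log z) ^ E.card := by
    have := pp_nonneg E (z + 1)
    gcongr
    linarith
  have hzc : (z : ℝ) = (2 : ℝ) ^ 2 ^ (a + t) := by rw [hz]; push_cast; rfl
  rw [← hzc, mul_assoc]
  rw [Finset.prod_div_distrib, Finset.prod_const_one] at h3
  calc ∏ q ∈ bigP a t, (1 - (nu E q : ℝ) / q)
      = (∏ q ∈ PR (w + 1), (q : ℝ)) * ((∏ q ∈ bigP a t, (1 - (nu E q : ℝ) / q)) * (1 / ∏ q ∈ PR (w + 1), (q : ℝ))) := by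
        field_simp
    _ ≤ (∏ q ∈ PR (w + 1), (q : ℝ)) * ((∏ q ∈ bigP a t, (1 - (nu E q : ℝ) / q)) * ∏ q ∈ PR (w + 1), (1 - (nu E q : ℝ) / q)) := by
        gcongr
    _ ≤ _ := by rw [h1, h2]; gcongr

set_option maxHeartbeats 1000000 in
lemma primePi_sieve (n : ℕ) (hn : 1 ≤ n) : ∃ C : ℝ, 0 < C ∧ ∃ X : ℝ, ∀ x : ℝ, X ≤ x → ∀ E : Finset ℕ,
    E.card = n → (primePi x E : ℝ) ≤ C * singSeries E * x / (Real.log x) ^ n + n := by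
  set a := 4 * n ^ 2 + 2 with ha
  have haw : a ≤ 2 ^ 2 ^ a := by
    have h1 : a < 2 ^ a := Nat.lt_two_pow_self
    have h2 : 2 ^ a < 2 ^ 2 ^ a := Nat.lt_two_pow_self
    omega
  set W : ℝ := ∏ q ∈ PR (2 ^ 2 ^ a + 1), (q : ℝ) with hW
  have hWpos : 0 < W := Finset.prod_pos fun q hq => by
    exact_mod_cast (mem_PR.1 hq).2.pos
  set C0 : ℝ := Real.exp (Real.exp (12 * n)) * (W * 2 * 64 ^ n) with hC0
  have hC0p : 0 < C0 := by positivity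
  refine ⟨C0 + 1, by positivity, ?_⟩
  have hlo : ∀ᶠ x : ℝ in Filter.atTop, 2 * Real.log x ^ n ≤ cS n * Real.sqrt x := by
    have h1 : (fun x : ℝ => Real.log x ^ (n : ℝ)) =o[Filter.atTop] (fun x : ℝ => x ^ (1 / 2 : ℝ)) :=
      isLittleO_log_rpow_rpow_atTop n (by norm_num)
    have h2 := h1.bound (c := cS n / 2) (by have := cS_pos n; positivity)
    filter_upwards [h2, Filter.eventually_ge_atTop 1] with x hx hx1
    rw [Real.rpow_natCast, Real.norm_of_nonneg (pow_nonneg (Real.log_nonneg hx1) _),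
      Real.norm_of_nonneg (by positivity), ← Real.sqrt_eq_rpow] at hx
    linarith
  have hlarge : ∀ᶠ x : ℝ in Filter.atTop, (2 : ℝ) ^ a * (32 * Real.log 2) ≤ Real.log x :=
    Real.tendsto_log_atTop.eventually_ge_atTop _
  obtain ⟨X, hX⟩ := Filter.eventually_atTop.1 (hlo.and (hlarge.and (Filter.eventually_ge_atTop 1)))
  refine ⟨X, fun x hx E hE => ?_⟩
  obtain ⟨h1, h2, h3⟩ := hX x hx
  have hl2 : 0 < Real.log 2 := Real.log_pos (by norm_num)
  have hL : 0 < Real.log x := lt_of_lt_of_le (by positivity) h2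
  by_cases hadm : Adm E
  swap
  · have := primePi_le_of_not_adm hadm x
    rw [hE] at this
    have h' : (primePi x E : ℝ) ≤ n := by exact_mod_cast this
    have : 0 ≤ (C0 + 1) * singSeries E * x / Real.log x ^ n := by
      have := singSeries_nonneg E
      positivity
    linarith
  have hs : (2 : ℝ) ^ a ≤ Real.log x / (32 * Real.log 2) := by
    rw [le_div_iff₀ (by positivity)]; exact h2
  obtain ⟨b, hb1, hb2⟩ := exists_nat_pow_near (x := Real.log x / (32 * Real.log 2)) (y := (2 : ℝ))
    (le_trans (one_le_pow₀ (by norm_num)) hs) (by norm_num)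
  have hab : a ≤ b := by
    have : (2 : ℝ) ^ a < 2 ^ (b + 1) := lt_of_le_of_lt hs hb2
    have := (pow_lt_pow_iff_right₀ (by norm_num : (1 : ℝ) < 2)).1 this
    omega
  obtain ⟨t, rfl⟩ := Nat.exists_eq_add_of_le hab
  set z : ℝ := (2 : ℝ) ^ 2 ^ (a + t) with hz
  have hlogz : Real.log z = 2 ^ (a + t) * Real.log 2 := by
    rw [hz, Real.log_pow]; push_cast; rfl
  have hz1 : Real.log z ≤ Real.log x / 32 := by
    rw [hlogz]; rw [le_div_iff₀ (by positivity)] at hb1; linarith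
  have hz2 : Real.log x / 64 ≤ Real.log z := by
    rw [hlogz]; rw [div_lt_iff₀ (by positivity), pow_succ] at hb2; nlinarith
  have hzpos : 0 < z := by positivity
  have hz16 : z ^ 16 ≤ Real.sqrt x := by
    rw [← Real.log_le_log_iff (by positivity) (by positivity), Real.log_pow, Real.log_sqrt (by linarith)]
    push_cast; linarith
  have hzone : 1 ≤ z := one_le_pow₀ (by norm_num)
  have hzle : z ≤ Real.sqrt x := le_trans (le_self_pow₀ hzone (by norm_num)) hz16
  set N := ⌊x⌋₊ with hN
  have hNx : (N : ℝ) ≤ x := Nat.floor_le (by linarith)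
  have hn2 : n ≤ n ^ 2 := Nat.le_self_pow (by norm_num) n
  have hcount : primePi x E ≤ 2 ^ 2 ^ (a + t) + ((Finset.Icc 1 N).filter (fun m => ∀ q ∈ bigP a t, ¬ (m % q ∈ badRes E q))).card := by
    unfold primePi
    calc _ ≤ ((Finset.Icc 1 (2 ^ 2 ^ (a + t)) ∪ (Finset.Icc 1 N).filter (fun m => ∀ q ∈ bigP a t, ¬ (m % q ∈ badRes E q)) : Finset ℕ) : Set ℕ).ncard := by
          apply Set.ncard_le_ncard _ (Finset.finite_toSet _)
          rintro m ⟨hm1, hm2, hm3⟩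
          simp only [coe_union, Set.mem_union, mem_coe, mem_Icc, mem_filter]
          by_cases hmz : m ≤ 2 ^ 2 ^ (a + t)
          · exact Or.inl ⟨hm1, hmz⟩
          · refine Or.inr ⟨⟨hm1, Nat.le_floor hm2⟩, ?_⟩
            intro q hq hbad
            rw [bigP, mem_filter, mem_Ioc] at hq
            obtain ⟨d, hd, hdvd⟩ := (mem_badRes hq.2.pos m).1 hbad
            have := (Nat.prime_dvd_prime_iff_eq hq.2 (hm3 d hd)).1 hdvd
            omega
      _ ≤ _ := by
          rw [Set.ncard_coe_finset]
          refine (card_union_le _ _).trans ?_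
          simp
  have hmain := sieve_main E a t N (by rw [hE]; omega) (by omega)
  have hV := sieve_V E a t hadm (by rw [hE]; omega)
  rw [hE] at hmain hV
  have hcount' : (primePi x E : ℝ) ≤ z + ((Finset.Icc 1 N).filter (fun m => ∀ q ∈ bigP a t, ¬ (m % q ∈ badRes E q))).card := by
    rw [hz]; exact_mod_cast hcount
  have hS := singSeries_ge_of_adm hadm
  rw [hE] at hS
  have hSn := singSeries_nonneg E
  have hV2 : ∏ q ∈ bigP a t, (1 - (nu E q : ℝ) / q) ≤ W * (2 * singSeries E) * (64 / Real.log x) ^ n := by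
    refine hV.trans ?_
    have hzlp : 0 < Real.log z := lt_of_lt_of_le (by positivity) hz2
    rw [← hz]
    have hq : 1 / Real.log z ≤ 64 / Real.log x := by
      rw [div_le_div_iff₀ hzlp hL]
      linarith
    have hq0 : 0 ≤ 1 / Real.log z := by positivity
    exact mul_le_mul_of_nonneg_left (pow_le_pow_left₀ hq0 hq n) (by positivity)
  have hfin1 : (N : ℝ) * (Real.exp (Real.exp (12 * n)) * ∏ q ∈ bigP a t, (1 - (nu E q : ℝ) / q)) ≤ C0 * singSeries E * x / Real.log x ^ n := by
    calc _ ≤ x * (Real.exp (Real.exp (12 * n)) * (W * (2 * singSeries E) * (64 / Real.log x) ^ n)) := by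
          apply mul_le_mul hNx _ _ (by linarith)
          · gcongr
          · apply mul_nonneg (Real.exp_nonneg _)
            apply Finset.prod_nonneg
            intro q hq
            have hp : q.Prime := (mem_filter.1 hq).2
            have hq0 : (0 : ℝ) < q := by exact_mod_cast hp.pos
            rw [sub_nonneg, div_le_one hq0]
            exact_mod_cast nu_le E hp.pos
      _ = _ := by rw [hC0, div_pow]; ring
  have hfin2 : 2 * Real.sqrt x ≤ singSeries E * x / Real.log x ^ n := by
    rw [le_div_iff₀ (by positivity)]
    have hsq : Real.sqrt x * Real.sqrt x = x := Real.mul_self_sqrt (by linarith)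
    calc 2 * Real.sqrt x * Real.log x ^ n = Real.sqrt x * (2 * Real.log x ^ n) := by ring
      _ ≤ Real.sqrt x * (cS n * Real.sqrt x) := by gcongr
      _ = cS n * x := by rw [mul_left_comm, hsq]
      _ ≤ _ := by gcongr
  have : (C0 + 1) * singSeries E * x / Real.log x ^ n = C0 * singSeries E * x / Real.log x ^ n + singSeries E * x / Real.log x ^ n := by ring
  rw [this]
  have : (0 : ℝ) ≤ n := by positivity
  linarith



/-- comparison factor -/
noncomputable def cf (E : Finset ℕ) (j q : ℕ) : ℝ :=
  if j % q ∈ E.image (· % q) then 1 / ((q : ℝ) - 1) else 0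

lemma cf_nonneg (E : Finset ℕ) (j : ℕ) {q : ℕ} (hq : 2 ≤ q) : 0 ≤ cf E j q := by
  have : (2 : ℝ) ≤ q := by exact_mod_cast hq
  unfold cf; split_ifs
  · apply div_nonneg <;> linarith
  · exact le_rfl

lemma fac_insert_of_mem {E : Finset ℕ} {j q : ℕ} (hq : 2 ≤ q) (hj : j ∉ E)
    (h : j % q ∈ E.image (· % q)) : fac (insert j E) q = (1 + 1 / ((q : ℝ) - 1)) * fac E q := by
  have h2 : (2 : ℝ) ≤ q := by exact_mod_cast hq
  have h1 : (q : ℝ) - 1 ≠ 0 := by linarith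
  have h0 : (q : ℝ) ≠ 0 := by linarith
  have h3 := (one_sub_inv_pos hq).ne'
  unfold fac
  rw [nu_insert_of_mem h, card_insert_of_notMem hj, pow_succ, mul_inv]
  have : (1 - 1 / (q : ℝ))⁻¹ = 1 + 1 / ((q : ℝ) - 1) := by
    rw [inv_eq_iff_eq_inv, show (1 : ℝ) + 1 / ((q : ℝ) - 1) = q / (q - 1) by field_simp; ring]
    field_simp
  rw [this]; ring

lemma fac_insert_of_not_mem {E : Finset ℕ} {j q : ℕ} (hq : 2 ≤ q) (hj : j ∉ E)
    (h : j % q ∉ E.image (· % q)) :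
    fac (insert j E) q = ((1 - 1 / (q : ℝ)) ^ E.card)⁻¹ * ((q - nu E q - 1) / (q - 1)) := by
  have h2 : (2 : ℝ) ≤ q := by exact_mod_cast hq
  have h1 : (q : ℝ) - 1 ≠ 0 := by linarith
  have h0 : (q : ℝ) ≠ 0 := by linarith
  have h3 := (one_sub_inv_pos hq).ne'
  unfold fac
  rw [nu_insert_of_not_mem h, card_insert_of_notMem hj, pow_succ, mul_inv, mul_assoc]
  congr 1
  have : (1 - 1 / (q : ℝ))⁻¹ = q / ((q : ℝ) - 1) := by
    rw [inv_eq_iff_eq_inv]; field_simp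
  rw [this]; push_cast; field_simp; ring

lemma fac_insert_le {E : Finset ℕ} {j q : ℕ} (hq : 2 ≤ q) (hj : j ∉ E) :
    fac (insert j E) q ≤ (1 + cf E j q) * fac E q := by
  have h2 : (2 : ℝ) ≤ q := by exact_mod_cast hq
  unfold cf
  split_ifs with h
  · rw [fac_insert_of_mem hq hj h]
  · rw [fac_insert_of_not_mem hq hj h, add_zero, one_mul]
    unfold fac
    have := one_sub_inv_pos hq
    gcongr
    rw [div_le_iff₀ (by linarith)]
    have : (1 - (nu E q : ℝ) / q) * (q - 1) = q - nu E q - 1 + nu E q / q := by field_simp; ring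
    rw [this]
    have : (0 : ℝ) ≤ nu E q / q := by positivity
    linarith

lemma card_big_primes (T : Finset ℕ) (y M : ℕ) (hT : ∀ q ∈ T, q.Prime ∧ y ≤ q ∧ q ∣ M) (hM : M ≠ 0) :
    y ^ T.card ≤ M := by
  calc y ^ T.card = ∏ q ∈ T, y := by rw [prod_const]
    _ ≤ ∏ q ∈ T, q := Finset.prod_le_prod' fun q hq => (hT q hq).2.1
    _ ≤ M := Nat.le_of_dvd (Nat.pos_of_ne_zero hM)
        (Finset.prod_primes_dvd M (fun q hq => (hT q hq).1.prime) (fun q hq => (hT q hq).2.2))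

lemma card_big_primes_log (T : Finset ℕ) (y M : ℕ) (hT : ∀ q ∈ T, q.Prime ∧ y ≤ q ∧ q ∣ M) (hM : M ≠ 0)
    (hy : 3 ≤ y) : (T.card : ℝ) ≤ Real.log M := by
  have h1 := card_big_primes T y M hT hM
  have h2 : ((y : ℝ)) ^ T.card ≤ M := by exact_mod_cast h1
  have hy' : (3 : ℝ) ≤ y := by exact_mod_cast hy
  have h3 := Real.log_le_log (by positivity) h2
  rw [Real.log_pow] at h3
  have h4 : 1 ≤ Real.log y := by
    rw [Real.le_log_iff_exp_le (by linarith)]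
    have := Real.exp_one_lt_d9
    linarith
  nlinarith [(Nat.cast_nonneg T.card : (0 : ℝ) ≤ T.card)]

/-- integer distance -/
def dst (a b : ℕ) : ℕ := (a - b) + (b - a)

lemma dst_ne_zero {a b : ℕ} (h : a ≠ b) : dst a b ≠ 0 := by unfold dst; omega

lemma dvd_dst {a b q : ℕ} (h : a % q = b % q) : q ∣ dst a b := by
  unfold dst
  rcases le_total a b with hab | hab
  · rw [Nat.sub_eq_zero_of_le hab, zero_add]
    exact (Nat.modEq_iff_dvd' hab).1 h
  · rw [Nat.sub_eq_zero_of_le hab, add_zero]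
    exact (Nat.modEq_iff_dvd' hab).1 h.symm

lemma singSeries_insert_le {E : Finset ℕ} {j y : ℕ} (hj : j ∉ E) (hy : 3 ≤ y) (A B : ℝ)
    (hB : ∀ e ∈ E, (e : ℝ) ≤ B) (hjB : (j : ℝ) ≤ B) (hA : Real.log B ≤ A * y) :
    singSeries (insert j E) ≤ (∏ q ∈ PR (y + 1), (1 + cf E j q)) * Real.exp (2 * E.card * A) * singSeries E := by
  apply singSeries_le_of_pp _ _ _ (y + 1)
  intro z hz
  have hy0 : (0 : ℝ) < y := by exact_mod_cast (by omega : 0 < y)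
  have h1 : pp (insert j E) z ≤ (∏ q ∈ PR z, (1 + cf E j q)) * pp E z := by
    unfold pp
    rw [← Finset.prod_mul_distrib]
    exact Finset.prod_le_prod (fun q hq => fac_nonneg _ (mem_PR.1 hq).2.two_le)
      (fun q hq => fac_insert_le (mem_PR.1 hq).2.two_le hj)
  refine h1.trans ?_
  apply mul_le_mul_of_nonneg_right _ (pp_nonneg E z)
  rw [← Finset.prod_sdiff (PR_mono hz), mul_comm]
  apply mul_le_mul_of_nonneg_left
  · set T := (PR z \ PR (y + 1)).filter (fun q => j % q ∈ E.image (· % q)) with hT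
    have hmem : ∀ q ∈ T, q.Prime ∧ y ≤ q ∧ q ∣ ∏ e ∈ E, dst j e := by
      intro q hq
      simp only [hT, mem_filter, mem_sdiff, mem_PR, mem_image] at hq
      obtain ⟨⟨⟨h1, h2⟩, h3⟩, e, he, hee⟩ := hq
      refine ⟨h2, ?_, ?_⟩
      · by_contra h; exact h3 ⟨by omega, h2⟩
      · exact (dvd_dst hee.symm).trans (Finset.dvd_prod_of_mem _ he)
    have hne : ∏ e ∈ E, dst j e ≠ 0 := Finset.prod_ne_zero_iff.2 fun e he =>
      dst_ne_zero (fun h => hj (h ▸ he))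
    have hc := card_big_primes_log T y _ hmem hne hy
    have hM : Real.log ((∏ e ∈ E, dst j e : ℕ) : ℝ) ≤ E.card * Real.log B := by
      rw [← Real.log_pow]
      apply Real.log_le_log (by exact_mod_cast Nat.pos_of_ne_zero hne)
      push_cast
      rw [← Finset.prod_const]
      apply Finset.prod_le_prod
      · intros; positivity
      · intro e he
        have : dst j e ≤ max j e := by unfold dst; omega
        have : (dst j e : ℝ) ≤ max (j : ℝ) e := by exact_mod_cast this
        exact this.trans (max_le hjB (hB e he))
    have hT2 : (T.card : ℝ) ≤ E.card * A * y := by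
      calc (T.card : ℝ) ≤ _ := hc
        _ ≤ _ := hM
        _ ≤ E.card * (A * y) := by gcongr
        _ = _ := by ring
    calc ∏ q ∈ PR z \ PR (y + 1), (1 + cf E j q) = ∏ q ∈ T, (1 + cf E j q) := by
          rw [hT, Finset.prod_filter]
          apply Finset.prod_congr rfl
          intro q hq
          split_ifs with h
          · rfl
          · simp [cf, h]
      _ ≤ ∏ q ∈ T, Real.exp (2 / y) := by
          apply Finset.prod_le_prod
          · intro q hq
            linarith [cf_nonneg E j (hmem q hq).1.two_le]
          · intro q hq
            have hyq : (y : ℝ) ≤ q := by exact_mod_cast (hmem q hq).2.1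
            have : cf E j q ≤ 2 / y := by
              unfold cf
              have h2 : (2 : ℝ) ≤ q := by exact_mod_cast (hmem q hq).1.two_le
              split_ifs
              · rw [div_le_div_iff₀ (by linarith) hy0]; linarith
              · positivity
            linarith [Real.add_one_le_exp (2 / (y : ℝ))]
      _ = Real.exp (T.card * (2 / y)) := by rw [prod_const, ← Real.exp_nat_mul]
      _ ≤ _ := by
          apply Real.exp_le_exp.2
          calc (T.card : ℝ) * (2 / y) ≤ E.card * A * y * (2 / y) := by gcongr
            _ = _ := by field_simp
  · exact Finset.prod_nonneg fun q hq => by linarith [cf_nonneg E j (mem_PR.1 hq).2.two_le]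

lemma sum_inv_mul_le (z : ℕ) : ∑ q ∈ PR z, 1 / ((q : ℝ) * (q - 1)) ≤ 1 := by
  have h1 : ∀ n : ℕ, ∑ q ∈ Finset.Ico 2 (n + 2), 1 / ((q : ℝ) * (q - 1)) = 1 - 1 / (n + 1) := by
    intro n
    induction n with
    | zero => simp
    | succ n ih =>
      rw [show n + 1 + 2 = (n + 2) + 1 by ring, Finset.sum_Ico_succ_top (by omega), ih]
      push_cast
      have : (n : ℝ) + 1 ≠ 0 := by positivity
      have : (n : ℝ) + 2 ≠ 0 := by positivity
      rw [show (n : ℝ) + 2 - 1 = n + 1 by ring, show (n : ℝ) + 1 + 1 = n + 2 by ring]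
      field_simp; ring
  calc _ ≤ ∑ q ∈ Finset.Ico 2 (z + 2), 1 / ((q : ℝ) * (q - 1)) := by
        apply Finset.sum_le_sum_of_subset_of_nonneg
        · intro q hq
          rw [mem_PR] at hq
          rw [mem_Ico]; exact ⟨hq.2.two_le, by omega⟩
        · intro q hq _
          rw [mem_Ico] at hq
          have : (2 : ℝ) ≤ q := by exact_mod_cast hq.1
          apply div_nonneg (by norm_num)
          apply mul_nonneg <;> linarith
    _ ≤ 1 := by
        rw [h1]
        have : (0 : ℝ) ≤ 1 / (z + 1) := by positivity
        linarith

lemma sum_cf_le (E : Finset ℕ) (y H : ℕ) (hH : 4 ^ y ≤ H) :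
    ∑ j ∈ Finset.Icc 1 H, ∏ q ∈ PR (y + 1), (1 + cf E j q) ≤ 2 * H * Real.exp E.card := by
  simp_rw [Finset.prod_one_add]
  rw [Finset.sum_comm]
  have key : ∀ u ∈ (PR (y + 1)).powerset, ∑ j ∈ Finset.Icc 1 H, ∏ q ∈ u, cf E j q ≤
      2 * H * ∏ q ∈ u, (E.card : ℝ) / (q * (q - 1)) := by
    intro u hu
    rw [mem_powerset] at hu
    have hup : ∀ q ∈ u, q.Prime := fun q hq => (mem_PR.1 (hu hq)).2
    have e1 : ∑ j ∈ Finset.Icc 1 H, ∏ q ∈ u, cf E j q =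
        (∏ q ∈ u, 1 / ((q : ℝ) - 1)) * ((Finset.Icc 1 H).filter (fun m => ∀ q ∈ u, m % q ∈ E.image (· % q))).card := by
      rw [mul_comm, ← nsmul_eq_mul, ← Finset.sum_const, Finset.sum_filter]
      apply Finset.sum_congr rfl
      intro j _
      split_ifs with h
      · exact Finset.prod_congr rfl fun q hq => by unfold cf; rw [if_pos (h q hq)]
      · push Not at h
        obtain ⟨q, hq, hqq⟩ := h
        exact Finset.prod_eq_zero hq (by unfold cf; rw [if_neg hqq])
    have e2 := crt_count u (fun q => E.image (· % q)) hup
      (by intro q hq a ha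
          rw [mem_image] at ha
          obtain ⟨e, _, rfl⟩ := ha
          exact Nat.mod_lt _ (hup q hq).pos) H
    rw [abs_le] at e2
    have e3 : ∏ q ∈ u, ((E.image (· % q)).card : ℝ) ≤ H * ∏ q ∈ u, ((E.image (· % q)).card : ℝ) / q := by
      have : (∏ q ∈ u, (q : ℝ)) ≤ H := by
        have h1 : ∏ q ∈ u, q ≤ primorial y := by
          apply Finset.prod_le_prod_of_subset_of_one_le' hu
          intro q hq _
          exact (mem_PR.1 hq).2.pos
        have := h1.trans ((primorial_le_four_pow y).trans hH)
        rw [← Nat.cast_prod]; exact Nat.cast_le.2 this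
      calc ∏ q ∈ u, ((E.image (· % q)).card : ℝ) = (∏ q ∈ u, (q : ℝ)) * ∏ q ∈ u, ((E.image (· % q)).card : ℝ) / q := by
            rw [← Finset.prod_mul_distrib]
            apply Finset.prod_congr rfl
            intro q hq
            have : (q : ℝ) ≠ 0 := by exact_mod_cast (hup q hq).ne_zero
            field_simp
        _ ≤ _ := mul_le_mul_of_nonneg_right this (Finset.prod_nonneg fun q _ => by positivity)
    have e4 : (((Finset.Icc 1 H).filter (fun m => ∀ q ∈ u, m % q ∈ E.image (· % q))).card : ℝ) ≤
        2 * H * ∏ q ∈ u, ((E.image (· % q)).card : ℝ) / q := by linarith [e2.2]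
    rw [e1]
    have hnn : ∀ q ∈ u, 0 ≤ 1 / ((q : ℝ) - 1) := by
      intro q hq
      have : (2 : ℝ) ≤ q := by exact_mod_cast (hup q hq).two_le
      apply div_nonneg <;> linarith
    calc _ ≤ (∏ q ∈ u, 1 / ((q : ℝ) - 1)) * (2 * H * ∏ q ∈ u, ((E.image (· % q)).card : ℝ) / q) := by
          apply mul_le_mul_of_nonneg_left e4 (Finset.prod_nonneg hnn)
      _ = 2 * H * ∏ q ∈ u, (1 / ((q : ℝ) - 1)) * (((E.image (· % q)).card : ℝ) / q) := by
          rw [Finset.prod_mul_distrib]; ring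
      _ ≤ _ := by
          apply mul_le_mul_of_nonneg_left _ (by positivity)
          apply Finset.prod_le_prod
          · intro q hq
            exact mul_nonneg (hnn q hq) (by positivity)
          · intro q hq
            have h2 : (2 : ℝ) ≤ q := by exact_mod_cast (hup q hq).two_le
            rw [div_mul_div_comm, one_mul, mul_comm (q : ℝ)]
            apply div_le_div_of_nonneg_right _ (mul_nonneg (by linarith) (by linarith))
            exact_mod_cast card_image_le
  refine (Finset.sum_le_sum key).trans ?_
  rw [← Finset.mul_sum, ← Finset.prod_one_add]
  apply mul_le_mul_of_nonneg_left _ (by positivity)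
  calc ∏ q ∈ PR (y + 1), (1 + (E.card : ℝ) / (q * (q - 1))) ≤ ∏ q ∈ PR (y + 1), Real.exp ((E.card : ℝ) / (q * (q - 1))) := by
        apply Finset.prod_le_prod
        · intro q hq
          have h2 : (2 : ℝ) ≤ q := by exact_mod_cast (mem_PR.1 hq).2.two_le
          have : 0 ≤ (E.card : ℝ) / (q * (q - 1)) := div_nonneg (by positivity) (mul_nonneg (by linarith) (by linarith))
          linarith
        · intro q hq
          linarith [Real.add_one_le_exp ((E.card : ℝ) / (q * (q - 1)))]
    _ = Real.exp (E.card * ∑ q ∈ PR (y + 1), 1 / ((q : ℝ) * (q - 1))) := by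
        rw [← Real.exp_sum, Finset.mul_sum]
        congr 1
        apply Finset.sum_congr rfl
        intro q _; ring
    _ ≤ _ := by
        apply Real.exp_le_exp.2
        have := sum_inv_mul_le (y + 1)
        calc _ ≤ (E.card : ℝ) * 1 := by gcongr
          _ = _ := mul_one _

/-- constant in the mean value upper bound -/
noncomputable def cM (n : ℕ) (A : ℝ) : ℝ := 2 * Real.exp n * Real.exp (2 * n * A)

lemma cM_pos (n : ℕ) (A : ℝ) : 0 < cM n A := by unfold cM; positivity

lemma mean_upper (E : Finset ℕ) (y H : ℕ) (hy : 3 ≤ y) (hH : 4 ^ y ≤ H) (A B : ℝ)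
    (hHB : (H : ℝ) ≤ B) (hB : ∀ e ∈ E, (e : ℝ) ≤ B) (hA : Real.log B ≤ A * y) :
    ∑ j ∈ Finset.Icc 1 H \ E, singSeries (insert j E) ≤ cM E.card A * H * singSeries E := by
  have hSn := singSeries_nonneg E
  calc ∑ j ∈ Finset.Icc 1 H \ E, singSeries (insert j E)
      ≤ ∑ j ∈ Finset.Icc 1 H \ E, (∏ q ∈ PR (y + 1), (1 + cf E j q)) * Real.exp (2 * E.card * A) * singSeries E := by
        apply Finset.sum_le_sum
        intro j hj
        rw [mem_sdiff, mem_Icc] at hj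
        exact singSeries_insert_le hj.2 hy A B hB (le_trans (by exact_mod_cast hj.1.2) hHB) hA
    _ ≤ ∑ j ∈ Finset.Icc 1 H, (∏ q ∈ PR (y + 1), (1 + cf E j q)) * Real.exp (2 * E.card * A) * singSeries E := by
        apply Finset.sum_le_sum_of_subset_of_nonneg sdiff_subset
        intro j _ _
        have : 0 ≤ ∏ q ∈ PR (y + 1), (1 + cf E j q) :=
          Finset.prod_nonneg fun q hq => by linarith [cf_nonneg E j (mem_PR.1 hq).2.two_le]
        positivity
    _ = (∑ j ∈ Finset.Icc 1 H, ∏ q ∈ PR (y + 1), (1 + cf E j q)) * Real.exp (2 * E.card * A) * singSeries E := by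
        rw [Finset.sum_mul, Finset.sum_mul]
    _ ≤ (2 * H * Real.exp E.card) * Real.exp (2 * E.card * A) * singSeries E := by
        gcongr
        exact sum_cf_le E y H hH
    _ = _ := by unfold cM; ring



lemma mean_upper_pairs (E : Finset ℕ) (y H : ℕ) (hy : 3 ≤ y) (hH : 4 ^ y ≤ H) (A B : ℝ)
    (hHB : (H : ℝ) ≤ B) (hB : ∀ e ∈ E, (e : ℝ) ≤ B) (hA : Real.log B ≤ A * y) :
    ∑ j ∈ Finset.Icc 1 H \ E, ∑ i ∈ Finset.Icc 1 H \ insert j E, singSeries (insert i (insert j E)) ≤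
      cM (E.card + 1) A * cM E.card A * H ^ 2 * singSeries E := by
  have h1 := mean_upper E y H hy hH A B hHB hB hA
  have hc := cM_pos (E.card + 1) A
  calc _ ≤ ∑ j ∈ Finset.Icc 1 H \ E, cM (E.card + 1) A * H * singSeries (insert j E) := by
        apply Finset.sum_le_sum
        intro j hj
        rw [mem_sdiff, mem_Icc] at hj
        have := mean_upper (insert j E) y H hy hH A B hHB (by
          intro e he
          rw [mem_insert] at he
          rcases he with rfl | he
          · exact le_trans (by exact_mod_cast hj.1.2) hHB
          · exact hB e he) hA
        rwa [card_insert_of_notMem hj.2] at this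
    _ = cM (E.card + 1) A * H * ∑ j ∈ Finset.Icc 1 H \ E, singSeries (insert j E) := by rw [Finset.mul_sum]
    _ ≤ cM (E.card + 1) A * H * (cM E.card A * H * singSeries E) := by gcongr
    _ = _ := by ring

lemma singSeries_insert_ge {E : Finset ℕ} {j K : ℕ} (h0 : 0 ∈ E) (hj : j ∉ E) (hK2 : 2 ≤ K)
    (hK : 16 * E.card ≤ K) (hjK : ∀ q, q.Prime → q < K → q ∣ j) :
    singSeries E ≤ 2 * singSeries (insert j E) := by
  apply singSeries_le_of_pp _ _ _ K
  intro z hz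
  have hin : ∀ q, 2 ≤ q → j % q ∈ E.image (· % q) → fac E q ≤ fac (insert j E) q := by
    intro q hq h
    rw [fac_insert_of_mem hq hj h]
    have h2 : (2 : ℝ) ≤ q := by exact_mod_cast hq
    have := fac_nonneg E hq
    have : 0 ≤ 1 / ((q : ℝ) - 1) := div_nonneg (by norm_num) (by linarith)
    nlinarith
  have hlow : pp E K ≤ pp (insert j E) K := by
    apply Finset.prod_le_prod
    · exact fun q hq => fac_nonneg _ (mem_PR.1 hq).2.two_le
    · intro q hq
      rw [mem_PR] at hq
      apply hin q hq.2.two_le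
      rw [mem_image]
      exact ⟨0, h0, by simp [Nat.mod_eq_zero_of_dvd (hjK q hq.2 hq.1)]⟩
  have hhigh : (∏ q ∈ PR z \ PR K, fac E q) * ∏ q ∈ PR z \ PR K, (1 - (4 * E.card : ℝ) / (q : ℝ) ^ 2) ≤
      ∏ q ∈ PR z \ PR K, fac (insert j E) q := by
    rw [← Finset.prod_mul_distrib]
    have hq' : ∀ q ∈ PR z \ PR K, q.Prime ∧ 16 * E.card ≤ q := by
      intro q hq
      simp only [mem_sdiff, mem_PR] at hq
      refine ⟨hq.1.2, ?_⟩
      by_contra h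
      exact hq.2 ⟨by omega, hq.1.2⟩
    have hn1 : 1 ≤ E.card := Finset.card_pos.2 ⟨0, h0⟩
    apply Finset.prod_le_prod
    · intro q hq
      obtain ⟨hp, hq16⟩ := hq' q hq
      apply mul_nonneg (fac_nonneg _ hp.two_le)
      have : (16 : ℝ) * E.card ≤ q := by exact_mod_cast hq16
      have : (1 : ℝ) ≤ E.card := by exact_mod_cast hn1
      rw [sub_nonneg, div_le_one (by nlinarith)]
      nlinarith
    · intro q hq
      obtain ⟨hp, hq16⟩ := hq' q hq
      have a1 : (16 : ℝ) * E.card ≤ q := by exact_mod_cast hq16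
      have a2 : (1 : ℝ) ≤ E.card := by exact_mod_cast hn1
      by_cases h : j % q ∈ E.image (· % q)
      · refine le_trans ?_ (hin q hp.two_le h)
        have : 0 ≤ (4 * E.card : ℝ) / (q : ℝ) ^ 2 := by positivity
        nlinarith [fac_nonneg E hp.two_le]
      · rw [fac_insert_of_not_mem hp.two_le hj h]
        unfold fac
        rw [mul_assoc]
        have := one_sub_inv_pos hp.two_le
        apply mul_le_mul_of_nonneg_left _ (by positivity)
        have a3 : (nu E q : ℝ) ≤ E.card := by exact_mod_cast nu_le_card E q
        have a4 : (0 : ℝ) ≤ nu E q := by positivity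
        generalize (nu E q : ℝ) = v at *
        generalize (E.card : ℝ) = n at *
        generalize (q : ℝ) = Q at *
        have hQ : 0 < Q := by linarith
        rw [le_div_iff₀ (by linarith)]
        have e : (1 - v / Q) * (1 - 4 * n / Q ^ 2) * (Q - 1) = ((Q - v) * (Q ^ 2 - 4 * n) * (Q - 1)) / Q ^ 3 := by
          field_simp
        rw [e, div_le_iff₀ (by positivity)]
        have b1 : v * Q ^ 2 ≤ n * Q ^ 2 := by gcongr
        have b2 : 4 * n * ((Q - v) * (Q - 1)) ≥ 4 * n * ((Q / 2) * (Q / 2)) := by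
          have : Q / 2 ≤ Q - v := by linarith
          have : Q / 2 ≤ Q - 1 := by linarith
          gcongr
          linarith
        nlinarith [b1, b2]
  have htail := tail_ge_gen (4 * E.card : ℝ) (by positivity) K z hK2 (by exact_mod_cast (by omega : 4 * (4 * E.card) ≤ K))
    (fun q => 1 - (4 * E.card : ℝ) / (q : ℝ) ^ 2) (fun q _ => le_rfl)
  have hfn : 0 ≤ ∏ q ∈ PR z \ PR K, fac E q := Finset.prod_nonneg fun q hq =>
    fac_nonneg _ (mem_PR.1 (mem_sdiff.1 hq).1).2.two_le
  rw [pp_split E hz, pp_split (insert j E) hz]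
  have h5 : (∏ q ∈ PR z \ PR K, fac E q) ≤ 2 * ∏ q ∈ PR z \ PR K, fac (insert j E) q := by nlinarith
  calc _ ≤ pp (insert j E) K * (2 * ∏ q ∈ PR z \ PR K, fac (insert j E) q) :=
        mul_le_mul hlow h5 hfn (pp_nonneg _ _)
    _ = _ := by ring

lemma nu_scale_ne {E : Finset ℕ} {p q : ℕ} (hp : p.Prime) (hq : q.Prime) (h : p ≠ q) :
    nu (E.image (p * ·)) q = nu E q := by
  unfold nu
  rw [Finset.image_image]
  have : (E.image ((fun x => x % q) ∘ fun x => p * x)) = (E.image (· % q)).image (fun r => (p * r) % q) := by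
    rw [Finset.image_image]
    apply Finset.image_congr
    intro e _
    simp [Nat.mul_mod]
  rw [this]
  apply Finset.card_image_of_injOn
  intro a ha b hb hab
  rw [coe_image] at ha hb
  obtain ⟨a', _, rfl⟩ := ha
  obtain ⟨b', _, rfl⟩ := hb
  have hc : Nat.Coprime q p := (Nat.coprime_primes hq hp).2 (Ne.symm h)
  have h1 : p * (a' % q) ≡ p * (b' % q) [MOD q] := hab
  have := Nat.ModEq.cancel_left_of_coprime hc h1
  simpa [Nat.ModEq] using this

lemma nu_scale_dvd {E : Finset ℕ} {m q : ℕ} (hE : E.Nonempty) (h : q ∣ m) :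
    nu (E.image (m * ·)) q = 1 := by
  unfold nu
  rw [Finset.image_image]
  have : (E.image ((fun x => x % q) ∘ fun x => m * x)) = {0} := by
    ext a
    simp only [mem_image, Function.comp, mem_singleton]
    constructor
    · rintro ⟨e, _, rfl⟩; exact Nat.mod_eq_zero_of_dvd (h.mul_right _)
    · rintro rfl
      obtain ⟨e, he⟩ := hE
      exact ⟨e, he, Nat.mod_eq_zero_of_dvd (h.mul_right _)⟩
  rw [this, card_singleton]

lemma card_scale {E : Finset ℕ} {p : ℕ} (hp : 0 < p) : (E.image (p * ·)).card = E.card :=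
  card_image_of_injective _ (fun _ _ h => Nat.eq_of_mul_eq_mul_left hp h)

lemma singSeries_scale {E : Finset ℕ} {p : ℕ} (hp : p.Prime) (hE : E.Nonempty) :
    singSeries E * ((p : ℝ) - 1) = singSeries (E.image (p * ·)) * ((p : ℝ) - nu E p) := by
  have hp0 : (p : ℝ) ≠ 0 := by exact_mod_cast hp.ne_zero
  refine tendsto_nhds_unique_of_eventuallyEq ((tendsto_pp E).mul_const _)
    ((tendsto_pp (E.image (p * ·))).mul_const _) ?_
  filter_upwards [Filter.eventually_gt_atTop p] with z hz
  have hm : p ∈ PR z := mem_PR.2 ⟨hz, hp⟩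
  unfold pp
  rw [← Finset.mul_prod_erase _ _ hm, ← Finset.mul_prod_erase _ _ hm]
  have h1 : ∏ q ∈ (PR z).erase p, fac (E.image (p * ·)) q = ∏ q ∈ (PR z).erase p, fac E q := by
    apply Finset.prod_congr rfl
    intro q hq
    rw [mem_erase, mem_PR] at hq
    unfold fac
    rw [nu_scale_ne hp hq.2.2 (Ne.symm hq.1), card_scale hp.pos]
  rw [h1]
  unfold fac
  rw [card_scale hp.pos, nu_scale_dvd hE dvd_rfl]
  push_cast
  field_simp

lemma singSeries_scale_one {E : Finset ℕ} {p : ℕ} (hp : p.Prime) (hE : E.Nonempty) (h : nu E p = 1) :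
    singSeries (E.image (p * ·)) = singSeries E := by
  have := singSeries_scale hp hE
  rw [h] at this
  push_cast at this
  have h2 : (2 : ℝ) ≤ p := by exact_mod_cast hp.two_le
  exact (mul_right_cancel₀ (by linarith) this).symm

lemma singSeries_scale_ge {E : Finset ℕ} {p : ℕ} (hp : p.Prime) (hE : E.Nonempty) :
    singSeries E ≤ singSeries (E.image (p * ·)) := by
  have := singSeries_scale hp hE
  have h2 : (2 : ℝ) ≤ p := by exact_mod_cast hp.two_le
  have h3 : (1 : ℝ) ≤ nu E p := by exact_mod_cast nu_pos hE p
  have := singSeries_nonneg (E.image (p * ·))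
  nlinarith

lemma singSeries_scale_two {E : Finset ℕ} {p : ℕ} (hp : p.Prime) (hE : E.Nonempty) (h : 2 ≤ nu E p) :
    singSeries E * ((p : ℝ) + 1) ≤ singSeries (E.image (p * ·)) * p := by
  have := singSeries_scale hp hE
  have h2 : (2 : ℝ) ≤ p := by exact_mod_cast hp.two_le
  have h3 : (2 : ℝ) ≤ nu E p := by exact_mod_cast h
  have h4 := singSeries_nonneg (E.image (p * ·))
  have h5 := singSeries_nonneg E
  have h6 : singSeries E * ((p : ℝ) - 1) ≤ singSeries (E.image (p * ·)) * ((p : ℝ) - 2) := by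
    rw [this]; gcongr
  have h7 : singSeries E * ((p : ℝ) + 1) * (p - 1) ≤ singSeries (E.image (p * ·)) * p * (p - 1) := by
    nlinarith
  exact le_of_mul_le_mul_right h7 (by linarith)



/-- comparison tuple -/
def starE (k y : ℕ) : Finset ℕ := (range (k + 1)).image (primorial y * ·)

lemma star_card (k y : ℕ) : (starE k y).card = k + 1 := by
  unfold starE; rw [card_scale (primorial_pos y), card_range]

lemma dvd_primorial' {q y : ℕ} (hq : q ∈ PR (y + 1)) : q ∣ primorial y :=
  Finset.dvd_prod_of_mem (fun q => q) hq

lemma fac_star_low {k y q : ℕ} (hq : q ∈ PR (y + 1)) :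
    fac (starE k y) q = ((1 - 1 / (q : ℝ)) ^ (k + 1))⁻¹ * (1 - 1 / (q : ℝ)) := by
  unfold fac
  rw [star_card]
  unfold starE
  rw [nu_scale_dvd ⟨0, by simp⟩ (dvd_primorial' hq)]
  simp

lemma star_ge {k y : ℕ} (hk : 1 ≤ k) (hy2 : 2 ≤ y) (hy : 4 * (k + 1) ^ 2 ≤ y + 1) :
    Real.log y ≤ 2 * singSeries (starE k y) := by
  have h1 := pp_le_two_singSeries (starE k y) (K := y + 1) (by omega) (by rw [star_card]; exact hy)
  refine le_trans ?_ h1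
  have h2 := mertens_upper y hy2
  have hlog : 0 < Real.log y := Real.log_pos (by exact_mod_cast hy2)
  have hpos : 0 < ∏ q ∈ PR (y + 1), (1 - 1 / (q : ℝ)) :=
    Finset.prod_pos fun q hq => one_sub_inv_pos (mem_PR.1 hq).2.two_le
  have h3 : Real.log y ≤ ∏ q ∈ PR (y + 1), (1 - 1 / (q : ℝ))⁻¹ := by
    rw [Finset.prod_inv_distrib, le_inv_comm₀ hlog hpos]
    simpa using h2
  refine h3.trans ?_
  apply Finset.prod_le_prod
  · intro q hq
    exact (inv_pos.2 (one_sub_inv_pos (mem_PR.1 hq).2.two_le)).le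
  · intro q hq
    rw [fac_star_low hq]
    have h4 := one_sub_inv_pos (mem_PR.1 hq).2.two_le
    have h5 := one_le_inv_pow (mem_PR.1 hq).2.two_le (k - 1)
    obtain ⟨l, rfl⟩ := Nat.exists_eq_add_of_le hk
    have : ((1 - 1 / (q : ℝ)) ^ (1 + l + 1))⁻¹ * (1 - 1 / (q : ℝ)) = ((1 - 1 / (q : ℝ)) ^ l)⁻¹ * (1 - 1 / (q : ℝ))⁻¹ := by
      field_simp; ring
    rw [this]
    rw [show 1 + l - 1 = l by omega] at h5
    have : 0 < (1 - 1 / (q : ℝ))⁻¹ := by positivity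
    nlinarith

lemma star_cmp {k y : ℕ} (hk : 1 ≤ k) (hy : 4 * (k + 1) ≤ y) (E : Finset ℕ) (hE : E.card = k + 1)
    (B : ℝ) (hB1 : 1 ≤ B) (hB : ∀ e ∈ E, (e : ℝ) ≤ B) :
    singSeries E ≤ Real.exp (2 * k * (k + 1) ^ 2 * Real.log B / (y * Real.log y)) * singSeries (starE k y) := by
  have hne : E.Nonempty := card_pos.1 (by omega)
  have hy0 : (0 : ℝ) < y := by exact_mod_cast (by omega : 0 < y)
  have hly : 0 < Real.log y := Real.log_pos (by exact_mod_cast (by omega : 1 < y))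
  apply singSeries_le_of_pp _ _ _ (y + 1)
  intro z hz
  set Δ := ∏ a ∈ E, ∏ b ∈ E.erase a, dst a b with hΔ
  have hΔ0 : Δ ≠ 0 := Finset.prod_ne_zero_iff.2 fun a _ => Finset.prod_ne_zero_iff.2 fun b hb =>
    dst_ne_zero (Ne.symm (ne_of_mem_erase hb))
  have hΔB : (Δ : ℝ) ≤ B ^ ((k + 1) ^ 2) := by
    rw [hΔ]; push_cast
    calc ∏ a ∈ E, ∏ b ∈ E.erase a, (dst a b : ℝ) ≤ ∏ a ∈ E, B ^ (k + 1) := by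
          apply Finset.prod_le_prod
          · intro a _; exact Finset.prod_nonneg fun b _ => by positivity
          · intro a ha
            calc ∏ b ∈ E.erase a, (dst a b : ℝ) ≤ ∏ b ∈ E.erase a, B := by
                  apply Finset.prod_le_prod
                  · intros; positivity
                  · intro b hb
                    have : dst a b ≤ max a b := by unfold dst; omega
                    have : (dst a b : ℝ) ≤ max (a : ℝ) b := by exact_mod_cast this
                    exact this.trans (max_le (hB a ha) (hB b (mem_of_mem_erase hb)))
              _ = B ^ (E.erase a).card := by rw [prod_const]
              _ ≤ _ := pow_le_pow_right₀ hB1 (by rw [card_erase_of_mem ha]; omega)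
      _ = _ := by rw [prod_const, hE, ← pow_mul, sq]
  set T := (PR z \ PR (y + 1)).filter (fun q => q ∣ Δ) with hT
  have hTm : ∀ q ∈ T, q.Prime ∧ y ≤ q ∧ q ∣ Δ := by
    intro q hq
    simp only [hT, mem_filter, mem_sdiff, mem_PR] at hq
    refine ⟨hq.1.1.2, ?_, hq.2⟩
    by_contra h; exact hq.1.2 ⟨by omega, hq.1.1.2⟩
  have hTc : (T.card : ℝ) * Real.log y ≤ (k + 1) ^ 2 * Real.log B := by
    have h1 : ((y : ℝ)) ^ T.card ≤ Δ := by exact_mod_cast card_big_primes T y Δ hTm hΔ0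
    have h2 := Real.log_le_log (by positivity) (h1.trans hΔB)
    rw [Real.log_pow, Real.log_pow] at h2
    exact_mod_cast h2
  have hnu1 : ∀ q, (1 : ℝ) ≤ nu E q := fun q => by exact_mod_cast nu_pos hne q
  have hcmp : ∀ q ∈ PR z, fac E q ≤ (if q ∈ T then Real.exp (2 * k / y) else 1) * fac (starE k y) q := by
    intro q hq
    have hp := (mem_PR.1 hq).2
    have hpos := one_sub_inv_pos hp.two_le
    have hq0 : (0 : ℝ) < q := by exact_mod_cast hp.pos
    have hup : fac E q ≤ ((1 - 1 / (q : ℝ)) ^ (k + 1))⁻¹ * (1 - 1 / (q : ℝ)) := by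
      unfold fac; rw [hE]
      gcongr
      exact hnu1 q
    by_cases hqy : q ∈ PR (y + 1)
    · have : q ∉ T := by simp [hT, hqy]
      rw [if_neg this, one_mul, fac_star_low hqy]
      exact hup
    · have hlow : ((1 - 1 / (q : ℝ)) ^ (k + 1))⁻¹ * (1 - ((k + 1 : ℕ) : ℝ) / (q : ℝ)) ≤ fac (starE k y) q := by
        unfold fac
        have := nu_le_card (starE k y) q
        rw [star_card] at this ⊢
        gcongr
      have hyq : y ≤ q := by
        by_contra h; exact hqy (mem_PR.2 ⟨by omega, hp⟩)
      by_cases hqT : q ∈ T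
      · rw [if_pos hqT]
        calc fac E q ≤ _ := hup
          _ ≤ ((1 - 1 / (q : ℝ)) ^ (k + 1))⁻¹ * (Real.exp (2 * k / y) * (1 - ((k + 1 : ℕ) : ℝ) / (q : ℝ))) := by
              apply mul_le_mul_of_nonneg_left _ (by positivity)
              have a1 : (4 : ℝ) * (k + 1) ≤ y := by exact_mod_cast hy
              have a2 : (y : ℝ) ≤ q := by exact_mod_cast hyq
              have a3 : 1 + 2 * (k : ℝ) / q ≤ Real.exp (2 * k / y) := by
                have := Real.add_one_le_exp (2 * (k : ℝ) / y)
                have : 2 * (k : ℝ) / q ≤ 2 * k / y := by gcongr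
                linarith
              have a4 : (0 : ℝ) ≤ 1 - ((k + 1 : ℕ) : ℝ) / (q : ℝ) := by
                push_cast
                have : (0 : ℝ) ≤ k := by positivity
                rw [sub_nonneg, div_le_one hq0]; linarith
              refine le_trans ?_ (mul_le_mul_of_nonneg_right a3 a4)
              push_cast
              have e1 : (1 + 2 * (k : ℝ) / q) * (1 - (k + 1) / q) - (1 - 1 / q) = k * (q - 2 * (k + 1)) / q ^ 2 := by
                field_simp; ring
              have : 0 ≤ k * ((q : ℝ) - 2 * (k + 1)) / q ^ 2 := by
                have : (0 : ℝ) ≤ k := by positivity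
                apply div_nonneg _ (by positivity)
                apply mul_nonneg this; linarith
              linarith
          _ = Real.exp (2 * k / y) * (((1 - 1 / (q : ℝ)) ^ (k + 1))⁻¹ * (1 - ((k + 1 : ℕ) : ℝ) / (q : ℝ))) := by ring
          _ ≤ _ := by gcongr
      · rw [if_neg hqT, one_mul]
        have hnd : ¬ q ∣ Δ := fun h => hqT (by simp only [hT, mem_filter, mem_sdiff]; exact ⟨⟨hq, hqy⟩, h⟩)
        have hnu : nu E q = k + 1 := by
          rw [← hE]
          unfold nu
          apply card_image_of_injOn
          intro a ha b hb hab
          by_contra hne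
          apply hnd
          exact (dvd_dst hab).trans ((Finset.dvd_prod_of_mem (fun b => dst a b) (mem_erase.2 ⟨Ne.symm hne, hb⟩)).trans
            (Finset.dvd_prod_of_mem (fun a => ∏ b ∈ E.erase a, dst a b) ha))
        refine le_trans (le_of_eq ?_) hlow
        unfold fac; rw [hE, hnu]
  calc pp E z ≤ ∏ q ∈ PR z, (if q ∈ T then Real.exp (2 * k / y) else 1) * fac (starE k y) q :=
        Finset.prod_le_prod (fun q hq => fac_nonneg _ (mem_PR.1 hq).2.two_le) hcmp
    _ = (∏ q ∈ PR z, (if q ∈ T then Real.exp (2 * k / y) else 1)) * pp (starE k y) z := by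
        rw [Finset.prod_mul_distrib]; rfl
    _ ≤ _ := by
        apply mul_le_mul_of_nonneg_right _ (pp_nonneg _ _)
        rw [← Finset.prod_filter, prod_const, ← Real.exp_nat_mul]
        apply Real.exp_le_exp.2
        have : (PR z).filter (fun q => q ∈ T) = T := by
          ext q; simp only [hT, mem_filter, mem_sdiff]; tauto
        rw [this]
        calc (T.card : ℝ) * (2 * k / y) = (T.card * Real.log y) * (2 * k) / (y * Real.log y) := by field_simp
          _ ≤ ((k + 1) ^ 2 * Real.log B) * (2 * k) / (y * Real.log y) := by gcongr
          _ = _ := by ring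



/-- the prime tuples as a finset -/
noncomputable def PT (x : ℝ) (E : Finset ℕ) : Finset ℕ :=
  (Finset.Icc 1 ⌊x⌋₊).filter (fun m => ∀ d ∈ E, Nat.Prime (m + d))

lemma primePi_eq {x : ℝ} (hx : 0 ≤ x) (E : Finset ℕ) : primePi x E = (PT x E).card := by
  unfold primePi PT
  rw [← Set.ncard_coe_finset]
  congr 1
  ext m
  simp only [Set.mem_ofPred_eq, coe_filter, mem_Icc, Nat.le_floor_iff hx]
  constructor
  · rintro ⟨a, b, c⟩; exact ⟨⟨a, b⟩, c⟩
  · rintro ⟨⟨a, b⟩, c⟩; exact ⟨a, b, c⟩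

/-- gaps positions -/
def gapJ (D : Finset ℕ) : Finset ℕ := range (D.sup id) \ insert 0 D

/-- consecutive tuples -/
noncomputable def CT (x : ℝ) (D : Finset ℕ) : Finset ℕ :=
  (PT x (insert 0 D)).filter (fun m => m + D.sup id ≤ ⌊x⌋₊ ∧ ∀ j ∈ gapJ D, ¬ Nat.Prime (m + j))

lemma mem_CT {x : ℝ} {D : Finset ℕ} {m : ℕ} : m ∈ CT x D ↔
    (∀ d ∈ insert 0 D, Nat.Prime (m + d)) ∧ m + D.sup id ≤ ⌊x⌋₊ ∧ ∀ j ∈ gapJ D, ¬ Nat.Prime (m + j) := by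
  unfold CT PT
  rw [mem_filter, mem_filter, mem_Icc]
  constructor
  · rintro ⟨⟨_, a⟩, b⟩; exact ⟨a, b⟩
  · rintro ⟨a, b⟩
    have : m.Prime := by simpa using a 0 (mem_insert_self _ _)
    exact ⟨⟨⟨this.pos, by omega⟩, a⟩, b⟩

lemma CT_between {x : ℝ} {D : Finset ℕ} {m r : ℕ} (hm : m ∈ CT x D) (hr : r.Prime) (h1 : m < r)
    (h2 : r ≤ m + D.sup id) (hD : D.Nonempty) : r - m ∈ D := by
  rw [mem_CT] at hm
  by_contra h
  rcases lt_or_eq_of_le h2 with h2 | h2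
  · apply hm.2.2 (r - m)
    · unfold gapJ
      rw [mem_sdiff, mem_range, mem_insert]
      exact ⟨by omega, by rintro (h' | h'); omega; exact h h'⟩
    · rwa [Nat.add_sub_cancel' h1.le]
  · apply h
    obtain ⟨d, hd, hdd⟩ := Finset.exists_mem_eq_sup D hD id
    rw [h2, hdd]; simpa using hd

lemma Ncham_eq {x : ℝ} (hx : 0 ≤ x) {D : Finset ℕ} (hD : D.Nonempty) (h0 : ∀ d ∈ D, 0 < d) :
    Ncham x D = (CT x D).card := by
  unfold Ncham
  have hmono : StrictMono (Nat.nth Nat.Prime) := Nat.nth_strictMono Nat.infinite_setOfPred_prime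
  have hP : ∀ n, (Nat.nth Nat.Prime n).Prime := Nat.prime_nth_prime
  have hsurj : ∀ r : ℕ, r.Prime → ∃ l, Nat.nth Nat.Prime l = r := fun r hr => ⟨_, Nat.nth_count hr⟩
  rw [← Set.ncard_coe_finset (CT x D), ← Set.ncard_image_of_injective _ hmono.injective]
  congr 1
  ext m
  simp only [Set.mem_image, Set.mem_ofPred_eq, mem_coe]
  set k := D.card with hk
  have hk1 : 1 ≤ k := card_pos.2 hD
  constructor
  · rintro ⟨n, ⟨hn1, hn2⟩, rfl⟩
    rw [mem_CT]
    have hsup : D.sup id = Nat.nth Nat.Prime (n + k) - Nat.nth Nat.Prime n := by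
      apply le_antisymm
      · apply Finset.sup_le
        intro d hd
        rw [← hn2, mem_image] at hd
        obtain ⟨i, hi, rfl⟩ := hd
        rw [mem_range] at hi
        have := hmono.monotone (show n + i + 1 ≤ n + k by omega)
        simp only [id]
        omega
      · have : Nat.nth Nat.Prime (n + k) - Nat.nth Nat.Prime n ∈ D := by
          rw [← hn2, mem_image]
          exact ⟨k - 1, by rw [mem_range]; omega, by rw [show n + (k - 1) + 1 = n + k by omega]⟩
        exact Finset.le_sup (f := id) this
    have hlt : Nat.nth Nat.Prime n < Nat.nth Nat.Prime (n + k) := hmono (by omega)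
    refine ⟨?_, ?_, ?_⟩
    · intro d hd
      rw [mem_insert] at hd
      rcases hd with rfl | hd
      · exact hP n
      · rw [← hn2, mem_image] at hd
        obtain ⟨i, hi, rfl⟩ := hd
        have := hmono (show n < n + i + 1 by omega)
        rw [Nat.add_sub_cancel' this.le]
        exact hP _
    · rw [hsup, Nat.add_sub_cancel' hlt.le]
      exact Nat.le_floor hn1
    · intro j hj hprime
      unfold gapJ at hj
      rw [mem_sdiff, mem_range, mem_insert, hsup] at hj
      obtain ⟨l, hl⟩ := hsurj _ hprime
      have h1 : n < l := hmono.lt_iff_lt.1 (by rw [hl]; omega)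
      have h2 : l < n + k := hmono.lt_iff_lt.1 (by rw [hl]; omega)
      apply hj.2
      right
      rw [← hn2, mem_image]
      refine ⟨l - n - 1, by rw [mem_range]; omega, ?_⟩
      rw [show n + (l - n - 1) + 1 = l by omega, hl]; omega
  · intro hm
    have hm' := mem_CT.1 hm
    have hmp : m.Prime := by simpa using hm'.1 0 (mem_insert_self _ _)
    obtain ⟨n, rfl⟩ := hsurj m hmp
    refine ⟨n, ?_, rfl⟩
    have hinj : Function.Injective (fun i => Nat.nth Nat.Prime (n + i + 1) - Nat.nth Nat.Prime n) := by
      intro a b hab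
      simp only at hab
      have ha := hmono (show n < n + a + 1 by omega)
      have hb := hmono (show n < n + b + 1 by omega)
      have := hmono.injective (show Nat.nth Nat.Prime (n + a + 1) = Nat.nth Nat.Prime (n + b + 1) by omega)
      omega
    have hsub : D ⊆ (Finset.range k).image (fun i => Nat.nth Nat.Prime (n + i + 1) - Nat.nth Nat.Prime n) := by
      intro d hd
      obtain ⟨l, hl⟩ := hsurj _ (hm'.1 d (mem_insert_of_mem hd))
      have hd0 := h0 d hd
      have h1 : n < l := hmono.lt_iff_lt.1 (by rw [hl]; omega)
      have hdle : d ≤ D.sup id := Finset.le_sup (f := id) hd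
      by_cases h2 : l ≤ n + k
      · rw [mem_image]
        refine ⟨l - n - 1, by rw [mem_range]; omega, ?_⟩
        rw [show n + (l - n - 1) + 1 = l by omega, hl]; omega
      · exfalso
        have : (Finset.range k).image (fun i => Nat.nth Nat.Prime (n + i + 1) - Nat.nth Nat.Prime n) ⊆ D.erase d := by
          intro e he
          rw [mem_image] at he
          obtain ⟨i, hi, rfl⟩ := he
          rw [mem_range] at hi
          have h3 := hmono (show n + i + 1 < l by omega)
          have h4 := hmono (show n < n + i + 1 by omega)
          rw [hl] at h3
          rw [mem_erase]
          exact ⟨by omega, CT_between hm (hP _) h4 (by omega) hD⟩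
        have h5 := card_le_card this
        rw [card_image_of_injective _ hinj, card_range, card_erase_of_mem hd] at h5
        omega
    have heq := Finset.eq_of_subset_of_card_le hsub (by rw [card_image_of_injective _ hinj, card_range])
    refine ⟨?_, heq.symm⟩
    have hmem : Nat.nth Nat.Prime (n + k) - Nat.nth Nat.Prime n ∈ D := by
      rw [heq, mem_image]
      exact ⟨k - 1, by rw [mem_range]; omega, by rw [show n + (k - 1) + 1 = n + k by omega]⟩
    have h6 : Nat.nth Nat.Prime (n + k) - Nat.nth Nat.Prime n ≤ D.sup id := Finset.le_sup (f := id) hmem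
    have h7 : Nat.nth Nat.Prime (n + k) ≤ ⌊x⌋₊ := by omega
    exact (Nat.le_floor_iff hx).1 h7

/-- lower bound by the union bound -/
lemma Ncham_lower {x : ℝ} (hx : 0 ≤ x) {D : Finset ℕ} (hD : D.Nonempty) (h0 : ∀ d ∈ D, 0 < d) :
    (primePi x (insert 0 D) : ℝ) ≤ Ncham x D + ∑ j ∈ gapJ D, (primePi x (insert j (insert 0 D)) : ℝ) + D.sup id := by
  rw [Ncham_eq hx hD h0, primePi_eq hx]
  simp_rw [primePi_eq hx]
  have hsub : PT x (insert 0 D) ⊆ (CT x D ∪ (gapJ D).biUnion (fun j => PT x (insert j (insert 0 D)))) ∪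
      Finset.Ioc (⌊x⌋₊ - D.sup id) ⌊x⌋₊ := by
    intro m hm
    rw [mem_union, mem_union, mem_biUnion, mem_Ioc]
    by_cases h1 : m + D.sup id ≤ ⌊x⌋₊
    · left
      by_cases h2 : ∀ j ∈ gapJ D, ¬ Nat.Prime (m + j)
      · left; unfold CT; rw [mem_filter]; exact ⟨hm, h1, h2⟩
      · right
        push Not at h2
        obtain ⟨j, hj, hjp⟩ := h2
        refine ⟨j, hj, ?_⟩
        unfold PT at hm ⊢
        rw [mem_filter] at hm ⊢
        refine ⟨hm.1, ?_⟩
        intro d hd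
        rw [mem_insert] at hd
        rcases hd with rfl | hd
        · exact hjp
        · exact hm.2 d hd
    · right
      unfold PT at hm
      rw [mem_filter, mem_Icc] at hm
      exact ⟨by omega, hm.1.2⟩
  have h1 := (card_le_card hsub).trans ((card_union_le _ _).trans (Nat.add_le_add_right (card_union_le _ _) _))
  have h2 := card_biUnion_le (s := gapJ D) (t := fun j => PT x (insert j (insert 0 D)))
  rw [Nat.card_Ioc] at h1
  have h3 : (PT x (insert 0 D)).card ≤ (CT x D).card + ∑ j ∈ gapJ D, (PT x (insert j (insert 0 D))).card + D.sup id := by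
    omega
  exact_mod_cast h3

lemma Ncham_le_primePi {x : ℝ} (hx : 0 ≤ x) {D : Finset ℕ} (hD : D.Nonempty) (h0 : ∀ d ∈ D, 0 < d) :
    Ncham x D ≤ primePi x (insert 0 D) := by
  rw [Ncham_eq hx hD h0, primePi_eq hx]
  exact card_filter_le _ _

lemma PT_insert (x : ℝ) (E : Finset ℕ) (j : ℕ) :
    PT x (insert j E) = (PT x E).filter (fun m => Nat.Prime (m + j)) := by
  unfold PT
  rw [filter_filter]
  apply filter_congr
  intro m _
  simp only [mem_insert, forall_eq_or_imp]
  tauto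

/-- Bonferroni upper bound -/
lemma Ncham_upper {x : ℝ} (hx : 0 ≤ x) {D : Finset ℕ} (hD : D.Nonempty) (h0 : ∀ d ∈ D, 0 < d)
    (J : Finset ℕ) (hJ : J ⊆ gapJ D) :
    (Ncham x D : ℝ) + ∑ j ∈ J, (primePi x (insert j (insert 0 D)) : ℝ) ≤ primePi x (insert 0 D) +
      ∑ j ∈ J, ∑ i ∈ J.erase j, (primePi x (insert i (insert j (insert 0 D))) : ℝ) := by
  rw [Ncham_eq hx hD h0, primePi_eq hx]
  simp_rw [primePi_eq hx]
  set P := PT x (insert 0 D) with hP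
  have e1 : ∀ j, (PT x (insert j (insert 0 D))).card = ∑ m ∈ P, if Nat.Prime (m + j) then 1 else 0 := by
    intro j; rw [PT_insert, card_filter]
  have e2 : ∀ i j, (PT x (insert i (insert j (insert 0 D)))).card =
      ∑ m ∈ P, if Nat.Prime (m + j) ∧ Nat.Prime (m + i) then 1 else 0 := by
    intro i j; rw [PT_insert, PT_insert, filter_filter, card_filter]
  have e3 : (CT x D).card ≤ ∑ m ∈ P, if (∀ j ∈ J, ¬ Nat.Prime (m + j)) then 1 else 0 := by
    rw [← card_filter]
    apply card_le_card
    intro m hm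
    unfold CT at hm
    rw [mem_filter] at hm ⊢
    exact ⟨hm.1, fun j hj => hm.2.2 j (hJ hj)⟩
  have key : (CT x D).card + ∑ j ∈ J, (PT x (insert j (insert 0 D))).card ≤
      P.card + ∑ j ∈ J, ∑ i ∈ J.erase j, (PT x (insert i (insert j (insert 0 D)))).card := by
    simp_rw [e1, e2]
    rw [Finset.sum_comm]
    have : ∑ j ∈ J, ∑ i ∈ J.erase j, ∑ m ∈ P, (if Nat.Prime (m + j) ∧ Nat.Prime (m + i) then 1 else 0) =
        ∑ m ∈ P, ∑ j ∈ J, ∑ i ∈ J.erase j, (if Nat.Prime (m + j) ∧ Nat.Prime (m + i) then 1 else 0) := by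
      rw [Finset.sum_comm (s := P)]
      apply Finset.sum_congr rfl
      intro j _
      rw [Finset.sum_comm]
    rw [this, card_eq_sum_ones P]
    refine (Nat.add_le_add_right e3 _).trans ?_
    rw [← Finset.sum_add_distrib, ← Finset.sum_add_distrib]
    apply Finset.sum_le_sum
    intro m _
    set W := J.filter (fun j => Nat.Prime (m + j)) with hW
    have c1 : ∑ j ∈ J, (if Nat.Prime (m + j) then 1 else 0) = W.card := by rw [hW, card_filter]
    have c2 : ∑ j ∈ J, ∑ i ∈ J.erase j, (if Nat.Prime (m + j) ∧ Nat.Prime (m + i) then 1 else 0) = W.card * (W.card - 1) := by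
      have : ∀ j ∈ J, ∑ i ∈ J.erase j, (if Nat.Prime (m + j) ∧ Nat.Prime (m + i) then 1 else 0) =
          if Nat.Prime (m + j) then W.card - 1 else 0 := by
        intro j hj
        split_ifs with h
        · rw [← card_filter, ← card_erase_of_mem (show j ∈ W by rw [hW, mem_filter]; exact ⟨hj, h⟩)]
          congr 1
          ext i; simp only [hW, mem_filter, mem_erase]; tauto
        · apply Finset.sum_eq_zero
          intro i _; rw [if_neg (fun h' => h h'.1)]
      rw [Finset.sum_congr rfl this, ← Finset.sum_filter, sum_const, smul_eq_mul]
    rw [c1, c2]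
    split_ifs with h
    · have : W = ∅ := by
        rw [hW, filter_eq_empty_iff]; exact fun {j} hj => h j hj
      rw [this]; simp
    · rcases Nat.eq_zero_or_pos W.card with hw | hw
      · omega
      · obtain ⟨w, hw'⟩ : ∃ w, W.card = w + 1 := ⟨W.card - 1, by omega⟩
        rw [hw']
        simp only [Nat.add_sub_cancel]
        nlinarith
  exact_mod_cast key

lemma Ncham_mul_le {x : ℝ} (hx : 0 ≤ x) {D : Finset ℕ} (hD : D.Nonempty) (h0 : ∀ d ∈ D, 0 < d) :
    (Ncham x D : ℝ) * D.sup id ≤ D.card * x := by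
  rw [Ncham_eq hx hD h0]
  set M := D.sup id with hM
  have hMD : M ∈ D := by
    obtain ⟨d, hd, hdd⟩ := Finset.exists_mem_eq_sup D hD id
    rw [hM, hdd]; simpa using hd
  have key : (CT x D).card * M ≤ D.card * ⌊x⌋₊ := by
    have h1 : (CT x D).card * M = ∑ m ∈ CT x D, ∑ t ∈ Finset.Icc 1 ⌊x⌋₊, if m < t ∧ t ≤ m + M then 1 else 0 := by
      rw [← smul_eq_mul, ← sum_const]
      apply Finset.sum_congr rfl
      intro m hm
      rw [← card_filter]
      have : (Finset.Icc 1 ⌊x⌋₊).filter (fun t => m < t ∧ t ≤ m + M) = Finset.Ioc m (m + M) := by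
        ext t
        have := (mem_CT.1 hm).2.1
        simp only [mem_filter, mem_Icc, mem_Ioc]; omega
      rw [this, Nat.card_Ioc]; omega
    rw [h1, Finset.sum_comm]
    calc _ ≤ ∑ t ∈ Finset.Icc 1 ⌊x⌋₊, D.card := by
          apply Finset.sum_le_sum
          intro t _
          rw [← card_filter]
          set R := (CT x D).filter (fun m => m < t ∧ t ≤ m + M) with hR
          rcases R.eq_empty_or_nonempty with he | hne
          · rw [he]; simp
          · set m1 := R.min' hne with hm1
            have hm1R : m1 ∈ R := R.min'_mem hne
            have hmem1 := mem_filter.1 hm1R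
            have hsub : R.image (fun m => m - m1) ⊆ (insert 0 D).erase M := by
              intro e he
              rw [mem_image] at he
              obtain ⟨m, hm, rfl⟩ := he
              have hle : m1 ≤ m := R.min'_le m hm
              have hm' := mem_filter.1 hm
              have hmp : m.Prime := by simpa using (mem_CT.1 hm'.1).1 0 (mem_insert_self _ _)
              rw [mem_erase, mem_insert]
              refine ⟨by omega, ?_⟩
              rcases Nat.eq_or_lt_of_le hle with h | h
              · left; omega
              · right; exact CT_between hmem1.1 hmp h (by omega) hD
            have hc := card_le_card hsub
            rw [card_image_of_injOn (by
              intro a ha b hb hab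
              have := R.min'_le a ha
              have := R.min'_le b hb
              simp only at hab
              omega), card_erase_of_mem (mem_insert_of_mem hMD), card_insert_of_notMem (fun h => (h0 0 h).ne rfl)] at hc
            simpa using hc
      _ = _ := by simp [mul_comm]
  have h2 : ((CT x D).card : ℝ) * M ≤ D.card * (⌊x⌋₊ : ℝ) := by exact_mod_cast key
  refine h2.trans ?_
  gcongr
  exact Nat.floor_le hx



/-- analytic context at a given `x` -/
structure Ctx (k : ℕ) (x U L l ε C : ℝ) (y : ℕ) : Prop where
  hk : 1 ≤ k
  U0 : 0 < U
  L1 : 1 ≤ L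
  l1 : 1 ≤ l
  ε0 : 0 < ε
  ε1 : ε ≤ 1 / 2
  C0 : 0 < C
  xU : x = U * L ^ (k + 1)
  y3 : 3 ≤ y
  yk : 4 * (k + 1) ^ 2 ≤ y + 1
  y4 : (k : ℝ) * 4 ^ y ≤ Real.sqrt L
  yl : l ≤ 16 * y
  Ll : Real.log L = l
  HL1 : ∀ D : Finset ℕ, D.card = k → (∀ d ∈ D, 2 ≤ d ∧ (d : ℝ) ≤ L ^ (k + 1)) →
    singSeries (insert 0 D) ≠ 0 →
    |(primePi x (insert 0 D) : ℝ) - singSeries (insert 0 D) * U| ≤ ε * singSeries (insert 0 D) * U / l ^ 2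
  HL2 : ∀ D : Finset ℕ, D.card = k + 1 → (∀ d ∈ D, 2 ≤ d ∧ (d : ℝ) ≤ L ^ (k + 1)) →
    singSeries (insert 0 D) ≠ 0 →
    |(primePi x (insert 0 D) : ℝ) - singSeries (insert 0 D) * (U / L)| ≤ ε * singSeries (insert 0 D) * (U / L)
  HL3 : ∀ E : Finset ℕ, E.card = k + 3 → (primePi x E : ℝ) ≤ C * singSeries E * (U / L ^ 2) + (k + 3)
  err : (k + 3 : ℝ) * (L ^ (k + 1)) ^ 2 ≤ ε * cS (k + 1) * U / l ^ 2

/-- admissible candidates -/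
structure Val (k : ℕ) (L : ℝ) (D : Finset ℕ) : Prop where
  card : D.card = k
  pos : ∀ d ∈ D, 0 < d
  sup : ((D.sup id : ℕ) : ℝ) ≤ L ^ (k + 1)
  ne : singSeries (insert 0 D) ≠ 0

lemma two_le_of_adm {E : Finset ℕ} (h0 : 0 ∈ E) (h : singSeries E ≠ 0) : 1 ∉ E := by
  intro h1
  have := adm_of_ne_zero h 2 Nat.prime_two
  have h2 : 2 ≤ nu E 2 := by
    unfold nu
    have : ({0, 1} : Finset ℕ) ⊆ E.image (· % 2) := by
      intro a ha
      rw [mem_insert, mem_singleton] at ha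
      rw [mem_image]
      rcases ha with rfl | rfl
      · exact ⟨0, h0, rfl⟩
      · exact ⟨1, h1, rfl⟩
    have := card_le_card this
    simpa using this
  omega

namespace Ctx

variable {k : ℕ} {x U L l ε C : ℝ} {y : ℕ} {D : Finset ℕ}

lemma x0 (c : Ctx k x U L l ε C y) : 0 ≤ x := by
  have := c.U0; have := c.L1
  rw [c.xU]; positivity

lemma card0 (v : Val k L D) : (insert 0 D).card = k + 1 := by
  rw [card_insert_of_notMem (fun h => (v.pos 0 h).ne rfl), v.card]

lemma nonempty (c : Ctx k x U L l ε C y) (v : Val k L D) : D.Nonempty :=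
  card_pos.1 (by rw [v.card]; exact c.hk)

lemma le_sup (v : Val k L D) {d : ℕ} (hd : d ∈ D) : (d : ℝ) ≤ L ^ (k + 1) := by
  refine le_trans ?_ v.sup
  exact_mod_cast Finset.le_sup (f := id) hd

lemma S_ge (v : Val k L D) : cS (k + 1) ≤ singSeries (insert 0 D) := by
  have := singSeries_ge_of_adm (adm_of_ne_zero v.ne)
  rwa [card0 v] at this

lemma S_pos (v : Val k L D) : 0 < singSeries (insert 0 D) := lt_of_lt_of_le (cS_pos _) (S_ge v)

lemma err' (c : Ctx k x U L l ε C y) (v : Val k L D) :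
    (k + 3 : ℝ) * (L ^ (k + 1)) ^ 2 ≤ ε * singSeries (insert 0 D) * U / l ^ 2 := by
  refine c.err.trans ?_
  have := c.U0; have := c.ε0; have := c.l1
  have := S_ge v
  gcongr

lemma pi1 (c : Ctx k x U L l ε C y) (v : Val k L D) :
    |(primePi x (insert 0 D) : ℝ) - singSeries (insert 0 D) * U| ≤ ε * singSeries (insert 0 D) * U / l ^ 2 := by
  apply c.HL1 D v.card _ v.ne
  intro d hd
  refine ⟨?_, le_sup v hd⟩
  have h1 := v.pos d hd
  have h2 : d ≠ 1 := fun h => two_le_of_adm (mem_insert_self _ _) v.ne (h ▸ mem_insert_of_mem hd)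
  omega

lemma pi2 (c : Ctx k x U L l ε C y) (v : Val k L D) {j : ℕ} (hj : j ∉ insert 0 D) (hjL : (j : ℝ) ≤ L ^ (k + 1)) :
    (primePi x (insert j (insert 0 D)) : ℝ) ≤ (1 + ε) * singSeries (insert j (insert 0 D)) * (U / L) + (k + 2) ∧
    (1 - ε) * singSeries (insert j (insert 0 D)) * (U / L) ≤ primePi x (insert j (insert 0 D)) := by
  have hUL : 0 < U / L := div_pos c.U0 (by linarith [c.L1])
  by_cases hS : singSeries (insert j (insert 0 D)) = 0
  · rw [hS]
    have : ¬ Adm (insert j (insert 0 D)) := fun h => (adm_iff.2 h) hS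
    have := primePi_le_of_not_adm this x
    rw [card_insert_of_notMem hj, card0 v] at this
    have h' : (primePi x (insert j (insert 0 D)) : ℝ) ≤ k + 1 + 1 := by exact_mod_cast this
    constructor
    · linarith
    · simp
  · rw [mem_insert, not_or] at hj
    rw [insert_comm] at hS ⊢
    have := c.HL2 (insert j D) (by rw [card_insert_of_notMem hj.2, v.card]) (by
      intro d hd
      have h2 : d ≠ 1 := fun h => two_le_of_adm (mem_insert_self _ _) hS (h ▸ mem_insert_of_mem hd)
      rw [mem_insert] at hd
      rcases hd with rfl | hd
      · exact ⟨by omega, hjL⟩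
      · have h1 := v.pos d hd
        exact ⟨by omega, le_sup v hd⟩) hS
    rw [abs_le] at this
    have hk0 : (0 : ℝ) ≤ k := by positivity
    constructor <;> linarith [this.1, this.2]

/-- exponent in the mean value constants -/
noncomputable def Aexp (k : ℕ) : ℝ := 16 * (k + 2)

/-- first mean value constant -/
noncomputable def C1 (k : ℕ) : ℝ := cM (k + 1) (Aexp k)

/-- second mean value constant -/
noncomputable def C2 (k : ℕ) (C : ℝ) : ℝ := C * (cM (k + 2) (Aexp k) * cM (k + 1) (Aexp k))

lemma C1_pos (k : ℕ) : 0 < C1 k := cM_pos _ _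
lemma C2_pos (c : Ctx k x U L l ε C y) : 0 < C2 k C := mul_pos c.C0 (mul_pos (cM_pos _ _) (cM_pos _ _))

lemma logB (c : Ctx k x U L l ε C y) : Real.log (L ^ (k + 2)) ≤ Aexp k * y := by
  rw [Real.log_pow, c.Ll]
  unfold Aexp
  have := c.yl
  push_cast
  have hk0 : (0 : ℝ) ≤ (k : ℝ) + 2 := by positivity
  nlinarith

lemma eB (c : Ctx k x U L l ε C y) (v : Val k L D) : ∀ e ∈ insert 0 D, (e : ℝ) ≤ L ^ (k + 2) := by
  intro e he
  have hL := c.L1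
  rw [mem_insert] at he
  rcases he with rfl | he
  · simp; positivity
  · exact (le_sup v he).trans (pow_le_pow_right₀ hL (by omega))

/-- mean value over any subset -/
lemma mv (c : Ctx k x U L l ε C y) (v : Val k L D) (H : ℕ) (hH : 4 ^ y ≤ H) (hHL : (H : ℝ) ≤ L ^ (k + 2))
    (J : Finset ℕ) (hJ : J ⊆ Finset.Icc 1 H \ insert 0 D) :
    ∑ j ∈ J, singSeries (insert j (insert 0 D)) ≤ C1 k * H * singSeries (insert 0 D) := by
  have := mean_upper (insert 0 D) y H c.y3 hH (Aexp k) (L ^ (k + 2)) hHL (c.eB v) c.logB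
  rw [card0 v] at this
  exact (Finset.sum_le_sum_of_subset_of_nonneg hJ (fun _ _ _ => singSeries_nonneg _)).trans this

lemma mv2 (c : Ctx k x U L l ε C y) (v : Val k L D) (H : ℕ) (hH : 4 ^ y ≤ H) (hHL : (H : ℝ) ≤ L ^ (k + 1))
    (J : Finset ℕ) (hJ : J ⊆ Finset.Icc 1 H \ insert 0 D) :
    ∑ j ∈ J, ∑ i ∈ J.erase j, (primePi x (insert i (insert j (insert 0 D))) : ℝ) ≤
      C2 k C * (H / L) ^ 2 * singSeries (insert 0 D) * U + ε * singSeries (insert 0 D) * U / l ^ 2 := by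
  have hL := c.L1
  have hU := c.U0
  have hC := c.C0
  have hHL2 : (H : ℝ) ≤ L ^ (k + 2) := hHL.trans (pow_le_pow_right₀ hL (by omega))
  have h1 := mean_upper_pairs (insert 0 D) y H c.y3 hH (Aexp k) (L ^ (k + 2)) hHL2 (c.eB v) c.logB
  rw [card0 v] at h1
  have h2 : ∑ j ∈ J, ∑ i ∈ J.erase j, singSeries (insert i (insert j (insert 0 D))) ≤
      cM (k + 1 + 1) (Aexp k) * cM (k + 1) (Aexp k) * H ^ 2 * singSeries (insert 0 D) := by
    refine le_trans ?_ h1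
    calc _ ≤ ∑ j ∈ J, ∑ i ∈ Finset.Icc 1 H \ insert j (insert 0 D), singSeries (insert i (insert j (insert 0 D))) := by
          apply Finset.sum_le_sum
          intro j hj
          apply Finset.sum_le_sum_of_subset_of_nonneg _ (fun _ _ _ => singSeries_nonneg _)
          intro i hi
          rw [mem_erase] at hi
          have := hJ hi.2
          rw [mem_sdiff] at this ⊢
          refine ⟨this.1, ?_⟩
          rw [mem_insert, not_or]
          exact ⟨hi.1, this.2⟩
      _ ≤ _ := Finset.sum_le_sum_of_subset_of_nonneg hJ
          (fun _ _ _ => Finset.sum_nonneg fun _ _ => singSeries_nonneg _)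
  have hJc : (J.card : ℝ) ≤ H := by
    have := card_le_card (hJ.trans sdiff_subset)
    rw [Nat.card_Icc] at this
    exact_mod_cast (by omega : J.card ≤ H)
  calc _ ≤ ∑ j ∈ J, ∑ i ∈ J.erase j, (C * (U / L ^ 2) * singSeries (insert i (insert j (insert 0 D))) + (k + 3)) := by
        apply Finset.sum_le_sum
        intro j hj
        apply Finset.sum_le_sum
        intro i hi
        rw [mem_erase] at hi
        have hj' := hJ hj
        have hi' := hJ hi.2
        rw [mem_sdiff] at hj' hi'
        have := c.HL3 (insert i (insert j (insert 0 D))) (by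
          rw [card_insert_of_notMem (by rw [mem_insert, not_or]; exact ⟨hi.1, hi'.2⟩),
            card_insert_of_notMem hj'.2, card0 v])
        linarith
    _ = C * (U / L ^ 2) * (∑ j ∈ J, ∑ i ∈ J.erase j, singSeries (insert i (insert j (insert 0 D)))) +
          ∑ j ∈ J, ∑ i ∈ J.erase j, ((k : ℝ) + 3) := by
        simp_rw [Finset.sum_add_distrib]
        congr 1
        rw [Finset.mul_sum]
        apply Finset.sum_congr rfl
        intro j _
        rw [Finset.mul_sum]
    _ ≤ C * (U / L ^ 2) * (cM (k + 1 + 1) (Aexp k) * cM (k + 1) (Aexp k) * H ^ 2 * singSeries (insert 0 D)) +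
          ε * singSeries (insert 0 D) * U / l ^ 2 := by
        apply add_le_add
        · gcongr
        · refine le_trans ?_ (c.err' v)
          calc ∑ j ∈ J, ∑ i ∈ J.erase j, ((k : ℝ) + 3) ≤ ∑ j ∈ J, (H : ℝ) * (k + 3) := by
                apply Finset.sum_le_sum
                intro j hj
                rw [sum_const, nsmul_eq_mul]
                gcongr
                exact (card_le_card (erase_subset j J)).trans (by exact_mod_cast hJc)
            _ = J.card * ((H : ℝ) * (k + 3)) := by rw [sum_const, nsmul_eq_mul]
            _ ≤ H * ((H : ℝ) * (k + 3)) := by gcongr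
            _ = (k + 3) * (H : ℝ) ^ 2 := by ring
            _ ≤ _ := by gcongr
    _ = _ := by unfold C2; field_simp

lemma gapJ_sub {D : Finset ℕ} {H : ℕ} (h : D.sup id ≤ H) : gapJ D ⊆ Finset.Icc 1 H \ insert 0 D := by
  intro j hj
  unfold gapJ at hj
  rw [mem_sdiff, mem_range] at hj
  rw [mem_sdiff, mem_Icc]
  have : j ≠ 0 := fun h' => hj.2 (h' ▸ mem_insert_self _ _)
  exact ⟨⟨by omega, by omega⟩, hj.2⟩

lemma lower (c : Ctx k x U L l ε C y) (v : Val k L D) :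
    singSeries (insert 0 D) * U * (1 - 3 * ε / l ^ 2) -
      (1 + ε) * (U / L) * ∑ j ∈ gapJ D, singSeries (insert j (insert 0 D)) ≤ Ncham x D := by
  have hL := c.L1
  have h1 := Ncham_lower c.x0 (c.nonempty v) v.pos
  have h2 := (abs_le.1 (c.pi1 v)).1
  have h3 : ∑ j ∈ gapJ D, (primePi x (insert j (insert 0 D)) : ℝ) ≤
      (1 + ε) * (U / L) * ∑ j ∈ gapJ D, singSeries (insert j (insert 0 D)) + (k + 2) * D.sup id := by
    calc _ ≤ ∑ j ∈ gapJ D, ((1 + ε) * (U / L) * singSeries (insert j (insert 0 D)) + (k + 2)) := by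
          apply Finset.sum_le_sum
          intro j hj
          have hj' := mem_sdiff.1 (gapJ_sub le_rfl hj)
          have := (c.pi2 v hj'.2 (le_trans (by exact_mod_cast (mem_Icc.1 hj'.1).2) v.sup)).1
          linarith
      _ = (1 + ε) * (U / L) * ∑ j ∈ gapJ D, singSeries (insert j (insert 0 D)) + (gapJ D).card * (k + 2) := by
          rw [Finset.sum_add_distrib, Finset.mul_sum, sum_const, nsmul_eq_mul]
      _ ≤ _ := by
          have : (gapJ D).card ≤ D.sup id := by
            have := card_le_card (sdiff_subset (s := range (D.sup id)) (t := insert 0 D))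
            rwa [card_range] at this
          have : ((gapJ D).card : ℝ) ≤ D.sup id := by exact_mod_cast this
          have hk0 : (0 : ℝ) ≤ (k : ℝ) + 2 := by positivity
          nlinarith
  have h4 := c.err' v
  have h5 : (k + 3 : ℝ) * D.sup id ≤ (k + 3 : ℝ) * (L ^ (k + 1)) ^ 2 := by
    have : (1 : ℝ) ≤ L ^ (k + 1) := one_le_pow₀ hL
    have h := v.sup
    gcongr
    nlinarith
  have e : singSeries (insert 0 D) * U * (1 - 3 * ε / l ^ 2) = singSeries (insert 0 D) * U - 3 * (ε * singSeries (insert 0 D) * U / l ^ 2) := by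
    ring
  have h6 : 0 ≤ ε * singSeries (insert 0 D) * U / l ^ 2 := by
    have := S_pos v; have := c.U0; have := c.ε0; positivity
  rw [e]
  linarith

lemma upper (c : Ctx k x U L l ε C y) (v : Val k L D) (H : ℕ) (hH : 4 ^ y ≤ H) (hHL : (H : ℝ) ≤ L ^ (k + 1))
    (J : Finset ℕ) (hJ : J ⊆ Finset.Icc 1 H) (hJD : J ⊆ gapJ D) :
    (Ncham x D : ℝ) ≤ singSeries (insert 0 D) * U * (1 + 2 * ε / l ^ 2 + C2 k C * (H / L) ^ 2) -
      (1 - ε) * (U / L) * ∑ j ∈ J, singSeries (insert j (insert 0 D)) := by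
  have h1 := Ncham_upper c.x0 (c.nonempty v) v.pos J hJD
  have h2 := (abs_le.1 (c.pi1 v)).2
  have hJ2 : J ⊆ Finset.Icc 1 H \ insert 0 D := by
    intro j hj
    rw [mem_sdiff]
    exact ⟨hJ hj, (mem_sdiff.1 (hJD hj)).2⟩
  have h3 := c.mv2 v H hH hHL J hJ2
  have h4 : (1 - ε) * (U / L) * ∑ j ∈ J, singSeries (insert j (insert 0 D)) ≤
      ∑ j ∈ J, (primePi x (insert j (insert 0 D)) : ℝ) := by
    rw [Finset.mul_sum]
    apply Finset.sum_le_sum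
    intro j hj
    have hj' := mem_sdiff.1 (hJ2 hj)
    have := (c.pi2 v hj'.2 (le_trans (by exact_mod_cast (mem_Icc.1 hj'.1).2) hHL)).2
    linarith
  have e : singSeries (insert 0 D) * U * (1 + 2 * ε / l ^ 2 + C2 k C * (H / L) ^ 2) =
      singSeries (insert 0 D) * U + 2 * (ε * singSeries (insert 0 D) * U / l ^ 2) +
        C2 k C * (H / L) ^ 2 * singSeries (insert 0 D) * U := by ring
  rw [e]
  linarith

end Ctx



namespace Ctx

variable {k : ℕ} {x U L l ε C : ℝ} {y : ℕ} {D : Finset ℕ}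

lemma four_le_sqrt (c : Ctx k x U L l ε C y) : (4 : ℝ) ^ y ≤ Real.sqrt L := by
  refine le_trans ?_ c.y4
  have : (1 : ℝ) ≤ k := by exact_mod_cast c.hk
  have h : (0 : ℝ) ≤ 4 ^ y := by positivity
  nlinarith

lemma sqrt_ge (c : Ctx k x U L l ε C y) : 64 ≤ Real.sqrt L := by
  refine le_trans ?_ c.four_le_sqrt
  calc (64 : ℝ) = 4 ^ 3 := by norm_num
    _ ≤ 4 ^ y := pow_le_pow_right₀ (by norm_num) c.y3

lemma sqrt_sq (c : Ctx k x U L l ε C y) : Real.sqrt L * Real.sqrt L = L :=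
  Real.mul_self_sqrt (by linarith [c.L1])

lemma L2 (c : Ctx k x U L l ε C y) : 4096 ≤ L := by
  have h1 := c.sqrt_ge
  have h2 := c.sqrt_sq
  nlinarith

lemma sqrt_le (c : Ctx k x U L l ε C y) : Real.sqrt L ≤ L := by
  have h1 := c.sqrt_ge
  have h2 := c.sqrt_sq
  nlinarith

lemma L_le_pow (c : Ctx k x U L l ε C y) : L ≤ L ^ (k + 1) :=
  le_self_pow₀ c.L1 (by omega)

lemma lower' (c : Ctx k x U L l ε C y) (v : Val k L D) :
    singSeries (insert 0 D) * U * (1 - 3 * ε / l ^ 2 - 2 * C1 k * (((D.sup id : ℕ) : ℝ) + Real.sqrt L) / L)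
      ≤ Ncham x D := by
  have h1 := c.lower v
  have hL := c.L2
  have hU := c.U0
  have hS := S_pos v
  have hC := C1_pos k
  have hH : ((D.sup id + 4 ^ y : ℕ) : ℝ) ≤ ((D.sup id : ℕ) : ℝ) + Real.sqrt L := by
    push_cast
    linarith [c.four_le_sqrt]
  have hHL : ((D.sup id + 4 ^ y : ℕ) : ℝ) ≤ L ^ (k + 2) := by
    refine hH.trans ?_
    have a := v.sup
    have b := c.sqrt_le
    have d := c.L_le_pow
    have e : L ^ (k + 2) = L ^ (k + 1) * L := by ring
    rw [e]
    nlinarith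
  have h2 := c.mv v (D.sup id + 4 ^ y) (Nat.le_add_left _ _) hHL (gapJ D) (gapJ_sub (Nat.le_add_right _ _))
  have h3 : (1 + ε) * (U / L) * ∑ j ∈ gapJ D, singSeries (insert j (insert 0 D)) ≤
      2 * (U / L) * (C1 k * (((D.sup id : ℕ) : ℝ) + Real.sqrt L) * singSeries (insert 0 D)) := by
    have h4 : (1 + ε) ≤ 2 := by linarith [c.ε1]
    have h5 : 0 ≤ ∑ j ∈ gapJ D, singSeries (insert j (insert 0 D)) :=
      Finset.sum_nonneg fun _ _ => singSeries_nonneg _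
    have h6 : C1 k * ((D.sup id + 4 ^ y : ℕ) : ℝ) * singSeries (insert 0 D) ≤
      C1 k * (((D.sup id : ℕ) : ℝ) + Real.sqrt L) * singSeries (insert 0 D) := by gcongr
    have h7 : 0 < U / L := by positivity
    calc _ ≤ 2 * (U / L) * ∑ j ∈ gapJ D, singSeries (insert j (insert 0 D)) := by gcongr
      _ ≤ _ := by gcongr; exact h2.trans h6
  have e : 2 * (U / L) * (C1 k * (((D.sup id : ℕ) : ℝ) + Real.sqrt L) * singSeries (insert 0 D)) =
    singSeries (insert 0 D) * U * (2 * C1 k * (((D.sup id : ℕ) : ℝ) + Real.sqrt L) / L) := by ring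
  rw [e] at h3
  linarith

/-- comparison tuple -/
noncomputable def Ds (k y : ℕ) : Finset ℕ := (starE k y).erase 0

lemma zero_mem_starE (k y : ℕ) : 0 ∈ starE k y := by
  unfold starE
  rw [mem_image]
  exact ⟨0, by simp, by simp⟩

lemma insert_Ds (k y : ℕ) : insert 0 (Ds k y) = starE k y := insert_erase (zero_mem_starE k y)

lemma Ds_sup (c : Ctx k x U L l ε C y) : (((Ds k y).sup id : ℕ) : ℝ) ≤ Real.sqrt L := by
  have : (Ds k y).sup id ≤ k * 4 ^ y := by
    apply Finset.sup_le
    intro d hd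
    unfold Ds starE at hd
    rw [mem_erase, mem_image] at hd
    obtain ⟨_, i, hi, rfl⟩ := hd
    rw [mem_range] at hi
    simp only [id]
    rw [mul_comm]
    exact Nat.mul_le_mul (by omega) (primorial_le_four_pow y)
  refine le_trans ?_ c.y4
  exact_mod_cast this

lemma logy (c : Ctx k x U L l ε C y) : 0 < Real.log y :=
  Real.log_pos (by exact_mod_cast (by linarith [c.y3] : 1 < y))

lemma Ds_val (c : Ctx k x U L l ε C y) : Val k L (Ds k y) where
  card := by
    unfold Ds
    rw [card_erase_of_mem (zero_mem_starE k y), star_card]; rfl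
  pos := fun d hd => Nat.pos_of_ne_zero (mem_erase.1 hd).1
  sup := c.Ds_sup.trans (c.sqrt_le.trans c.L_le_pow)
  ne := by
    rw [insert_Ds]
    have := star_ge c.hk (by linarith [c.y3]) c.yk
    have := c.logy
    intro h
    linarith

lemma Ds_lower (c : Ctx k x U L l ε C y) {ρ : ℝ} (hρ : 3 * ε / l ^ 2 + 4 * C1 k * Real.sqrt L / L ≤ ρ) :
    singSeries (starE k y) * U * (1 - ρ) ≤ Ncham x (Ds k y) := by
  have := c.lower' c.Ds_val
  refine le_trans ?_ this
  have hS := S_pos c.Ds_val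
  rw [insert_Ds] at *
  have hU := c.U0
  have hL := c.L2
  apply mul_le_mul_of_nonneg_left _ (by positivity)
  have h1 := c.Ds_sup
  have h2 := C1_pos k
  have h3 : 2 * C1 k * ((((Ds k y).sup id : ℕ) : ℝ) + Real.sqrt L) / L ≤ 4 * C1 k * Real.sqrt L / L := by
    apply div_le_div_of_nonneg_right _ (by linarith)
    nlinarith
  linarith

lemma champ_val (c : Ctx k x U L l ε C y) {ρ : ℝ} (hρ : 3 * ε / l ^ 2 + 4 * C1 k * Real.sqrt L / L ≤ ρ)
    (hρ2 : ρ ≤ 1 / 2) (hy : 8 * k ≤ Real.log y) (hU2 : 2 ≤ U) (hD : IsChampion k x D) : Val k L D := by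
  obtain ⟨h1, h2, h3⟩ := hD
  have hk : (1 : ℝ) ≤ k := by exact_mod_cast c.hk
  have h4 : (Ncham x (Ds k y) : ℝ) ≤ Ncham x D := by exact_mod_cast h3 _ c.Ds_val.card c.Ds_val.pos
  have h5 := c.Ds_lower hρ
  have h6 := star_ge c.hk (by linarith [c.y3]) c.yk
  have h7 : 4 * k ≤ singSeries (starE k y) := by linarith
  have h8 : 2 * k * U ≤ Ncham x D := by
    refine le_trans ?_ (h5.trans h4)
    have : 4 * k * U * (1 / 2) ≤ singSeries (starE k y) * U * (1 - ρ) := by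
      have hS0 : 0 < singSeries (starE k y) := by linarith
      have hU0 := c.U0
      gcongr; linarith
    linarith
  have hne : D.Nonempty := card_pos.1 (by rw [h1]; exact c.hk)
  have hL := c.L2
  refine ⟨h1, h2, ?_, ?_⟩
  · have h9 := Ncham_mul_le c.x0 hne h2
    rw [h1, c.xU] at h9
    rw [← c.xU] at h9
    have hM : (0 : ℝ) ≤ ((D.sup id : ℕ) : ℝ) := by positivity
    have h10 : 2 * k * U * ((D.sup id : ℕ) : ℝ) ≤ k * (U * L ^ (k + 1)) := by
      rw [← c.xU]
      exact (mul_le_mul_of_nonneg_right h8 hM).trans h9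
    have h11 : (k * U) * ((D.sup id : ℕ) : ℝ) ≤ (k * U) * L ^ (k + 1) := by
      have : 0 ≤ k * U * ((D.sup id : ℕ) : ℝ) := by positivity
      linarith
    exact le_of_mul_le_mul_left h11 (by positivity)
  · intro h
    have hn : ¬ Adm (insert 0 D) := fun h' => (adm_iff.2 h') h
    have h9 := primePi_le_of_not_adm hn x
    have h10 := Ncham_le_primePi c.x0 hne h2
    rw [card_insert_of_notMem (fun h => (h2 0 h).ne rfl), h1] at h9
    have h11 : (Ncham x D : ℝ) ≤ k + 1 := by exact_mod_cast h10.trans h9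
    nlinarith

end Ctx



/-- sieving level for multiples -/
def KK (k : ℕ) : ℕ := 16 * (k + 1) + 2

/-- fixed modulus -/
noncomputable def M0 (k : ℕ) : ℕ := primorial (KK k)

lemma M0_pos (k : ℕ) : 0 < M0 k := primorial_pos _

lemma dvd_M0 {k q : ℕ} (hq : q.Prime) (h : q ≤ KK k) : q ∣ M0 k :=
  dvd_primorial' (mem_PR.2 ⟨by omega, hq⟩)

namespace Ctx

variable {k : ℕ} {x U L l ε C : ℝ} {y : ℕ} {D : Finset ℕ}

lemma S_mul (v : Val k L D) {j : ℕ} (hj : j ∉ insert 0 D) (hM : M0 k ∣ j) :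
    singSeries (insert 0 D) ≤ 2 * singSeries (insert j (insert 0 D)) := by
  apply singSeries_insert_ge (K := KK k) (mem_insert_self _ _) hj
  · unfold KK; omega
  · rw [card0 v]; unfold KK; omega
  · intro q hq hlt
    exact (dvd_M0 hq hlt.le).trans hM

/-- saving constant -/
noncomputable def c0 (k : ℕ) : ℝ := 1 / (4 * (M0 k : ℝ))

lemma c0_pos (k : ℕ) : 0 < c0 k := by
  have : (0 : ℝ) < M0 k := by exact_mod_cast M0_pos k
  unfold c0; positivity

lemma c0_le (k : ℕ) : c0 k ≤ 1 / 4 := by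
  have : (1 : ℝ) ≤ M0 k := by exact_mod_cast M0_pos k
  unfold c0
  apply one_div_le_one_div_of_le <;> linarith

lemma large_upper (c : Ctx k x U L l ε C y) (v : Val k L D) {η : ℝ} (hη0 : 0 < η) (hη1 : η ≤ 1)
    (h1 : Real.sqrt L + 1 ≤ η * L) (h2 : 2 * (M0 k : ℝ) * (k + 2) ≤ η * L) (h3 : C2 k C * η ≤ c0 k / 8)
    (h4 : 2 * ε / l ^ 2 ≤ c0 k * η / 8) (hM : η * L < ((D.sup id : ℕ) : ℝ)) :
    (Ncham x D : ℝ) ≤ singSeries (insert 0 D) * U * (1 - c0 k * η / 4) := by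
  have hL := c.L2
  have hU := c.U0
  have hS := S_pos v
  have hM0 : (0 : ℝ) < M0 k := by exact_mod_cast M0_pos k
  have hC2 := c.C2_pos
  set H := ⌊η * L⌋₊ with hH
  have hH1 : (H : ℝ) ≤ η * L := Nat.floor_le (by positivity)
  have hH2 : η * L - 1 < H := Nat.sub_one_lt_floor _
  have hH4 : 4 ^ y ≤ H := by
    have := c.four_le_sqrt
    have : (4 : ℝ) ^ y ≤ H := by linarith
    exact_mod_cast this
  have hHL : (H : ℝ) ≤ L ^ (k + 1) := by
    have := c.L_le_pow
    nlinarith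
  set J := ((Finset.Icc 1 (H / M0 k)).image (M0 k * ·)) \ D with hJ
  have hJ1 : ∀ j ∈ J, 1 ≤ j ∧ j ≤ H ∧ j ∉ D ∧ M0 k ∣ j := by
    intro j hj
    rw [hJ, mem_sdiff, mem_image] at hj
    obtain ⟨⟨i, hi, rfl⟩, hj⟩ := hj
    rw [mem_Icc] at hi
    refine ⟨Nat.mul_pos (M0_pos k) (by omega), ?_, hj, dvd_mul_right _ _⟩
    exact (Nat.mul_le_mul_left _ hi.2).trans (Nat.mul_div_le _ _)
  have hHM : H < D.sup id := by
    have : (H : ℝ) < ((D.sup id : ℕ) : ℝ) := by linarith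
    exact_mod_cast this
  have hJD : J ⊆ gapJ D := by
    intro j hj
    obtain ⟨a, b, d, _⟩ := hJ1 j hj
    unfold gapJ
    rw [mem_sdiff, mem_range, mem_insert]
    exact ⟨by omega, by rintro (h | h); omega; exact d h⟩
  have hcard : η * L / (2 * M0 k) ≤ J.card := by
    have a : H / M0 k - k ≤ J.card := by
      have := le_card_sdiff D ((Finset.Icc 1 (H / M0 k)).image (M0 k * ·))
      rwa [card_scale (M0_pos k), Nat.card_Icc, v.card, Nat.add_sub_cancel] at this
    have b : (H : ℝ) / M0 k - 1 ≤ ((H / M0 k : ℕ) : ℝ) := by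
      have := Nat.lt_div_mul_add (a := H) (M0_pos k)
      have h' : (H : ℝ) < ((H / M0 k : ℕ) : ℝ) * M0 k + M0 k := by exact_mod_cast this
      rw [sub_le_iff_le_add, div_le_iff₀ hM0]
      linarith
    have a' : ((H / M0 k : ℕ) : ℝ) ≤ J.card + k := by exact_mod_cast (by omega : H / M0 k ≤ J.card + k)
    have d : η * L / M0 k - 1 ≤ (H : ℝ) / M0 k := by
      rw [sub_le_iff_le_add, div_le_iff₀ hM0, add_mul, div_mul_cancel₀ _ hM0.ne']
      have : (1 : ℝ) ≤ M0 k := by exact_mod_cast M0_pos k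
      linarith
    have e : (k + 2 : ℝ) ≤ η * L / (2 * M0 k) := by
      rw [le_div_iff₀ (by positivity)]; linarith
    have f : η * L / M0 k = 2 * (η * L / (2 * M0 k)) := by field_simp
    linarith
  have hsum : c0 k * η * L * singSeries (insert 0 D) ≤ ∑ j ∈ J, singSeries (insert j (insert 0 D)) := by
    calc c0 k * η * L * singSeries (insert 0 D) = (η * L / (2 * M0 k)) * (singSeries (insert 0 D) / 2) := by
          unfold c0; field_simp; ring
      _ ≤ J.card * (singSeries (insert 0 D) / 2) := by gcongr
      _ = ∑ j ∈ J, singSeries (insert 0 D) / 2 := by rw [sum_const, nsmul_eq_mul]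
      _ ≤ _ := by
          apply Finset.sum_le_sum
          intro j hj
          have := S_mul v (mem_sdiff.1 (hJD hj)).2 (hJ1 j hj).2.2.2
          linarith
  have hup := c.upper v H hH4 hHL J (fun j hj => mem_Icc.2 ⟨(hJ1 j hj).1, (hJ1 j hj).2.1⟩) hJD
  refine hup.trans ?_
  have g1 : C2 k C * (H / L) ^ 2 ≤ c0 k * η / 8 := by
    have : H / L ≤ η := by rw [div_le_iff₀ (by linarith)]; exact hH1
    calc C2 k C * (H / L) ^ 2 ≤ C2 k C * η ^ 2 := by gcongr
      _ = (C2 k C * η) * η := by ring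
      _ ≤ (c0 k / 8) * η := by gcongr
      _ = _ := by ring
  have g2 : singSeries (insert 0 D) * U * (c0 k * η / 2) ≤
      (1 - ε) * (U / L) * ∑ j ∈ J, singSeries (insert j (insert 0 D)) := by
    calc _ = (1 / 2) * (U / L) * (c0 k * η * L * singSeries (insert 0 D)) := by field_simp
      _ ≤ (1 - ε) * (U / L) * (c0 k * η * L * singSeries (insert 0 D)) := by
          have := c.ε1
          have := c0_pos k
          gcongr
          linarith
      _ ≤ _ := by
          have := c.ε1
          have : 0 ≤ 1 - ε := by linarith
          gcongr
  have g3 : singSeries (insert 0 D) * U * (1 + 2 * ε / l ^ 2 + C2 k C * (H / L) ^ 2) ≤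
      singSeries (insert 0 D) * U * (1 + c0 k * η / 4) := by
    apply mul_le_mul_of_nonneg_left _ (by positivity)
    linarith
  linarith

/-- a champion has small diameter -/
lemma step2 (c : Ctx k x U L l ε C y) (v : Val k L D) (hD : IsChampion k x D) {η ρ : ℝ} (hη0 : 0 < η) (hη1 : η ≤ 1)
    (h1 : Real.sqrt L + 1 ≤ η * L) (h2 : 2 * (M0 k : ℝ) * (k + 2) ≤ η * L) (h3 : C2 k C * η ≤ c0 k / 8)
    (h4 : 2 * ε / l ^ 2 ≤ c0 k * η / 8)
    (hρ : 3 * ε / l ^ 2 + 4 * C1 k * Real.sqrt L / L ≤ ρ) (hρ2 : ρ ≤ c0 k * η / 16)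
    (hκ : Real.exp (32 * k * (k + 1) ^ 3 / Real.log y) ≤ 1 + c0 k * η / 8) :
    ((D.sup id : ℕ) : ℝ) ≤ η * L := by
  by_contra hM
  push Not at hM
  have hup := c.large_upper v hη0 hη1 h1 h2 h3 h4 hM
  have hlo := c.Ds_lower hρ
  have hch : (Ncham x (Ds k y) : ℝ) ≤ Ncham x D := by exact_mod_cast hD.2.2 _ c.Ds_val.card c.Ds_val.pos
  have hL := c.L2
  have hU := c.U0
  have hS := S_pos c.Ds_val
  rw [insert_Ds] at hS
  have hly := c.logy
  have hy0 : (0 : ℝ) < y := by exact_mod_cast (by linarith [c.y3] : 0 < y)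
  have hyk := c.yk
  have hk1 := c.hk
  have hyk' : 4 * (k + 1) ≤ y := by nlinarith
  have hcmp := star_cmp c.hk hyk' (insert 0 D) (card0 v) (L ^ (k + 1)) (one_le_pow₀ c.L1) (by
    intro e he
    rw [mem_insert] at he
    rcases he with rfl | he
    · simp; positivity
    · exact le_sup v he)
  have hexp : Real.exp (2 * k * (k + 1) ^ 2 * Real.log (L ^ (k + 1)) / (y * Real.log y)) ≤ 1 + c0 k * η / 8 := by
    refine le_trans (Real.exp_le_exp.2 ?_) hκ
    rw [Real.log_pow, c.Ll, div_le_div_iff₀ (by positivity) hly]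
    have := c.yl
    push_cast
    calc 2 * (k : ℝ) * (k + 1) ^ 2 * ((k + 1) * l) * Real.log y
        ≤ 2 * (k : ℝ) * (k + 1) ^ 2 * ((k + 1) * (16 * y)) * Real.log y := by gcongr
      _ = _ := by ring
  have hS2 : singSeries (insert 0 D) ≤ (1 + c0 k * η / 8) * singSeries (starE k y) :=
    hcmp.trans (by gcongr)
  have hc0 := c0_pos k
  have hc0' := c0_le k
  set a := c0 k * η with ha
  have ha0 : 0 < a := by positivity
  have ha1 : a ≤ 1 / 4 := by nlinarith
  have g1 : singSeries (insert 0 D) * U * (1 - a / 4) ≤ (1 + a / 8) * singSeries (starE k y) * U * (1 - a / 4) := by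
    have : 0 ≤ 1 - a / 4 := by linarith
    gcongr
  have g2 : (1 + a / 8) * singSeries (starE k y) * U * (1 - a / 4) < singSeries (starE k y) * U * (1 - ρ) := by
    have : (1 + a / 8) * singSeries (starE k y) * U * (1 - a / 4) =
      singSeries (starE k y) * U * ((1 + a / 8) * (1 - a / 4)) := by ring
    rw [this]
    apply mul_lt_mul_of_pos_left _ (by positivity)
    nlinarith
  linarith

end Ctx



lemma sup_scale (F : Finset ℕ) (p : ℕ) : (F.image (p * ·)).sup id = p * F.sup id := by
  induction F using Finset.induction_on with
  | empty => simp
  | insert a s ha ih =>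
    rw [image_insert, sup_insert, sup_insert, ih]
    simp only [id]
    exact (Nat.mul_max_mul_left p a _ )

lemma insert_scale (F : Finset ℕ) (p : ℕ) : insert 0 (F.image (p * ·)) = (insert 0 F).image (p * ·) := by
  rw [image_insert]; simp

lemma theta_lower : ∃ N0 : ℕ, ∀ n : ℕ, N0 ≤ n → (n : ℝ) ≤ 3 * Chebyshev.theta n := by
  have h1 : (fun n : ℕ => Real.log ((n : ℝ) + 1)) =o[Filter.atTop] (fun n : ℕ => (n : ℝ) + 1) :=
    Real.isLittleO_log_id_atTop.comp_tendsto
      (Filter.tendsto_atTop_add_const_right _ _ tendsto_natCast_atTop_atTop)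
  have h2 : (fun n : ℕ => Real.log (n : ℝ)) =o[Filter.atTop] (fun n : ℕ => (n : ℝ) ^ (1 / 2 : ℝ)) :=
    (isLittleO_log_rpow_atTop (by norm_num)).comp_tendsto tendsto_natCast_atTop_atTop
  have e1 := h1.bound (show (0 : ℝ) < 1 / 20 by norm_num)
  have e2 := h2.bound (show (0 : ℝ) < 1 / 20 by norm_num)
  obtain ⟨N0, hN⟩ := Filter.eventually_atTop.1 ((e1.and e2).and (Filter.eventually_ge_atTop 1))
  refine ⟨N0, fun n hn => ?_⟩
  obtain ⟨⟨a, b⟩, h1n⟩ := hN n hn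
  have h1n' : (1 : ℝ) ≤ n := by exact_mod_cast h1n
  have h := Chebyshev.theta_ge n
  rw [Real.norm_of_nonneg (Real.log_nonneg (by linarith)), Real.norm_of_nonneg (by linarith)] at a
  rw [Real.norm_of_nonneg (Real.log_nonneg (by linarith)), Real.norm_of_nonneg (by positivity),
    ← Real.sqrt_eq_rpow] at b
  have hs := Real.mul_self_sqrt (show (0 : ℝ) ≤ n by linarith)
  have hs0 := Real.sqrt_nonneg (n : ℝ)
  have h3 : 2 * Real.sqrt n * Real.log n ≤ 1 / 10 * n := by nlinarith
  have h4 := Real.log_two_gt_d9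
  nlinarith

lemma exists_prime_not_dvd {N0 : ℕ} (hN : ∀ n : ℕ, N0 ≤ n → (n : ℝ) ≤ 3 * Chebyshev.theta n) {g : ℕ} (hg : 0 < g)
    {l : ℝ} (hl1 : 1 ≤ l) (hl : N0 + 1 ≤ 5 * l) (hgl : Real.log g ≤ l) :
    ∃ q : ℕ, q.Prime ∧ ¬ q ∣ g ∧ (q : ℝ) ≤ 5 * l := by
  have hex : ∃ q : ℕ, q.Prime ∧ ¬ q ∣ g := by
    obtain ⟨q, h1, h2⟩ := Nat.exists_infinite_primes (g + 1)
    exact ⟨q, h2, fun h => by have := Nat.le_of_dvd hg h; omega⟩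
  classical
  refine ⟨Nat.find hex, (Nat.find_spec hex).1, (Nat.find_spec hex).2, ?_⟩
  set q := Nat.find hex with hq
  have hqp : q.Prime := (Nat.find_spec hex).1
  have hd : primorial (q - 1) ∣ g := by
    apply Finset.prod_primes_dvd
    · intro a ha
      exact (Finset.mem_filter.1 ha).2.prime
    · intro a ha
      rw [Finset.mem_filter, mem_range] at ha
      by_contra h
      have := hqp.two_le
      exact Nat.find_min hex (m := a) (by omega) ⟨ha.2, h⟩
  have h1 : Chebyshev.theta ((q - 1 : ℕ) : ℝ) ≤ l := by
    rw [Chebyshev.theta_eq_log_primorial, Nat.floor_natCast]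
    refine le_trans (Real.log_le_log (by exact_mod_cast primorial_pos _) ?_) hgl
    exact_mod_cast Nat.le_of_dvd hg hd
  have h2 : ((q - 1 : ℕ) : ℝ) + 1 = q := by
    have := hqp.two_le
    exact_mod_cast (by omega : q - 1 + 1 = q)
  by_cases h : N0 ≤ q - 1
  · have := hN _ h
    linarith
  · have : q ≤ N0 := by omega
    have : (q : ℝ) ≤ N0 := by exact_mod_cast this
    linarith

lemma two_le_nu {E : Finset ℕ} {q f : ℕ} (h0 : 0 ∈ E) (hf : f ∈ E) (hq : ¬ q ∣ f) : 2 ≤ nu E q := by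
  unfold nu
  have : ({0, f % q} : Finset ℕ) ⊆ E.image (· % q) := by
    intro a ha
    rw [mem_insert, mem_singleton] at ha
    rw [mem_image]
    rcases ha with rfl | rfl
    · exact ⟨0, h0, Nat.zero_mod _⟩
    · exact ⟨f, hf, rfl⟩
  have h := card_le_card this
  rwa [card_pair] at h
  intro h'
  exact hq (Nat.dvd_of_mod_eq_zero h'.symm)

lemma nu_eq_one {E : Finset ℕ} {p : ℕ} (h0 : 0 ∈ E) (h : ∀ e ∈ E, p ∣ e) : nu E p = 1 := by
  unfold nu
  rw [card_eq_one]
  refine ⟨0, ?_⟩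
  ext a
  rw [mem_image, mem_singleton]
  constructor
  · rintro ⟨e, he, rfl⟩
    exact Nat.mod_eq_zero_of_dvd (h e he)
  · rintro rfl
    exact ⟨0, h0, Nat.zero_mod _⟩

/-- dividing out a prime -/
lemma exists_F {D : Finset ℕ} {p : ℕ} (hp : p.Prime) (h0 : ∀ d ∈ D, 0 < d) (h : ∀ d ∈ D, p * p ∣ d) :
    ∃ F : Finset ℕ, D = F.image (p * ·) ∧ F.card = D.card ∧ (∀ d ∈ F, 0 < d) ∧ (∀ d ∈ F, p ∣ d) ∧
      D.sup id = p * F.sup id ∧ insert 0 D = (insert 0 F).image (p * ·) ∧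
      singSeries (insert 0 D) = singSeries (insert 0 F) := by
  have hD : D = (D.image (· / p)).image (p * ·) := by
    rw [image_image]
    ext a
    rw [mem_image]
    constructor
    · intro ha
      exact ⟨a, ha, Nat.mul_div_cancel' (dvd_trans (dvd_mul_right p p) (h a ha))⟩
    · rintro ⟨b, hb, hba⟩
      have : p * (b / p) = b := Nat.mul_div_cancel' (dvd_trans (dvd_mul_right p p) (h b hb))
      simp only [Function.comp] at hba
      rw [← hba, this]; exact hb
  set F := D.image (· / p) with hF
  have hdv : ∀ d ∈ F, p ∣ d := by
    intro f hf
    have : p * f ∈ D := by rw [hD]; exact mem_image_of_mem _ hf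
    exact Nat.dvd_of_mul_dvd_mul_left hp.pos (h _ this)
  have hi : insert 0 D = (insert 0 F).image (p * ·) := by
    rw [← insert_scale, ← hD]
  refine ⟨F, hD, ?_, ?_, hdv, ?_, hi, ?_⟩
  · conv_rhs => rw [hD]
    rw [card_scale hp.pos]
  · intro f hf
    have : p * f ∈ D := by rw [hD]; exact mem_image_of_mem _ hf
    exact Nat.pos_of_mul_pos_left (h0 _ this)
  · conv_lhs => rw [hD]
    rw [sup_scale]
  · rw [hi]
    apply singSeries_scale_one hp ⟨0, mem_insert_self _ _⟩
    apply nu_eq_one (mem_insert_self _ _)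
    intro e he
    rw [mem_insert] at he
    rcases he with rfl | he
    · exact dvd_zero _
    · exact hdv e he

namespace Ctx

variable {k : ℕ} {x U L l ε C : ℝ} {y : ℕ} {D : Finset ℕ}

lemma step3 (c : Ctx k x U L l ε C y) (v : Val k L D) (hD : IsChampion k x D) {p : ℕ} (hp : p.Prime)
    (hpD : ∀ d ∈ D, p * p ∣ d) {N0 : ℕ} (hN : ∀ n : ℕ, N0 ≤ n → (n : ℝ) ≤ 3 * Chebyshev.theta n)
    (hNl : N0 + 1 ≤ 5 * l) {δ : ℝ} (hδ0 : 0 < δ) (hδ1 : δ ≤ 1 / 3)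
    (hτ : 7 * ε / l ^ 2 + 10 * C1 k * δ / l + 4 * C1 k * Real.sqrt L / L < 1 / (5 * l)) :
    δ * L / l ^ 2 < ((D.sup id : ℕ) : ℝ) := by
  by_contra hM
  push Not at hM
  have hL := c.L2
  have hU := c.U0
  have hl := c.l1
  have hε := c.ε0
  have hS := S_pos v
  have hC := C1_pos k
  obtain ⟨F, hDF, hFc, hF0, hFp, hsup, hins, hSF⟩ := exists_F hp v.pos hpD
  have hne := c.nonempty v
  have hMpos : 0 < D.sup id := by
    obtain ⟨d, hd⟩ := hne
    exact lt_of_lt_of_le (v.pos d hd) (Finset.le_sup (f := id) hd)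
  have hg0 : 0 < D.gcd id := by
    obtain ⟨d, hd⟩ := hne
    exact Nat.pos_of_ne_zero fun h => (v.pos d hd).ne' (Finset.gcd_eq_zero_iff.1 h d hd)
  have hgM : D.gcd id ≤ D.sup id := by
    obtain ⟨d, hd⟩ := hne
    exact (Nat.le_of_dvd (v.pos d hd) (Finset.gcd_dvd hd)).trans (Finset.le_sup (f := id) hd)
  have hl2 : 1 ≤ l ^ 2 := one_le_pow₀ hl
  have hML : ((D.sup id : ℕ) : ℝ) ≤ L := by
    refine hM.trans ?_
    rw [div_le_iff₀ (by positivity)]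
    nlinarith
  have hgl : Real.log (D.gcd id : ℕ) ≤ l := by
    rw [← c.Ll]
    apply Real.log_le_log (by exact_mod_cast hg0)
    exact le_trans (by exact_mod_cast hgM) hML
  obtain ⟨q, hq, hqg, hql⟩ := exists_prime_not_dvd hN hg0 hl hNl hgl
  have hexd : ∃ f ∈ F, ¬ q ∣ f := by
    by_contra hcon
    push Not at hcon
    apply hqg
    apply Finset.dvd_gcd
    intro d hd
    rw [hDF, mem_image] at hd
    obtain ⟨f, hf, rfl⟩ := hd
    exact dvd_mul_of_dvd_right (hcon f hf) _
  obtain ⟨f, hf, hqf⟩ := hexd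
  have hnu : 2 ≤ nu (insert 0 F) q := two_le_nu (mem_insert_self _ _) (mem_insert_of_mem hf) hqf
  have hsc := singSeries_scale_two hq ⟨0, mem_insert_self _ _⟩ hnu
  rw [← hSF, ← insert_scale] at hsc
  set D' := F.image (q * ·) with hD'
  have hq0 : (0 : ℝ) < q := by exact_mod_cast hq.pos
  have hM' : ((D'.sup id : ℕ) : ℝ) ≤ 5 / 2 * δ * L / l := by
    rw [hD', sup_scale]
    have h2p : (2 : ℝ) ≤ p := by exact_mod_cast hp.two_le
    have hs' : ((D.sup id : ℕ) : ℝ) = p * ((F.sup id : ℕ) : ℝ) := by rw [hsup]; push_cast; ring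
    have hF2 : ((F.sup id : ℕ) : ℝ) ≤ δ * L / l ^ 2 / 2 := by
      have : (0 : ℝ) ≤ ((F.sup id : ℕ) : ℝ) := by positivity
      nlinarith
    push_cast
    calc (q : ℝ) * ((F.sup id : ℕ) : ℝ) ≤ (5 * l) * (δ * L / l ^ 2 / 2) := by gcongr
      _ = _ := by field_simp
  have hSD' : 0 < singSeries (insert 0 D') := by
    have : 0 < singSeries (insert 0 D) * ((q : ℝ) + 1) := by positivity
    exact pos_of_mul_pos_left (lt_of_lt_of_le this hsc) hq0.le
  have v' : Val k L D' := by
    refine ⟨by rw [hD', card_scale hq.pos, hFc, v.card], ?_, ?_, hSD'.ne'⟩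
    · intro d hd
      rw [hD', mem_image] at hd
      obtain ⟨f, hf, rfl⟩ := hd
      exact Nat.mul_pos hq.pos (hF0 f hf)
    · refine hM'.trans (le_trans ?_ c.L_le_pow)
      rw [div_le_iff₀ (by positivity)]
      nlinarith
  have hch : (Ncham x D' : ℝ) ≤ Ncham x D := by exact_mod_cast hD.2.2 _ v'.card v'.pos
  have hlo := c.lower' v'
  have hup : (Ncham x D : ℝ) ≤ singSeries (insert 0 D) * U * (1 + ε / l ^ 2) := by
    have h1 : (Ncham x D : ℝ) ≤ primePi x (insert 0 D) := by
      exact_mod_cast Ncham_le_primePi c.x0 hne v.pos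
    have h2 := (abs_le.1 (c.pi1 v)).2
    have e : singSeries (insert 0 D) * U * (1 + ε / l ^ 2) =
      singSeries (insert 0 D) * U + ε * singSeries (insert 0 D) * U / l ^ 2 := by ring
    rw [e]; linarith
  set τ := 3 * ε / l ^ 2 + 5 * C1 k * δ / l + 2 * C1 k * Real.sqrt L / L with hτd
  have hlo2 : singSeries (insert 0 D') * U * (1 - τ) ≤ Ncham x D' := by
    refine le_trans (mul_le_mul_of_nonneg_left ?_ (by positivity)) hlo
    have : 2 * C1 k * (((D'.sup id : ℕ) : ℝ) + Real.sqrt L) / L ≤ 5 * C1 k * δ / l + 2 * C1 k * Real.sqrt L / L := by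
      calc _ ≤ 2 * C1 k * (5 / 2 * δ * L / l + Real.sqrt L) / L := by gcongr
        _ = _ := by field_simp
    rw [hτd]; linarith
  set u := 1 / (5 * l) with hu
  have hu0 : 0 < u := by positivity
  have hu1 : u ≤ 1 := by
    rw [hu, div_le_one (by positivity)]; linarith
  have hτ0 : 0 ≤ τ := by positivity
  have hτu : 2 * τ + ε / l ^ 2 < u := by
    refine lt_of_eq_of_lt ?_ hτ
    rw [hτd]; ring
  have hee : 0 < ε / l ^ 2 := by positivity
  have hS' : singSeries (insert 0 D) * (1 + u) ≤ singSeries (insert 0 D') := by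
    have : u ≤ 1 / q := one_div_le_one_div_of_le hq0 hql
    have h2 : singSeries (insert 0 D) * (1 + 1 / q) ≤ singSeries (insert 0 D') := by
      have e : singSeries (insert 0 D) * (1 + 1 / q) = singSeries (insert 0 D) * ((q : ℝ) + 1) / q := by field_simp
      rw [e, div_le_iff₀ hq0]; exact hsc
    refine le_trans ?_ h2
    gcongr
  have f1 : singSeries (insert 0 D) * (1 + u) * U * (1 - τ) ≤ singSeries (insert 0 D') * U * (1 - τ) := by
    have : 0 ≤ 1 - τ := by linarith
    gcongr
  have f2 : singSeries (insert 0 D) * U * (1 + ε / l ^ 2) < singSeries (insert 0 D) * U * ((1 + u) * (1 - τ)) := by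
    apply mul_lt_mul_of_pos_left _ (by positivity)
    nlinarith
  linarith

end Ctx



lemma not_sq_dvd_M0 {k p : ℕ} (hp : p.Prime) : ¬ p * p ∣ M0 k := by
  intro h
  have hpM : p ∣ M0 k := (dvd_mul_right p p).trans h
  have hm : p ∈ PR (KK k + 1) := by
    have : p ∣ ∏ q ∈ PR (KK k + 1), q := hpM
    rw [Prime.dvd_finsetProd_iff hp.prime] at this
    obtain ⟨q, hq, hpq⟩ := this
    rwa [(Nat.prime_dvd_prime_iff_eq hp (mem_PR.1 hq).2).1 hpq]
  have e : M0 k = p * ∏ q ∈ (PR (KK k + 1)).erase p, q := (Finset.mul_prod_erase _ (fun q => q) hm).symm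
  rw [e] at h
  have h2 := Nat.dvd_of_mul_dvd_mul_left hp.pos h
  rw [Prime.dvd_finsetProd_iff hp.prime] at h2
  obtain ⟨q, hq, hpq⟩ := h2
  rw [mem_erase] at hq
  exact hq.1 ((Nat.prime_dvd_prime_iff_eq hp (mem_PR.1 hq.2).2).1 hpq).symm

lemma le_of_dvd_M0 {k p : ℕ} (hp : p.Prime) (h : p ∣ M0 k) : p ≤ KK k := by
  have : p ∣ ∏ q ∈ PR (KK k + 1), q := h
  rw [Prime.dvd_finsetProd_iff hp.prime] at this
  obtain ⟨q, hq, hpq⟩ := this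
  have := (Nat.prime_dvd_prime_iff_eq hp (mem_PR.1 hq).2).1 hpq
  have := (mem_PR.1 hq).1
  omega

lemma not_sq_dvd_mul {k p i : ℕ} (hp : p.Prime) (hi : ¬ p ∣ i) : ¬ p * p ∣ M0 k * i := by
  intro h
  have hc : Nat.Coprime p i := (Nat.Prime.coprime_iff_not_dvd hp).2 hi
  exact not_sq_dvd_M0 hp ((hc.mul_left hc).dvd_of_dvd_mul_right h)

/-- third saving constant -/
noncomputable def c3 (k : ℕ) : ℝ := 1 / (8 * (M0 k : ℝ) * (KK k + 1))

lemma c3_pos (k : ℕ) : 0 < c3 k := by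
  have : (0 : ℝ) < M0 k := by exact_mod_cast M0_pos k
  unfold c3; positivity

/-- many multiples -/
lemma card_G {p m M : ℕ} (hp : 2 ≤ p) (hm : 0 < m) (hM : 2 * m ≤ M) :
    (M : ℝ) / (4 * m) ≤ (((Finset.Ioc 0 ((M - 1) / m)).filter (fun i => ¬ p ∣ i)).card : ℝ) := by
  set I := (M - 1) / m with hI
  have h1 := Finset.card_filter_add_card_filter_not (s := Finset.Ioc 0 I) (fun i => p ∣ i)
  rw [Nat.Ioc_filter_dvd_card_eq_div, Nat.card_Ioc] at h1
  set c := ((Finset.Ioc 0 I).filter (fun i => ¬ p ∣ i)).card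
  have h2 : I / p ≤ I / 2 := Nat.div_le_div_left hp (by norm_num)
  have h3 : I ≤ 2 * c := by omega
  have h4 : M ≤ (I + 1) * m := by
    have := Nat.lt_div_mul_add (a := M - 1) hm
    rw [← hI] at this
    rw [add_mul, one_mul]; omega
  have h3' : (I : ℝ) ≤ 2 * c := by exact_mod_cast h3
  have h4' : (M : ℝ) ≤ (I + 1) * m := by exact_mod_cast h4
  have h5 : 2 * (m : ℝ) ≤ M := by exact_mod_cast hM
  have hm' : (0 : ℝ) < m := by exact_mod_cast hm
  rw [div_le_iff₀ (by positivity)]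
  nlinarith

namespace Ctx

variable {k : ℕ} {x U L l ε C : ℝ} {y : ℕ} {D : Finset ℕ}

lemma gap_gain (v : Val k L D) {p : ℕ} (hp : p.Prime) (hpD : ∀ d ∈ D, p * p ∣ d) {F : Finset ℕ}
    (hDF : D = F.image (p * ·)) (hsup : D.sup id = p * F.sup id)
    (hins : insert 0 D = (insert 0 F).image (p * ·)) (hM : 2 * M0 k ≤ D.sup id) :
    ∑ j ∈ gapJ F, singSeries (insert j (insert 0 F)) + c3 k * ((D.sup id : ℕ) : ℝ) * singSeries (insert 0 D) ≤
      ∑ j ∈ gapJ D, singSeries (insert j (insert 0 D)) := by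
  have hS := S_pos v
  set S := singSeries (insert 0 D) with hSdef
  set M := D.sup id with hMdef
  have hinj : Function.Injective (p * · : ℕ → ℕ) := fun a b h => Nat.eq_of_mul_eq_mul_left hp.pos h
  set J' := (gapJ F).image (p * ·) with hJ'
  set G := ((Finset.Ioc 0 ((M - 1) / M0 k)).filter (fun i => ¬ p ∣ i)).image (M0 k * ·) with hG
  have hJ'D : J' ⊆ gapJ D := by
    intro j hj
    rw [hJ', mem_image] at hj
    obtain ⟨j', hj', rfl⟩ := hj
    unfold gapJ at hj' ⊢
    rw [mem_sdiff, mem_range] at hj' ⊢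
    refine ⟨?_, ?_⟩
    · rw [← hMdef, hsup]; exact Nat.mul_lt_mul_of_pos_left hj'.1 hp.pos
    · rw [hins, mem_image]
      rintro ⟨a, ha, hae⟩
      exact hj'.2 (hinj hae ▸ ha)
  have hGm : ∀ j ∈ G, ∃ i, ¬ p ∣ i ∧ j = M0 k * i ∧ 0 < j ∧ j < M := by
    intro j hj
    rw [hG, mem_image] at hj
    obtain ⟨i, hi, rfl⟩ := hj
    rw [mem_filter, mem_Ioc] at hi
    refine ⟨i, hi.2, rfl, Nat.mul_pos (M0_pos k) hi.1.1, ?_⟩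
    have h1 : M0 k * i ≤ M - 1 := (Nat.mul_le_mul_left _ hi.1.2).trans (Nat.mul_div_le _ _)
    have := M0_pos k
    omega
  have hGD : G ⊆ gapJ D := by
    intro j hj
    obtain ⟨i, hi, hji, h0, hlt⟩ := hGm j hj
    unfold gapJ
    rw [mem_sdiff, mem_range, mem_insert]
    refine ⟨hlt, ?_⟩
    rintro (h | h)
    · omega
    · have := hpD j h
      rw [hji] at this
      exact not_sq_dvd_mul hp hi this
  have hGc : (M : ℝ) / (4 * M0 k) ≤ G.card := by
    rw [hG, card_scale (M0_pos k)]
    exact card_G hp.two_le (M0_pos k) hM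
  set s := S / (2 * ((KK k : ℝ) + 1)) with hs
  have hs0 : 0 ≤ s := by positivity
  have hins2 : ∀ j', insert (p * j') (insert 0 D) = (insert j' (insert 0 F)).image (p * ·) := by
    intro j'
    rw [image_insert, hins]
  have hpt : ∀ j ∈ gapJ D, (if j ∈ J' then singSeries (insert (j / p) (insert 0 F)) else 0) +
      (if j ∈ G then s else 0) ≤ singSeries (insert j (insert 0 D)) := by
    intro j hj
    have hjn := (mem_sdiff.1 hj).2
    have hGS : j ∈ G → S / 2 ≤ singSeries (insert j (insert 0 D)) := by
      intro hjG
      obtain ⟨i, hi, hji, h0, hlt⟩ := hGm j hjG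
      have := S_mul v hjn (hji ▸ dvd_mul_right _ _)
      linarith
    by_cases hJ : j ∈ J'
    · rw [if_pos hJ]
      rw [hJ', mem_image] at hJ
      obtain ⟨j', hj', hjj⟩ := hJ
      subst hjj
      rw [Nat.mul_div_cancel_left _ hp.pos]
      by_cases hGj : p * j' ∈ G
      · rw [if_pos hGj]
        have h1 := hGS hGj
        obtain ⟨i, hi, hji, h0, hlt⟩ := hGm _ hGj
        have hpM : p ∣ M0 k := by
          have : p ∣ M0 k * i := hji ▸ dvd_mul_right _ _
          exact (hp.dvd_mul.1 this).resolve_right hi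
        have hpK : (p : ℝ) ≤ KK k := by exact_mod_cast le_of_dvd_M0 hp hpM
        have hpj : ¬ p ∣ j' := by
          intro h
          apply not_sq_dvd_mul (k := k) hp hi
          rw [← hji]
          exact Nat.mul_dvd_mul_left p h
        have h2 := singSeries_scale_two hp ⟨j', mem_insert_self _ _⟩
          (two_le_nu (E := insert j' (insert 0 F)) (mem_insert_of_mem (mem_insert_self _ _)) (mem_insert_self _ _) hpj)
        rw [← hins2] at h2
        set W := singSeries (insert (p * j') (insert 0 D))
        set V := singSeries (insert j' (insert 0 F))
        have hp0 : (0 : ℝ) < p := by exact_mod_cast hp.pos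
        have h3 : V ≤ W * p / (p + 1) := by
          rw [le_div_iff₀ (by positivity)]; exact h2
        have h4 : W * p / (p + 1) = W - W / (p + 1) := by field_simp; ring
        have h5 : s ≤ W / (p + 1) := by
          have : s = S / 2 / ((KK k : ℝ) + 1) := by rw [hs]; field_simp
          rw [this]
          have hW0 : 0 ≤ W := by linarith
          gcongr
        linarith
      · rw [if_neg hGj, add_zero, hins2]
        exact singSeries_scale_ge hp ⟨j', mem_insert_self _ _⟩
    · rw [if_neg hJ, zero_add]
      by_cases hGj : j ∈ G
      · rw [if_pos hGj]
        refine le_trans ?_ (hGS hGj)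
        rw [hs]
        apply div_le_div_of_nonneg_left hS.le (by norm_num)
        have : (0 : ℝ) ≤ KK k := by positivity
        linarith
      · rw [if_neg hGj]
        exact singSeries_nonneg _
  have hsum := Finset.sum_le_sum hpt
  rw [Finset.sum_add_distrib, ← Finset.sum_filter, ← Finset.sum_filter, Finset.filter_mem_eq_inter,
    Finset.filter_mem_eq_inter, inter_eq_right.2 hJ'D, inter_eq_right.2 hGD, sum_const, nsmul_eq_mul, hJ',
    Finset.sum_image (fun a _ b _ h => hinj h)] at hsum
  have e1 : ∑ j ∈ gapJ F, singSeries (insert (p * j / p) (insert 0 F)) =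
      ∑ j ∈ gapJ F, singSeries (insert j (insert 0 F)) := by
    apply Finset.sum_congr rfl
    intro j _
    rw [Nat.mul_div_cancel_left _ hp.pos]
  rw [e1] at hsum
  have e2 : c3 k * (M : ℝ) * S ≤ G.card * s := by
    have hM0 : (0 : ℝ) < M0 k := by exact_mod_cast M0_pos k
    calc c3 k * (M : ℝ) * S = (M : ℝ) / (4 * M0 k) * s := by
          rw [hs]; unfold c3; field_simp; ring
      _ ≤ _ := by gcongr
  linarith

lemma step4 (c : Ctx k x U L l ε C y) (v : Val k L D) (hD : IsChampion k x D) {p : ℕ} (hp : p.Prime)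
    (hpD : ∀ d ∈ D, p * p ∣ d) {δ η : ℝ} (h1 : δ * L / l ^ 2 < ((D.sup id : ℕ) : ℝ))
    (h2 : ((D.sup id : ℕ) : ℝ) ≤ η * L) (h3 : Real.sqrt L ≤ δ * L / l ^ 2) (h4 : 2 * (M0 k : ℝ) ≤ δ * L / l ^ 2)
    (h5 : 2 * C1 k * ε ≤ c3 k / 4) (h6 : C2 k C * η ≤ c3 k / 4) (h7 : 20 * ε ≤ c3 k * δ) : False := by
  have hL := c.L2
  have hU := c.U0
  have hl := c.l1
  have hε := c.ε0
  have hS := S_pos v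
  have hC := C1_pos k
  have hc3 := c3_pos k
  obtain ⟨F, hDF, hFc, hF0, hFp, hsup, hins, hSF⟩ := exists_F hp v.pos hpD
  have vF : Val k L F := by
    refine ⟨by rw [hFc, v.card], hF0, le_trans ?_ v.sup, by rw [← hSF]; exact v.ne⟩
    rw [hsup]
    exact_mod_cast Nat.le_mul_of_pos_left _ hp.pos
  have hM0 : 2 * M0 k ≤ D.sup id := by
    have : (2 : ℝ) * M0 k ≤ ((D.sup id : ℕ) : ℝ) := by linarith
    exact_mod_cast this
  have hgain := gap_gain v hp hpD hDF hsup hins hM0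
  have hch : (Ncham x F : ℝ) ≤ Ncham x D := by exact_mod_cast hD.2.2 _ vF.card vF.pos
  have hlo := c.lower vF
  rw [← hSF] at hlo
  have h4y : 4 ^ y ≤ D.sup id := by
    have := c.four_le_sqrt
    have : (4 : ℝ) ^ y ≤ ((D.sup id : ℕ) : ℝ) := by linarith
    exact_mod_cast this
  have hsub := gapJ_sub (D := D) le_rfl
  have hup := c.upper v (D.sup id) h4y v.sup (gapJ D) (hsub.trans sdiff_subset) le_rfl
  have hmv := c.mv v (D.sup id) h4y (v.sup.trans (pow_le_pow_right₀ c.L1 (by omega))) (gapJ D) hsub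
  set A := ∑ j ∈ gapJ D, singSeries (insert j (insert 0 D))
  set B := ∑ j ∈ gapJ F, singSeries (insert j (insert 0 F))
  set S := singSeries (insert 0 D)
  set M : ℝ := ((D.sup id : ℕ) : ℝ) with hM
  have hMp : 0 < M := by linarith [c.sqrt_ge]
  set lam := M / L with hlam
  have hlam0 : 0 < lam := by positivity
  have hMe : M = lam * L := by rw [hlam]; field_simp
  have hl1 : lam ≤ η := by rw [hlam, div_le_iff₀ (by linarith)]; exact h2
  have hl2 : δ / l ^ 2 ≤ lam := by
    rw [hlam, le_div_iff₀ (by linarith)]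
    have : δ / l ^ 2 * L = δ * L / l ^ 2 := by ring
    rw [this]; exact h1.le
  have hUL : 0 < U / L := by positivity
  have key : (c3 k - 2 * ε * C1 k) * M * S ≤ (1 - ε) * A - (1 + ε) * B := by
    have hBA : B ≤ A := by
      have : 0 ≤ c3 k * M * S := by positivity
      linarith
    nlinarith
  have key2 := mul_le_mul_of_nonneg_left key hUL.le
  have e1 : U / L * ((c3 k - 2 * ε * C1 k) * M * S) = S * U * ((c3 k - 2 * ε * C1 k) * lam) := by
    rw [hMe]; field_simp
  rw [e1] at key2
  have key3 : S * U * ((c3 k - 2 * ε * C1 k) * lam) ≤ S * U * (5 * (ε / l ^ 2) + C2 k C * lam ^ 2) := by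
    have e2 : S * U * (1 + 2 * ε / l ^ 2 + C2 k C * lam ^ 2) - S * U * (1 - 3 * ε / l ^ 2) =
      S * U * (5 * (ε / l ^ 2) + C2 k C * lam ^ 2) := by ring
    rw [← e2]
    linarith
  have key4 := le_of_mul_le_mul_left key3 (by positivity)
  have g1 : C2 k C * lam ^ 2 ≤ c3 k / 4 * lam := by
    have := c.C2_pos
    calc C2 k C * lam ^ 2 = C2 k C * lam * lam := by ring
      _ ≤ C2 k C * η * lam := by gcongr
      _ ≤ _ := by gcongr
  have g2 : 5 * (ε / l ^ 2) ≤ c3 k / 4 * lam := by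
    calc 5 * (ε / l ^ 2) = (20 * ε) / l ^ 2 / 4 := by ring
      _ ≤ (c3 k * δ) / l ^ 2 / 4 := by gcongr
      _ = c3 k / 4 * (δ / l ^ 2) := by ring
      _ ≤ _ := by gcongr
  have g3 : 2 * ε * C1 k * lam ≤ c3 k / 4 * lam := by
    apply mul_le_mul_of_nonneg_right _ hlam0.le; linarith
  nlinarith

end Ctx



lemma ev_sqrt (a : ℝ) : ∀ᶠ x : ℝ in Filter.atTop,
    a * (Real.log (Real.log x)) ^ 2 ≤ Real.sqrt (Real.log x) := by
  have h1 : ∀ᶠ l : ℝ in Filter.atTop, a * l ^ 2 ≤ Real.exp (l / 2) := by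
    have := (isLittleO_pow_exp_pos_mul_atTop (k := 2) (show (0 : ℝ) < 1 / 2 by norm_num)).bound
      (show (0 : ℝ) < 1 / (|a| + 1) by positivity)
    filter_upwards [this] with l hl
    rw [Real.norm_of_nonneg (by positivity), Real.norm_of_nonneg (by positivity), one_div_mul_eq_div,
      le_div_iff₀ (by positivity)] at hl
    have e : (1 / 2 : ℝ) * l = l / 2 := by ring
    rw [e] at hl
    have := le_abs_self a
    nlinarith [sq_nonneg l]
  have h2 := (Real.tendsto_log_atTop.comp Real.tendsto_log_atTop).eventually h1
  filter_upwards [h2, Real.tendsto_log_atTop.eventually (Filter.eventually_gt_atTop 0)] with x hx hL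
  simp only [Function.comp] at hx
  rwa [Real.exp_half, Real.exp_log hL] at hx

lemma ev_pow (n : ℕ) (a : ℝ) : ∀ᶠ x : ℝ in Filter.atTop, a * (Real.log x) ^ n ≤ x := by
  have := (Real.isLittleO_pow_log_id_atTop (n := n)).bound (show (0 : ℝ) < 1 / (|a| + 1) by positivity)
  filter_upwards [this, Filter.eventually_ge_atTop 1] with x hx h1
  have hl := Real.log_nonneg h1
  simp only [id] at hx
  rw [Real.norm_of_nonneg (by positivity), Real.norm_of_nonneg (by positivity), one_div_mul_eq_div,
    le_div_iff₀ (by positivity)] at hx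
  have := le_abs_self a
  have h0 : 0 ≤ Real.log x ^ n := by positivity
  nlinarith

/-- the auxiliary level -/
noncomputable def yy (x : ℝ) : ℕ := ⌊Real.log (Real.log x) / 8⌋₊

lemma tendsto_yy : Filter.Tendsto yy Filter.atTop Filter.atTop := by
  unfold yy
  exact tendsto_nat_floor_atTop.comp
    ((Real.tendsto_log_atTop.comp Real.tendsto_log_atTop).atTop_div_const (by norm_num))

lemma ev_logy (a : ℝ) : ∀ᶠ x : ℝ in Filter.atTop, a ≤ Real.log (yy x) :=
  (Real.tendsto_log_atTop.comp (tendsto_natCast_atTop_atTop.comp tendsto_yy)).eventually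
    (Filter.eventually_ge_atTop a)

lemma ev_exp (a b : ℝ) (hb : 0 < b) : ∀ᶠ x : ℝ in Filter.atTop, Real.exp (a / Real.log (yy x)) ≤ 1 + b := by
  have h1 : Filter.Tendsto (fun x : ℝ => Real.log (yy x)) Filter.atTop Filter.atTop :=
    Real.tendsto_log_atTop.comp (tendsto_natCast_atTop_atTop.comp tendsto_yy)
  have h2 : Filter.Tendsto (fun x : ℝ => a / Real.log (yy x)) Filter.atTop (nhds 0) := h1.const_div_atTop a
  have h3 := (Real.continuous_exp.tendsto 0).comp h2
  rw [Real.exp_zero] at h3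
  exact h3.eventually (eventually_le_nhds (by linarith))

lemma ev_ctx (k : ℕ) (hk : 1 ≤ k)
    (HL1 : ∀ ε : ℝ, 0 < ε → ∃ X : ℝ, ∀ x : ℝ, X ≤ x →
      ∀ D : Finset ℕ, D.card = k →
        (∀ d ∈ D, 2 ≤ d ∧ (d : ℝ) ≤ (Real.log x) ^ (k + 1)) →
        singSeries (insert 0 D) ≠ 0 →
        |(primePi x (insert 0 D) : ℝ) -
            singSeries (insert 0 D) * x / (Real.log x) ^ (k + 1)| ≤
          ε * singSeries (insert 0 D) * x /
            ((Real.log x) ^ (k + 1) * (Real.log (Real.log x)) ^ 2))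
    (HL2 : ∀ ε : ℝ, 0 < ε → ∃ X : ℝ, ∀ x : ℝ, X ≤ x →
      ∀ D : Finset ℕ, D.card = k + 1 →
        (∀ d ∈ D, 2 ≤ d ∧ (d : ℝ) ≤ (Real.log x) ^ (k + 1)) →
        singSeries (insert 0 D) ≠ 0 →
        |(primePi x (insert 0 D) : ℝ) -
            singSeries (insert 0 D) * x / (Real.log x) ^ (k + 2)| ≤
          ε * singSeries (insert 0 D) * x / (Real.log x) ^ (k + 2))
    {C XC : ℝ} (hC : 0 < C) (HC : ∀ x : ℝ, XC ≤ x → ∀ E : Finset ℕ, E.card = k + 3 →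
      (primePi x E : ℝ) ≤ C * singSeries E * x / (Real.log x) ^ (k + 3) + ((k + 3 : ℕ) : ℝ))
    {ε : ℝ} (hε : 0 < ε) (hε1 : ε ≤ 1 / 2) :
    ∀ᶠ x : ℝ in Filter.atTop, Ctx k x (x / (Real.log x) ^ (k + 1)) (Real.log x) (Real.log (Real.log x)) ε C (yy x) := by
  obtain ⟨X1, hX1⟩ := HL1 ε hε
  obtain ⟨X2, hX2⟩ := HL2 ε hε
  have hcS := cS_pos (k + 1)
  have tl := Real.tendsto_log_atTop.comp Real.tendsto_log_atTop
  filter_upwards [Filter.eventually_ge_atTop X1, Filter.eventually_ge_atTop X2, Filter.eventually_ge_atTop XC,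
    Filter.eventually_ge_atTop 1,
    Real.tendsto_log_atTop.eventually (Filter.eventually_ge_atTop 1),
    tl.eventually (Filter.eventually_ge_atTop 16), tl.eventually (Filter.eventually_ge_atTop (4 * (k : ℝ))),
    tendsto_yy.eventually (Filter.eventually_ge_atTop 3),
    tendsto_yy.eventually (Filter.eventually_ge_atTop (4 * (k + 1) ^ 2)),
    ev_pow (3 * k + 5) ((k + 3) / (ε * cS (k + 1)))] with x h1 h2 h3 hx1 hL hl hlk hy3 hyk hpow
  simp only [Function.comp] at hl hlk
  have hL0 : 0 < Real.log x := by linarith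
  have hx0 : 0 < x := by linarith
  have hfl : Real.log (Real.log x) / 8 - 1 < (yy x : ℝ) := Nat.sub_one_lt_floor _
  have hfl2 : (yy x : ℝ) ≤ Real.log (Real.log x) / 8 := Nat.floor_le (by linarith)
  set L := Real.log x with hLd
  set l := Real.log L with hld
  set y := yy x with hyd
  refine ⟨hk, by positivity, hL, by linarith, hε, hε1, hC, ?_, hy3, by omega, ?_, by linarith, rfl, ?_, ?_, ?_, ?_⟩
  · field_simp
  · have e1 : Real.sqrt L = Real.exp (l / 4) * Real.exp (l / 4) := by
      rw [← Real.exp_add, ← add_div]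
      have : (l + l) / 4 = l / 2 := by ring
      rw [this, Real.exp_half, hld, Real.exp_log hL0]
    have e2 : (k : ℝ) ≤ Real.exp (l / 4) := by
      have := Real.add_one_le_exp (l / 4)
      linarith
    have e3 : (4 : ℝ) ^ y ≤ Real.exp (l / 4) := by
      have h4 : (4 : ℝ) ≤ Real.exp 2 := by
        have := Real.exp_one_gt_d9
        have e : Real.exp 2 = Real.exp 1 * Real.exp 1 := by rw [← Real.exp_add]; norm_num
        rw [e]; nlinarith
      calc (4 : ℝ) ^ y ≤ (Real.exp 2) ^ y := pow_le_pow_left₀ (by norm_num) h4 y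
        _ = Real.exp (y * 2) := (Real.exp_nat_mul 2 y).symm
        _ ≤ _ := Real.exp_le_exp.2 (by linarith)
    rw [e1]
    gcongr
  · intro D hD hd hS
    have hl0 : 0 < l := by linarith
    have := hX1 x h1 D hD hd hS
    rw [← hLd, ← hld] at this
    convert this using 1
    · congr 2; ring
    · field_simp
  · intro D hD hd hS
    have := hX2 x h2 D hD hd hS
    rw [← hLd] at this
    convert this using 1
    · congr 2
      field_simp
      ring
    · field_simp
      ring
  · intro E hE
    have := HC x h3 E hE
    rw [← hLd] at this
    convert this using 1
    push_cast
    congr 1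
    field_simp
    ring
  · have hlL : l ≤ L := by
      have := Real.add_one_le_exp l
      rw [hld, Real.exp_log hL0] at this
      linarith
    have hl0 : 0 < l := by linarith
    have hp : ((k : ℝ) + 3) * L ^ (3 * k + 5) ≤ ε * cS (k + 1) * x := by
      rw [div_mul_eq_mul_div, div_le_iff₀ (by positivity)] at hpow
      linarith
    rw [le_div_iff₀ (by positivity), mul_div_assoc', le_div_iff₀ (by positivity)]
    refine le_trans ?_ hp
    calc ((k : ℝ) + 3) * (L ^ (k + 1)) ^ 2 * l ^ 2 * L ^ (k + 1) ≤
          ((k : ℝ) + 3) * (L ^ (k + 1)) ^ 2 * L ^ 2 * L ^ (k + 1) := by gcongr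
      _ = _ := by ring

set_option maxHeartbeats 1000000 in
theorem stmt15 (k : ℕ) (hk : 1 ≤ k)
    (HL1 : ∀ ε : ℝ, 0 < ε → ∃ X : ℝ, ∀ x : ℝ, X ≤ x →
      ∀ D : Finset ℕ, D.card = k →
        (∀ d ∈ D, 2 ≤ d ∧ (d : ℝ) ≤ (Real.log x) ^ (k + 1)) →
        singSeries (insert 0 D) ≠ 0 →
        |(primePi x (insert 0 D) : ℝ) -
            singSeries (insert 0 D) * x / (Real.log x) ^ (k + 1)| ≤
          ε * singSeries (insert 0 D) * x /
            ((Real.log x) ^ (k + 1) * (Real.log (Real.log x)) ^ 2))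
    (HL2 : ∀ ε : ℝ, 0 < ε → ∃ X : ℝ, ∀ x : ℝ, X ≤ x →
      ∀ D : Finset ℕ, D.card = k + 1 →
        (∀ d ∈ D, 2 ≤ d ∧ (d : ℝ) ≤ (Real.log x) ^ (k + 1)) →
        singSeries (insert 0 D) ≠ 0 →
        |(primePi x (insert 0 D) : ℝ) -
            singSeries (insert 0 D) * x / (Real.log x) ^ (k + 2)| ≤
          ε * singSeries (insert 0 D) * x / (Real.log x) ^ (k + 2)) :
    ∃ X : ℝ, ∀ x : ℝ, X ≤ x → ∀ D : Finset ℕ, IsChampion k x D →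
      Squarefree (D.gcd id) := by
  obtain ⟨C, hC, XC, HC⟩ := primePi_sieve (k + 3) (by omega)
  obtain ⟨N0, hN⟩ := theta_lower
  have hC1 := Ctx.C1_pos k
  have hC2 : 0 < Ctx.C2 k C := mul_pos hC (mul_pos (cM_pos _ _) (cM_pos _ _))
  have hc0 := Ctx.c0_pos k
  have hc0' := Ctx.c0_le k
  have hc3 := c3_pos k
  have hM0 : (0 : ℝ) < M0 k := by exact_mod_cast M0_pos k
  obtain ⟨η, hη0, hη1, hη2, hη3⟩ : ∃ η : ℝ, 0 < η ∧ η ≤ 1 ∧ Ctx.C2 k C * η ≤ Ctx.c0 k / 8 ∧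
      Ctx.C2 k C * η ≤ c3 k / 4 := by
    refine ⟨min 1 (min (Ctx.c0 k / 8 / Ctx.C2 k C) (c3 k / 4 / Ctx.C2 k C)), by positivity, min_le_left _ _, ?_, ?_⟩
    · rw [mul_comm, ← le_div_iff₀ hC2]
      exact (min_le_right _ _).trans (min_le_left _ _)
    · rw [mul_comm, ← le_div_iff₀ hC2]
      exact (min_le_right _ _).trans (min_le_right _ _)
  obtain ⟨δ, hδ0, hδ1, hδ2⟩ : ∃ δ : ℝ, 0 < δ ∧ δ ≤ 1 / 3 ∧ 10 * Ctx.C1 k * δ ≤ 1 / 20 := by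
    refine ⟨min (1 / 3) (1 / 20 / (10 * Ctx.C1 k)), by positivity, min_le_left _ _, ?_⟩
    rw [mul_comm, ← le_div_iff₀ (by positivity)]
    exact min_le_right _ _
  obtain ⟨ε, hε0, hε1, hε2, hε3, hε4⟩ : ∃ ε : ℝ, 0 < ε ∧ ε ≤ 1 / 280 ∧ 2 * Ctx.C1 k * ε ≤ c3 k / 4 ∧
      20 * ε ≤ c3 k * δ ∧ 96 * ε ≤ Ctx.c0 k * η := by
    refine ⟨min (min (1 / 280) (c3 k / 4 / (2 * Ctx.C1 k))) (min (c3 k * δ / 20) (Ctx.c0 k * η / 96)),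
      by positivity, (min_le_left _ _).trans (min_le_left _ _), ?_, ?_, ?_⟩
    · rw [mul_comm, ← le_div_iff₀ (by positivity)]
      exact (min_le_left _ _).trans (min_le_right _ _)
    · rw [mul_comm, ← le_div_iff₀ (by norm_num)]
      exact (min_le_right _ _).trans (min_le_left _ _)
    · rw [mul_comm, ← le_div_iff₀ (by norm_num)]
      exact (min_le_right _ _).trans (min_le_right _ _)
  have tl := Real.tendsto_log_atTop.comp Real.tendsto_log_atTop
  have hev : ∀ᶠ x : ℝ in Filter.atTop, ∀ D : Finset ℕ, IsChampion k x D → Squarefree (D.gcd id) := by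
    filter_upwards [ev_ctx k hk HL1 HL2 hC HC hε0 (by linarith), ev_pow (k + 1) 2, ev_logy (8 * k),
      ev_exp (32 * k * (k + 1) ^ 3) (Ctx.c0 k * η / 8) (by positivity),
      tl.eventually (Filter.eventually_ge_atTop ((N0 : ℝ) + 1)),
      ev_sqrt (80 * Ctx.C1 k), ev_sqrt (1 / δ), ev_sqrt (2 * M0 k), ev_sqrt (2 / η), ev_sqrt (2 * M0 k * (k + 2)),
      ev_sqrt (128 * Ctx.C1 k / (Ctx.c0 k * η))] with x c hU hy hexp hl s1 s2 s3 s4 s5 s6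
    simp only [Function.comp] at hl
    intro D hD
    have hL := c.L2
    have hl1 := c.l1
    have hsq := c.sqrt_sq
    have hsg := c.sqrt_ge
    set L := Real.log x with hLd
    set l := Real.log L with hld
    set s := Real.sqrt L with hs
    have hl2 : 1 ≤ l ^ 2 := one_le_pow₀ hl1
    have hs0 : 0 < s := by linarith
    have hdrop : ∀ a : ℝ, 0 ≤ a → a * l ^ 2 ≤ s → a ≤ s := fun a ha h =>
      (le_mul_of_one_le_right ha hl2).trans h
    have hsL : ∀ a : ℝ, a * s / L = a / s := by
      intro a
      rw [← hsq]; field_simp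
    have t2 : s ≤ δ * L / l ^ 2 := by
      rw [le_div_iff₀ (by positivity), ← hsq]
      rw [one_div_mul_eq_div, div_le_iff₀ hδ0] at s2
      have := mul_le_mul_of_nonneg_left s2 hs0.le
      linarith only [this]
    have t3 : 2 * (M0 k : ℝ) ≤ δ * L / l ^ 2 := (hdrop _ (by positivity) s3).trans t2
    have t4 : 2 * s ≤ η * L := by
      have := hdrop _ (by positivity) s4
      rw [div_le_iff₀ hη0] at this
      rw [← hsq]
      have := mul_le_mul_of_nonneg_right this hs0.le
      linarith only [this]
    have t5 : 2 * (M0 k : ℝ) * (k + 2) ≤ η * L := by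
      have := hdrop _ (by positivity) s5
      linarith
    have t6 : 4 * Ctx.C1 k * s / L ≤ Ctx.c0 k * η / 32 := by
      have := hdrop _ (by positivity) s6
      rw [div_le_iff₀ (by positivity)] at this
      rw [hsL, div_le_iff₀ hs0]
      linarith
    have hee : ε / l ^ 2 ≤ ε := div_le_self hε0.le hl2
    have hρ : 3 * ε / l ^ 2 + 4 * Ctx.C1 k * s / L ≤ Ctx.c0 k * η / 16 := by
      have : 3 * ε / l ^ 2 = 3 * (ε / l ^ 2) := by ring
      rw [this]; linarith
    have hcη : Ctx.c0 k * η ≤ 1 / 4 := (mul_le_mul hc0' hη1 hη0.le (by norm_num)).trans (by norm_num)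
    have v := c.champ_val hρ (by linarith) hy (by
      rw [le_div_iff₀ (by positivity)]; exact hU) hD
    have hM := c.step2 v hD hη0 hη1 (by linarith) t5 hη2 (by
      have : 2 * ε / l ^ 2 = 2 * (ε / l ^ 2) := by ring
      rw [this]; linarith) hρ le_rfl hexp
    rw [Nat.squarefree_iff_prime_squarefree]
    intro p hp hpg
    have hpD : ∀ d ∈ D, p * p ∣ d := fun d hd => hpg.trans (Finset.gcd_dvd (f := id) hd)
    have hτ : 7 * ε / l ^ 2 + 10 * Ctx.C1 k * δ / l + 4 * Ctx.C1 k * s / L < 1 / (5 * l) := by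
      have hl0 : 0 < l := by linarith only [hl1]
      have hll : l ≤ l ^ 2 := le_self_pow₀ hl1 (by norm_num)
      have a1 : 7 * ε / l ^ 2 ≤ 1 / 40 / l := by
        rw [div_le_div_iff₀ (by positivity) hl0]
        have b1 : 7 * ε ≤ 1 / 40 := by linarith only [hε1]
        exact mul_le_mul b1 hll hl0.le (by norm_num)
      have a2 : 10 * Ctx.C1 k * δ / l ≤ 1 / 20 / l := by gcongr
      have a3 : 4 * Ctx.C1 k * s / L ≤ 1 / 20 / l := by
        rw [hsL, div_le_div_iff₀ hs0 hl0]
        have b1 := mul_le_mul_of_nonneg_left hll hC1.le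
        linarith only [b1, s1]
      have a4 : 1 / (5 * l) = 1 / 5 / l := by field_simp
      have a5 : 1 / 40 / l + 1 / 20 / l + 1 / 20 / l < 1 / 5 / l := by
        rw [← add_div, ← add_div]
        gcongr
        norm_num
      rw [a4]; linarith
    have h3 := c.step3 v hD hp hpD hN (by linarith) hδ0 hδ1 hτ
    exact c.step4 v hD hp hpD h3 hM t2 t3 hε2 hη3 hε3
  obtain ⟨X, hX⟩ := Filter.eventually_atTop.1 hev
  exact ⟨X, hX⟩
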